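/- arXiv:1609.03340 — 2 statements merged into one kernel-verified Lean document; each statement's English description precedes it below -/
import Mathlib

section
/- Let μ ≤_c ν be probability measures on ℝ with finite first moments, λ Lebesgue measure on [0,1], and μ̂ ∈ Π(λ, μ) a lift of μ. Then there exists a unique π̂ ∈ Π(μ̂, ν) that is a lifted martingale coupling (∫ y dπ̂_{u,x}(y) = x for μ̂-a.e. (u,x)) such that for every u ∈ [0,1], the second ℝ-marginal of π̂ restricted to [0,u] × ℝ × ℝ equals the shadow S^ν(μ_{[0,u]}), where μ_{[0,u]}(A) = μ̂([0,u] × A). -/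
open MeasureTheory

/-- Convex order on finite measures: `∫ φ dμ ≤ ∫ φ dν` for every convex `φ` for which
both integrals exist. -/
def ConvexOrder (μ ν : Measure ℝ) : Prop :=
  ∀ φ : ℝ → ℝ, ConvexOn ℝ Set.univ φ → Integrable φ μ → Integrable φ ν →
    ∫ x, φ x ∂μ ≤ ∫ x, φ x ∂ν

/-- `μ ≤_{c,+} ν`: there exists `η` with `μ ≤_c η` and `η ≤ ν` setwise. -/
def ConvexPlusOrder (μ ν : Measure ℝ) : Prop :=
  ∃ η : Measure ℝ, ConvexOrder μ η ∧ η ≤ ν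

/-- `η` is the shadow of `μ` in `ν`: the `≤_c`-smallest measure `η` with `μ ≤_c η`
and `η ≤ ν`. -/
def IsShadow (μ ν η : Measure ℝ) : Prop :=
  ConvexOrder μ η ∧ η ≤ ν ∧
    ∀ η' : Measure ℝ, ConvexOrder μ η' → η' ≤ ν → ConvexOrder η η'

/-- `π̂` is a lifted martingale coupling of the lift `μ̂ ∈ Π(λ, μ)` and `ν`:
its `(u,x)`-marginal is `μ̂`, its `y`-marginal is `ν`, and `∫ y dπ̂_{u,x}(y) = x` for
`μ̂`-a.e. `(u,x)`, expressed via `∫ (y - x) f(u,x) dπ̂ = 0` for all bounded measurable `f`. -/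
def IsLiftedMartingaleCoupling (πh : Measure (ℝ × ℝ × ℝ)) (μh : Measure (ℝ × ℝ))
    (ν : Measure ℝ) : Prop :=
  πh.map (fun p => (p.1, p.2.1)) = μh ∧ πh.map (fun p => p.2.2) = ν ∧
    ∀ f : ℝ × ℝ → ℝ, Measurable f → (∀ q, |f q| ≤ 1) →
      ∫ p, (p.2.2 - p.2.1) * f (p.1, p.2.1) ∂πh = 0

/-- The primitive curve `μ_{[0,u]}(A) = μ̂([0,u] × A)` of a lift `μ̂`. -/
noncomputable def liftCurve (μh : Measure (ℝ × ℝ)) (u : ℝ) : Measure ℝ :=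
  (μh.restrict {a : ℝ × ℝ | a.1 ≤ u}).map Prod.snd

/-- The `y`-marginal of `π̂` restricted to `[0,u] × ℝ × ℝ`. -/
noncomputable def liftedCouplingCurve (πh : Measure (ℝ × ℝ × ℝ)) (u : ℝ) : Measure ℝ :=
  (πh.restrict {p : ℝ × ℝ × ℝ | p.1 ≤ u}).map (fun p => p.2.2)

/-!
Write `P_m(k) = ∫ (k - x)⁺ dm(x)`. The shadow `S` of `m` in `ν` is the measure for which `P_{ν - S}`
is the convex envelope of `P_ν - P_m`. Off the contact set `{P_S = P_m}` this envelope is locally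
affine, so `ν - S` is concentrated on the contact set.

*Existence.* Order small time-space cells lexicographically, time first. Shadows increase with the
measure, so some kernel transports every initial union of cells to its shadow; it preserves the
mean on each cell, as a shadow has the mass and the mean of the measure it comes from. Any weak
limit for vanishing cells is a martingale coupling, and it transports `μ_{[0,u]}` to a measure below
its shadow because time has no atoms; the masses agree, so it is the shadow.

*Uniqueness.* Let `K_v` be the contact set of `μ_{[0,v]}` and its shadow. In a solution, mass
starting by time `v` does not cross the points of `K_v`, by equality in Jensen's inequality,
and mass starting after time `v` ends in `K_v`. Hence a.e. `(u, x)` is sent into the closure of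
`⋃_{v ≥ u} K_v` without crossing this set. Such targets form a set of at most two points, on which a
probability measure is determined by its mean `x`.
-/

section ConvexFunctions

open Set Filter Topology

variable {f g h w H : ℝ → ℝ} {a b : ℝ}

lemma continuous_of_convexOn_univ (hw : ConvexOn ℝ univ w) : Continuous w := by
  simpa only [interior_univ, continuousOn_univ] using hw.continuousOn_interior

lemma rightDeriv_mul_sub_le (hw : ConvexOn ℝ univ w) (x y : ℝ) :
    derivWithin w (Ioi x) x * (y - x) ≤ w y - w x := by
  have interior_mem (z : ℝ) : z ∈ interior (univ : Set ℝ) := by simp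
  rcases lt_trichotomy x y with hxy | rfl | hyx
  · have := hw.rightDeriv_le_slope_of_mem_interior (interior_mem x) (mem_univ y) hxy
    rwa [slope_def_field, le_div_iff₀ (sub_pos.2 hxy)] at this
  · simp
  · have := (hw.slope_le_leftDeriv_of_mem_interior (mem_univ y) (interior_mem x) hyx).trans
      (hw.leftDeriv_le_rightDeriv_of_mem_interior (interior_mem x))
    rw [slope_def_field, div_le_iff₀ (sub_pos.2 hyx)] at this
    linarith

/-- The right derivative of a convex function `w` on `ℝ`, bundled as a Stieltjes function: its
measure is the second derivative of `w` in the sense of distributions. -/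
noncomputable def rightDerivStieltjes (w : ℝ → ℝ) (hw : ConvexOn ℝ univ w) :
    StieltjesFunction ℝ where
  toFun x := derivWithin w (Ioi x) x
  mono' x y hxy := hw.monotoneOn_rightDeriv (by simp) (by simp) hxy
  right_continuous' x := by
    have mono : Monotone fun x ↦ derivWithin w (Ioi x) x := fun x y hxy ↦
      hw.monotoneOn_rightDeriv (by simp) (by simp) hxy
    have slope_tendsto : Tendsto (slope w x) (𝓝[>] x) (𝓝 (derivWithin w (Ioi x) x)) :=
      (hasDerivWithinAt_iff_tendsto_slope' (by simp)).1
        (hw.hasDerivWithinAt_rightDeriv_of_mem_interior (by simp))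
    refine continuousWithinAt_Ioi_iff_Ici.1 (tendsto_order.2 ⟨fun c hc ↦ ?_, fun c hc ↦ ?_⟩)
    · filter_upwards [self_mem_nhdsWithin] with z hz using hc.trans_le (mono (le_of_lt hz))
    · obtain ⟨y, hyc, hxy⟩ :=
        ((slope_tendsto.eventually_lt_const hc).and self_mem_nhdsWithin).exists
      have slope_y : Tendsto (fun z ↦ slope w z y) (𝓝[>] x) (𝓝 (slope w x y)) := by
        simp only [slope_def_field]
        have cont := continuous_of_convexOn_univ hw
        exact ((cont.tendsto x).const_sub (w y)).div (tendsto_id.const_sub y)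
          (sub_ne_zero.2 (ne_of_gt hxy)) |>.mono_left nhdsWithin_le_nhds
      filter_upwards [slope_y.eventually_lt_const hyc, Ioo_mem_nhdsGT hxy] with z hzc hz
      exact (hw.rightDeriv_le_slope_of_mem_interior (by simp) (mem_univ y) hz.2).trans_lt hzc

lemma hasDerivWithinAt_rightDerivStieltjes (hw : ConvexOn ℝ univ w) (x : ℝ) :
    HasDerivWithinAt w (rightDerivStieltjes w hw x) (Ici x) x :=
  (hw.hasDerivWithinAt_rightDeriv_of_mem_interior (by simp)).Ici_of_Ioi

lemma eq_of_hasDerivWithinAt_Ici_eq {v w g : ℝ → ℝ} {c : ℝ} (hv : Continuous v)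
    (hw : Continuous w) (hv' : ∀ x, HasDerivWithinAt v (g x) (Ici x) x)
    (hw' : ∀ x, HasDerivWithinAt w (g x) (Ici x) x) (hvc : Tendsto v atBot (𝓝 c))
    (hwc : Tendsto w atBot (𝓝 c)) : v = w := by
  funext k
  have sub_const : ∀ a ≤ k, v k - w k = v a - w a := fun a hak ↦
    constant_of_has_deriv_right_zero (hv.sub hw).continuousOn
      (fun x _ ↦ by simpa only [sub_self] using! (hv' x).sub (hw' x)) k (right_mem_Icc.2 hak)
  have sub_tendsto : Tendsto (fun a ↦ v a - w a) atBot (𝓝 (c - c)) := hvc.sub hwc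
  have := tendsto_nhds_unique (sub_tendsto.congr' <|
    (eventually_le_atBot k).mono fun a hak ↦ (sub_const a hak).symm) tendsto_const_nhds
  linarith

lemma convexOn_const_add_mul (c s : ℝ) {S : Set ℝ} (hS : Convex ℝ S) :
    ConvexOn ℝ S fun x ↦ c + s * x :=
  ⟨hS, fun x _ y _ p q _ _ hpq ↦ le_of_eq <| by
    simp only [smul_eq_mul]; linear_combination (-c) * hpq⟩

lemma exists_affine_eq_eq (hab : a < b) (p q : ℝ) :
    ∃ c s : ℝ, c + s * a = p ∧ c + s * b = q := by
  have hne : b - a ≠ 0 := (sub_pos.2 hab).ne'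
  exact ⟨p - (q - p) / (b - a) * a, (q - p) / (b - a), by ring, by field_simp; ring⟩

lemma le_affine_of_convexOn_Icc (hh : ConvexOn ℝ (Icc a b) h) {c s : ℝ} (ha : h a ≤ c + s * a)
    (hb : h b ≤ c + s * b) {x : ℝ} (hx : x ∈ Icc a b) : h x ≤ c + s * x := by
  have hab : a ≤ b := hx.1.trans hx.2
  have convex_sub : ConvexOn ℝ (Icc a b) (h + fun x ↦ -c + -s * x) :=
    hh.add (convexOn_const_add_mul _ _ (convex_Icc a b))
  have := convex_sub.le_max_of_mem_Icc (left_mem_Icc.2 hab) (right_mem_Icc.2 hab) hx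
  simp only [Pi.add_apply] at this
  rcases le_max_iff.1 this with h | h <;> linarith

lemma convexOn_univ_of_le_affine
    (hg : ∀ c s a b, g a ≤ c + s * a → g b ≤ c + s * b → ∀ x ∈ Icc a b, g x ≤ c + s * x) :
    ConvexOn ℝ univ g := by
  refine LinearOrder.convexOn_of_lt convex_univ fun x _ y _ hxy p q hp hq hpq ↦ ?_
  obtain ⟨c, s, hx, hy⟩ := exists_affine_eq_eq hxy (g x) (g y)
  have mem : p • x + q • y ∈ Icc x y :=
    (convex_Icc x y) (left_mem_Icc.2 hxy.le) (right_mem_Icc.2 hxy.le) hp.le hq.le hpq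
  have := hg c s x y hx.ge hy.ge _ mem
  simp only [smul_eq_mul] at this ⊢
  linear_combination this + p * hx + q * hy - c * hpq

lemma convexOn_univ_piecewise_max (hf : ConvexOn ℝ univ f) (hh : ConvexOn ℝ (Icc a b) h)
    (ha : h a ≤ f a) (hb : h b ≤ f b) :
    ConvexOn ℝ univ ((Icc a b).piecewise (f ⊔ h) f) := by
  set G := (Icc a b).piecewise (f ⊔ h) f with hG
  have f_le (x : ℝ) : f x ≤ G x := by
    by_cases hx : x ∈ Icc a b <;> simp [hG, hx]
  have h_le {x : ℝ} (hx : x ∈ Icc a b) : h x ≤ G x := by simp [hG, hx]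
  refine convexOn_univ_of_le_affine fun c s p q hp hq x hx ↦ ?_
  have f_le_affine {y : ℝ} (hy : y ∈ Icc p q) : f y ≤ c + s * y :=
    le_affine_of_convexOn_Icc (hf.subset (subset_univ _) (convex_Icc p q)) ((f_le p).trans hp)
      ((f_le q).trans hq) hy
  by_cases hxab : x ∈ Icc a b
  swap
  · simpa [hG, hxab] using f_le_affine hx
  have h_left : h (max a p) ≤ c + s * max a p := by
    rcases le_total a p with hap | hpa
    · rw [max_eq_right hap]; exact (h_le ⟨hap, hx.1.trans hxab.2⟩).trans hp
    · rw [max_eq_left hpa]; exact ha.trans (f_le_affine ⟨hpa, hxab.1.trans hx.2⟩)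
  have h_right : h (min b q) ≤ c + s * min b q := by
    rcases le_total b q with hbq | hqb
    · rw [min_eq_left hbq]; exact hb.trans (f_le_affine ⟨hx.1.trans hxab.2, hbq⟩)
    · rw [min_eq_right hqb]; exact (h_le ⟨hxab.1.trans hx.2, hqb⟩).trans hq
  have h_le_affine : h x ≤ c + s * x :=
    le_affine_of_convexOn_Icc
      (hh.subset (Icc_subset_Icc (le_max_left a p) (min_le_left b q)) (convex_Icc _ _))
      h_left h_right ⟨max_le hxab.1 hx.1, le_min hxab.2 hx.2⟩
  simpa [hG, hxab] using ⟨f_le_affine hx, h_le_affine⟩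

/-- `f` is the convex envelope of `H`: the largest convex function below `H`. -/
structure IsConvexEnvelope (f H : ℝ → ℝ) : Prop where
  convexOn : ConvexOn ℝ univ f
  le : f ≤ H
  ge_of_convexOn : ∀ w : ℝ → ℝ, ConvexOn ℝ univ w → w ≤ H → w ≤ f

lemma exists_isConvexEnvelope (hw : ConvexOn ℝ univ w) (hwH : w ≤ H) :
    ∃ f, IsConvexEnvelope f H := by
  let F : {v : ℝ → ℝ // ConvexOn ℝ univ v ∧ v ≤ H} → ℝ → ℝ := (↑)
  have bdd (x : ℝ) : BddAbove (range fun v ↦ F v x) := ⟨H x, by rintro _ ⟨v, rfl⟩; exact v.2.2 x⟩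
  have : Nonempty {v : ℝ → ℝ // ConvexOn ℝ univ v ∧ v ≤ H} := ⟨⟨w, hw, hwH⟩⟩
  refine ⟨fun x ↦ ⨆ v, F v x, ?_, fun x ↦ ciSup_le fun v ↦ v.2.2 x,
    fun v hv hvH x ↦ le_ciSup (bdd x) ⟨v, hv, hvH⟩⟩
  refine convexOn_univ_of_le_affine fun c s a b ha hb x hx ↦ ciSup_le fun v ↦ ?_
  exact le_affine_of_convexOn_Icc (v.2.1.subset (subset_univ _) (convex_Icc a b))
    ((le_ciSup (bdd a) v).trans ha) ((le_ciSup (bdd b) v).trans hb) hx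

namespace IsConvexEnvelope

lemma ge_of_convexOn_Icc (hf : IsConvexEnvelope f H) (hh : ConvexOn ℝ (Icc a b) h)
    (ha : h a ≤ f a) (hb : h b ≤ f b) (hhH : ∀ x ∈ Icc a b, h x ≤ H x) :
    ∀ x ∈ Icc a b, h x ≤ f x := by
  have glue_le := hf.ge_of_convexOn _ (convexOn_univ_piecewise_max hf.convexOn hh ha hb)
    fun x ↦ by
      by_cases hx : x ∈ Icc a b
      · simpa [hx] using ⟨hf.le x, hhH x hx⟩
      · simpa [hx] using hf.le x
  intro x hx
  have := glue_le x
  rw [piecewise_eq_of_mem _ _ _ hx] at this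
  exact le_sup_right.trans this

lemma convexOn_sub {c p : ℝ → ℝ} (hf : IsConvexEnvelope f (c - p)) (hc : ConvexOn ℝ univ c)
    (hp : ConvexOn ℝ univ p) : ConvexOn ℝ univ (c - f) := by
  refine convexOn_univ_of_le_affine fun k s a b ha hb x hx ↦ ?_
  simp only [Pi.sub_apply] at ha hb ⊢
  have p_le (y : ℝ) : p y ≤ c y - f y := le_sub_comm.1 (hf.le y)
  have p_le_affine {y : ℝ} (hy : y ∈ Icc a b) : p y ≤ k + s * y :=
    le_affine_of_convexOn_Icc (hp.subset (subset_univ _) (convex_Icc a b)) ((p_le a).trans ha)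
      ((p_le b).trans hb) hy
  have convex_sub : ConvexOn ℝ (Icc a b) (c + fun y ↦ -k + -s * y) :=
    (hc.subset (subset_univ _) (convex_Icc a b)).add (convexOn_const_add_mul _ _ (convex_Icc a b))
  have := hf.ge_of_convexOn_Icc convex_sub (by simp only [Pi.add_apply]; linarith)
    (by simp only [Pi.add_apply]; linarith)
    (fun y hy ↦ by simp only [Pi.add_apply, Pi.sub_apply]; linarith [p_le_affine hy]) x hx
  simp only [Pi.add_apply] at this
  linarith

lemma exists_affine_eq_of_lt (hf : IsConvexEnvelope f H) (hH : Continuous H) {t : ℝ}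
    (ht : f t < H t) : ∃ a b, t ∈ Ioo a b ∧ ∃ c s, ∀ x ∈ Icc a b, f x = c + s * x := by
  have cont_f : Continuous f := continuous_of_convexOn_univ hf.convexOn
  obtain ⟨M, hfM, hMH⟩ := exists_between ht
  have separated : ∀ᶠ x in 𝓝 t, f x < M ∧ M < H x :=
    ((cont_f.tendsto t).eventually_lt_const hfM).and ((hH.tendsto t).eventually_const_lt hMH)
  obtain ⟨ε, hε, hball⟩ := Metric.nhds_basis_closedBall.eventually_iff.1 separated
  rw [Real.closedBall_eq_Icc] at hball
  have left_mem : t - ε ∈ Icc (t - ε) (t + ε) := ⟨le_rfl, by linarith⟩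
  have right_mem : t + ε ∈ Icc (t - ε) (t + ε) := ⟨by linarith, le_rfl⟩
  obtain ⟨c, s, hleft, hright⟩ :=
    exists_affine_eq_eq (by linarith : t - ε < t + ε) (f (t - ε)) (f (t + ε))
  refine ⟨t - ε, t + ε, ⟨by linarith, by linarith⟩, c, s, fun x hx ↦ le_antisymm ?_ ?_⟩
  · exact le_affine_of_convexOn_Icc (hf.convexOn.subset (subset_univ _) (convex_Icc _ _))
      hleft.ge hright.ge hx
  · refine hf.ge_of_convexOn_Icc (convexOn_const_add_mul c s (convex_Icc _ _)) hleft.le hright.le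
      (fun y hy ↦ ?_) x hx
    have chord_le : c + s * y ≤ max (f (t - ε)) (f (t + ε)) := by
      rw [← hleft, ← hright]
      exact (convexOn_const_add_mul c s convex_univ).le_max_of_mem_Icc (mem_univ _) (mem_univ _) hy
    exact (chord_le.trans_lt
      ((max_lt (hball left_mem).1 (hball right_mem).1).trans (hball hy).2)).le

end IsConvexEnvelope

end ConvexFunctions

section PutPotential

open Set Filter Topology

/-- The put potential `k ↦ ∫ (k - x)⁺ dm(x)` of a measure `m` on `ℝ`: a convex function which
encodes `m` as its second derivative and the convex order as the pointwise order. -/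
noncomputable def putPotential (m : Measure ℝ) (k : ℝ) : ℝ := ∫ x, max (k - x) 0 ∂m

lemma putPotential_nonneg (m : Measure ℝ) (k : ℝ) : 0 ≤ putPotential m k :=
  integral_nonneg fun _ ↦ le_max_right _ _

lemma convexOn_put (k : ℝ) : ConvexOn ℝ univ fun x ↦ max (k - x) 0 := by
  have convex_sub : ConvexOn ℝ univ fun x : ℝ ↦ k - x := by
    simpa only [neg_one_mul, ← sub_eq_add_neg] using convexOn_const_add_mul k (-1) convex_univ
  exact convex_sub.sup (convexOn_const 0 convex_univ)

variable {m m' ν : Measure ℝ} [IsFiniteMeasure m] [IsFiniteMeasure m'] [IsFiniteMeasure ν]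

lemma integrable_put (hm : Integrable id m) (k : ℝ) : Integrable (fun x ↦ max (k - x) 0) m :=
  ((integrable_const k).sub hm).pos_part

lemma convexOn_putPotential (hm : Integrable id m) : ConvexOn ℝ univ (putPotential m) := by
  refine ⟨convex_univ, fun a _ b _ s t hs ht hst ↦ ?_⟩
  simp only [putPotential, smul_eq_mul]
  rw [← integral_const_mul, ← integral_const_mul, ← integral_add
    ((integrable_put hm a).const_mul s) ((integrable_put hm b).const_mul t)]
  refine integral_mono (integrable_put hm _)
    (((integrable_put hm a).const_mul s).add ((integrable_put hm b).const_mul t)) fun x ↦ ?_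
  refine max_le ?_ (by positivity)
  calc s * a + t * b - x = s * (a - x) + t * (b - x) := by linear_combination x * hst
    _ ≤ s * max (a - x) 0 + t * max (b - x) 0 := by gcongr <;> exact le_max_left _ _

lemma continuous_putPotential (hm : Integrable id m) : Continuous (putPotential m) :=
  continuous_of_convexOn_univ (convexOn_putPotential hm)

lemma putPotential_add_measure (hm : Integrable id m) (hm' : Integrable id m') :
    putPotential (m + m') = putPotential m + putPotential m' :=
  funext fun k ↦ integral_add_measure (integrable_put hm k) (integrable_put hm' k)

lemma integral_indicator_Iic_const (m : Measure ℝ) (a c : ℝ) :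
    ∫ x, (Iic a).indicator (fun _ ↦ c) x ∂m = m.real (Iic a) * c := by
  rw [integral_indicator measurableSet_Iic, setIntegral_const, smul_eq_mul]

lemma measureReal_Iic_mul_le_putPotential_sub (hm : Integrable id m) {a b : ℝ} (hab : a ≤ b) :
    m.real (Iic a) * (b - a) ≤ putPotential m b - putPotential m a := by
  rw [← integral_indicator_Iic_const, putPotential, putPotential,
    ← integral_sub (integrable_put hm b) (integrable_put hm a)]
  refine integral_mono ((integrable_const _).indicator measurableSet_Iic)
    ((integrable_put hm b).sub (integrable_put hm a)) fun x ↦ ?_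
  by_cases hx : x ≤ a
  · simp [hx, hx.trans hab]
  · have := not_le.1 hx
    simp [hx, this.le]

lemma putPotential_sub_le_measureReal_Iic_mul (hm : Integrable id m) {a b : ℝ} (hab : a ≤ b) :
    putPotential m b - putPotential m a ≤ m.real (Iic b) * (b - a) := by
  rw [← integral_indicator_Iic_const, putPotential, putPotential,
    ← integral_sub (integrable_put hm b) (integrable_put hm a)]
  refine integral_mono ((integrable_put hm b).sub (integrable_put hm a))
    ((integrable_const _).indicator measurableSet_Iic) fun x ↦ ?_
  by_cases hx : x ≤ b
  · have := le_max_left (a - x) 0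
    simp only [mem_Iic, hx, indicator_of_mem, max_eq_left (sub_nonneg.2 hx)]
    linarith
  · have := (not_le.1 hx).le
    simp [hx, this, hab.trans this]

lemma tendsto_measureReal_Iic_nhdsGT (m : Measure ℝ) [IsFiniteMeasure m] (k : ℝ) :
    Tendsto (fun y ↦ m.real (Iic y)) (𝓝[>] k) (𝓝 (m.real (Iic k))) := by
  have biInter_eq : ⋂ r > k, Iic r = Iic k := by
    ext x
    simp only [mem_iInter, mem_Iic]
    exact ⟨le_of_forall_gt_imp_ge_of_dense, fun h r hr ↦ h.trans hr.le⟩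
  have := tendsto_measure_biInter_gt (μ := m) (s := Iic) (a := k)
    (fun r _ ↦ measurableSet_Iic.nullMeasurableSet) (fun i j _ hij ↦ Iic_subset_Iic.2 hij)
    ⟨k + 1, by linarith, measure_ne_top _ _⟩
  rw [biInter_eq] at this
  exact (ENNReal.tendsto_toReal (measure_ne_top _ _)).comp this

lemma tendsto_measureReal_Iic_atBot (m : Measure ℝ) [IsFiniteMeasure m] :
    Tendsto (fun x ↦ m.real (Iic x)) atBot (𝓝 0) := by
  have := tendsto_measure_iInter_atBot (μ := m) (s := Iic)
    (fun r ↦ measurableSet_Iic.nullMeasurableSet) (fun i j hij ↦ Iic_subset_Iic.2 hij)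
    ⟨0, measure_ne_top _ _⟩
  rw [iInter_Iic_eq_empty_iff.2 (by simp), measure_empty] at this
  exact (ENNReal.tendsto_toReal ENNReal.zero_ne_top).comp this

lemma hasDerivWithinAt_putPotential (hm : Integrable id m) (k : ℝ) :
    HasDerivWithinAt (putPotential m) (m.real (Iic k)) (Ici k) k := by
  rw [← hasDerivWithinAt_Ioi_iff_Ici, hasDerivWithinAt_iff_tendsto_slope' (by simp)]
  refine tendsto_of_tendsto_of_tendsto_of_le_of_le' tendsto_const_nhds
    (tendsto_measureReal_Iic_nhdsGT m k) ?_ ?_ <;>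
    filter_upwards [self_mem_nhdsWithin] with y hy
  · rw [slope_def_field, le_div_iff₀ (sub_pos.2 hy)]
    exact measureReal_Iic_mul_le_putPotential_sub hm (le_of_lt hy)
  · rw [slope_def_field, div_le_iff₀ (sub_pos.2 hy)]
    exact putPotential_sub_le_measureReal_Iic_mul hm (le_of_lt hy)

lemma eq_of_putPotential_eq (hm : Integrable id m) (hm' : Integrable id m')
    (h : putPotential m = putPotential m') : m = m' := by
  refine Measure.ext_of_Iic m m' fun k ↦ (measureReal_eq_measureReal_iff).1 ?_
  exact (uniqueDiffWithinAt_Ici k).eq_deriv _ (h ▸ hasDerivWithinAt_putPotential hm k)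
    (hasDerivWithinAt_putPotential hm' k)

lemma tendsto_putPotential_atBot (hm : Integrable id m) :
    Tendsto (putPotential m) atBot (𝓝 0) := by
  rw [← integral_zero ℝ ℝ (μ := m)]
  refine tendsto_integral_filter_of_dominated_convergence (fun x ↦ |x|)
    (.of_forall fun k ↦ (integrable_put hm k).aestronglyMeasurable) ?_ hm.abs ?_
  · filter_upwards [eventually_le_atBot (0 : ℝ)] with k hk
    refine .of_forall fun x ↦ ?_
    rw [Real.norm_eq_abs, abs_of_nonneg (le_max_right _ _)]
    exact max_le (by linarith [neg_abs_le x]) (abs_nonneg x)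
  · refine .of_forall fun x ↦ tendsto_const_nhds.congr' ?_
    filter_upwards [eventually_le_atBot x] with k hk
    rw [max_eq_right (by linarith)]

lemma integral_call_eq (hm : Integrable id m) (k : ℝ) :
    ∫ x, max (x - k) 0 ∂m = putPotential m k - m.real univ * k + ∫ x, x ∂m := by
  have parity (x : ℝ) : max (x - k) 0 = max (k - x) 0 - k + x := by
    rw [max_def, max_def]; split_ifs <;> linarith
  have int_sub : Integrable (fun x ↦ max (k - x) 0 - k) m :=
    (integrable_put hm k).sub (integrable_const k)
  simp_rw [parity]
  rw [integral_add (g := fun x ↦ x) int_sub hm,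
    integral_sub (integrable_put hm k) (integrable_const k),
    integral_const, putPotential, smul_eq_mul]

lemma tendsto_integral_call_atTop (hm : Integrable id m) :
    Tendsto (fun k ↦ ∫ x, max (x - k) 0 ∂m) atTop (𝓝 0) := by
  suffices h : Tendsto (fun k ↦ ∫ x, max (x - k) 0 ∂m) atTop (𝓝 (∫ _, 0 ∂m)) by
    simpa only [integral_zero] using h
  refine tendsto_integral_filter_of_dominated_convergence (fun x ↦ |x|)
    (.of_forall fun k ↦ (hm.sub (integrable_const k)).pos_part.aestronglyMeasurable) ?_ hm.abs ?_
  · filter_upwards [eventually_ge_atTop (0 : ℝ)] with k hk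
    refine .of_forall fun x ↦ ?_
    rw [Real.norm_eq_abs, abs_of_nonneg (le_max_right _ _)]
    exact max_le (by linarith [le_abs_self x]) (abs_nonneg x)
  · refine .of_forall fun x ↦ tendsto_const_nhds.congr' ?_
    filter_upwards [eventually_ge_atTop x] with k hk
    rw [max_eq_right (by linarith)]

lemma putPotential_sub_eq (hm : Integrable id m) (hm' : Integrable id m') (k : ℝ) :
    putPotential m k - putPotential m' k = ((m.real univ - m'.real univ) * k
      - (∫ x, x ∂m - ∫ x, x ∂m')) + (∫ x, max (x - k) 0 ∂m - ∫ x, max (x - k) 0 ∂m') := by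
  rw [integral_call_eq hm, integral_call_eq hm']
  ring

lemma tendsto_putPotential_sub_atTop (hm : Integrable id m) (hm' : Integrable id m')
    (hmass : m.real univ = m'.real univ) (hmean : ∫ x, x ∂m = ∫ x, x ∂m') :
    Tendsto (fun k ↦ putPotential m k - putPotential m' k) atTop (𝓝 0) := by
  simp_rw [putPotential_sub_eq hm hm', hmass, hmean, sub_self, zero_mul, sub_zero, zero_add]
  simpa only [sub_zero] using
    (tendsto_integral_call_atTop hm).sub (tendsto_integral_call_atTop hm')

lemma mass_eq_and_mean_eq_of_tendsto_putPotential_sub (hm : Integrable id m)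
    (hm' : Integrable id m')
    (h : Tendsto (fun k ↦ putPotential m k - putPotential m' k) atTop (𝓝 0)) :
    m.real univ = m'.real univ ∧ ∫ x, x ∂m = ∫ x, x ∂m' := by
  set A := m.real univ - m'.real univ with hA
  set B := ∫ x, x ∂m - ∫ x, x ∂m' with hB
  have affine_tendsto : Tendsto (fun k ↦ A * k - B) atTop (𝓝 0) := by
    have := h.sub ((tendsto_integral_call_atTop hm).sub (tendsto_integral_call_atTop hm'))
    simpa only [putPotential_sub_eq hm hm', add_sub_cancel_right, sub_zero] using this
  have A_eq : A = 0 := by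
    have shift := (affine_tendsto.comp (tendsto_atTop_add_const_right _ 1 tendsto_id)).sub
      affine_tendsto
    simp only [Function.comp_def, id, sub_zero] at shift
    ring_nf at shift
    exact tendsto_nhds_unique tendsto_const_nhds shift
  have B_eq : B = 0 := by
    simp only [A_eq, zero_mul, zero_sub] at affine_tendsto
    simpa using tendsto_nhds_unique tendsto_const_nhds affine_tendsto
  exact ⟨sub_eq_zero.1 (hA ▸ A_eq), sub_eq_zero.1 (hB ▸ B_eq)⟩

lemma rightDeriv_nonneg_of_tendsto_atBot {w : ℝ → ℝ} {c : ℝ} (hw : ConvexOn ℝ univ w)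
    (hc : Tendsto w atBot (𝓝 c)) (x : ℝ) : 0 ≤ derivWithin w (Ioi x) x := by
  by_contra! hneg
  have line_tendsto : Tendsto (fun y ↦ w x + derivWithin w (Ioi x) x * (y - x)) atBot atTop :=
    tendsto_atTop_add_const_left _ _
      ((tendsto_atBot_add_const_right _ _ tendsto_id).const_mul_atBot_of_neg hneg)
  refine not_tendsto_nhds_of_tendsto_atTop (tendsto_atTop_mono (fun y ↦ ?_) line_tendsto) c hc
  linarith [rightDeriv_mul_sub_le hw x y]

lemma exists_measure_le_putPotential_eq (hν : Integrable id ν) {w : ℝ → ℝ}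
    (hw : ConvexOn ℝ univ w) (hνw : ConvexOn ℝ univ (putPotential ν - w)) (hw0 : 0 ≤ w)
    (hwν : w ≤ putPotential ν) : ∃ S ≤ ν, putPotential S = w := by
  have w_bot : Tendsto w atBot (𝓝 0) :=
    squeeze_zero hw0 hwν (tendsto_putPotential_atBot hν)
  have sub_bot : Tendsto (putPotential ν - w) atBot (𝓝 0) := by
    simpa only [sub_zero] using! (tendsto_putPotential_atBot hν).sub w_bot
  set g := rightDerivStieltjes w hw
  set h := rightDerivStieltjes (putPotential ν - w) hνw
  have g_nonneg (x : ℝ) : 0 ≤ g x := rightDeriv_nonneg_of_tendsto_atBot hw w_bot x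
  have h_nonneg (x : ℝ) : 0 ≤ h x := rightDeriv_nonneg_of_tendsto_atBot hνw sub_bot x
  have g_add_h (x : ℝ) : g x + h x = ν.real (Iic x) := by
    have := (hasDerivWithinAt_rightDerivStieltjes hw x).add
      (hasDerivWithinAt_rightDerivStieltjes hνw x)
    rw [add_sub_cancel] at this
    exact (uniqueDiffWithinAt_Ici x).eq_deriv _ this (hasDerivWithinAt_putPotential hν x)
  have g_bot : Tendsto g atBot (𝓝 0) := squeeze_zero g_nonneg
    (fun x ↦ by linarith [g_add_h x, h_nonneg x]) (tendsto_measureReal_Iic_atBot ν)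
  have h_bot : Tendsto h atBot (𝓝 0) := squeeze_zero h_nonneg
    (fun x ↦ by linarith [g_add_h x, g_nonneg x]) (tendsto_measureReal_Iic_atBot ν)
  have add_eq : g.measure + h.measure = ν := by
    refine (Measure.ext_of_Iic _ _ fun x ↦ ?_).symm
    rw [Measure.add_apply, g.measure_Iic g_bot, h.measure_Iic h_bot, sub_zero, sub_zero,
      ← ENNReal.ofReal_add (g_nonneg x) (h_nonneg x), g_add_h, ofReal_measureReal]
  have le_ν : g.measure ≤ ν := add_eq ▸ Measure.le_add_right le_rfl
  have : IsFiniteMeasure g.measure := isFiniteMeasure_of_le ν le_ν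
  have int_g : Integrable id g.measure := hν.mono_measure le_ν
  have real_Iic (x : ℝ) : g.measure.real (Iic x) = g x := by
    rw [measureReal_def, g.measure_Iic g_bot, sub_zero, ENNReal.toReal_ofReal (g_nonneg x)]
  refine ⟨g.measure, le_ν, eq_of_hasDerivWithinAt_Ici_eq (continuous_putPotential int_g)
    (continuous_of_convexOn_univ hw)
    (fun x ↦ real_Iic x ▸ hasDerivWithinAt_putPotential int_g x)
    (hasDerivWithinAt_rightDerivStieltjes hw) (tendsto_putPotential_atBot int_g) w_bot⟩

lemma measure_Ioc_eq_zero_of_putPotential_eq_affine (hm : Integrable id m) {a b c s : ℝ}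
    (haff : ∀ x ∈ Icc a b, putPotential m x = c + s * x) {x y : ℝ} (hx : x ∈ Ioo a b)
    (hy : y ∈ Ioo a b) : m (Ioc x y) = 0 := by
  have real_Iic {z : ℝ} (hz : z ∈ Ioo a b) : m.real (Iic z) = s := by
    have hab : a ≤ b := (hz.1.trans hz.2).le
    have az := putPotential_sub_le_measureReal_Iic_mul hm hz.1.le
    have zb := measureReal_Iic_mul_le_putPotential_sub hm hz.2.le
    rw [haff z ⟨hz.1.le, hz.2.le⟩] at az zb
    rw [haff a (left_mem_Icc.2 hab)] at az
    rw [haff b (right_mem_Icc.2 hab)] at zb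
    refine le_antisymm (le_of_mul_le_mul_right ?_ (sub_pos.2 hz.2))
      (le_of_mul_le_mul_right ?_ (sub_pos.2 hz.1)) <;> linarith
  rw [← Iic_sdiff_Iic]
  rcases le_total y x with hyx | hxy
  · rw [sdiff_eq_bot_iff.2 (Iic_subset_Iic.2 hyx)]; exact measure_empty
  · rw [measure_sdiff (Iic_subset_Iic.2 hxy) measurableSet_Iic.nullMeasurableSet
      (measure_ne_top _ _), (measureReal_eq_measureReal_iff).1 ((real_Iic hy).trans
      (real_Iic hx).symm), tsub_self]

end PutPotential

section ConvexOrderPotential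

open Set Filter Topology

variable {m m' : Measure ℝ}

section Necessity

variable [IsFiniteMeasure m] [IsFiniteMeasure m']

lemma ConvexOrder.putPotential_le (h : ConvexOrder m m') (hm : Integrable id m)
    (hm' : Integrable id m') : putPotential m ≤ putPotential m' := fun k ↦
  h _ (convexOn_put k) (integrable_put hm k) (integrable_put hm' k)

lemma ConvexOrder.mass_eq (h : ConvexOrder m m') : m.real univ = m'.real univ := by
  have le := h (fun _ ↦ 1) (convexOn_const 1 convex_univ) (integrable_const _) (integrable_const _)
  have ge := h (fun _ ↦ -1) (convexOn_const (-1) convex_univ) (integrable_const _)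
    (integrable_const _)
  simp only [integral_const, smul_eq_mul] at le ge
  linarith

end Necessity

lemma ConvexOrder.mean_eq (h : ConvexOrder m m') (hm : Integrable id m)
    (hm' : Integrable id m') : ∫ x, x ∂m = ∫ x, x ∂m' := by
  have le := h (fun x ↦ x) (convexOn_id convex_univ) hm hm'
  have ge := h (fun x ↦ -x) (concaveOn_id convex_univ).neg hm.neg hm'.neg
  rw [integral_neg, integral_neg] at ge
  linarith

section Representation

variable {w : ℝ → ℝ} (hw : ConvexOn ℝ univ w) {a b : ℝ}

lemma intervalIntegral_rightDerivStieltjes (a b : ℝ) :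
    ∫ s in a..b, rightDerivStieltjes w hw s = w b - w a :=
  intervalIntegral.integral_eq_sub_of_hasDeriv_right (continuous_of_convexOn_univ hw).continuousOn
    (fun x _ ↦ (hasDerivWithinAt_rightDerivStieltjes hw x).mono Ioi_subset_Ici_self)
    (rightDerivStieltjes w hw).mono.intervalIntegrable

lemma lintegral_measure_Ioc_right_eq (hab : a ≤ b) :
    ∫⁻ s in Ioc a b, (rightDerivStieltjes w hw).measure (Ioc a s) =
      ENNReal.ofReal (w b - w a - rightDerivStieltjes w hw a * (b - a)) := by
  set g := rightDerivStieltjes w hw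
  have int_g : IntervalIntegrable g volume a b := g.mono.intervalIntegrable
  simp_rw [g.measure_Ioc]
  rw [← ofReal_integral_eq_lintegral_ofReal, ← intervalIntegral.integral_of_le hab,
    intervalIntegral.integral_sub int_g (by simp), intervalIntegral_rightDerivStieltjes hw,
    intervalIntegral.integral_const, smul_eq_mul, mul_comm]
  · exact (int_g.sub (by simp)).1
  · filter_upwards [ae_restrict_mem measurableSet_Ioc] with s hs using sub_nonneg.2 (g.mono hs.1.le)

lemma lintegral_measure_Ioc_left_eq (hba : b ≤ a) :
    ∫⁻ s in Ioc b a, (rightDerivStieltjes w hw).measure (Ioc s a) =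
      ENNReal.ofReal (w b - w a - rightDerivStieltjes w hw a * (b - a)) := by
  set g := rightDerivStieltjes w hw
  have int_g : IntervalIntegrable g volume b a := g.mono.intervalIntegrable
  simp_rw [g.measure_Ioc]
  rw [← ofReal_integral_eq_lintegral_ofReal, ← intervalIntegral.integral_of_le hba,
    intervalIntegral.integral_sub (by simp) int_g, intervalIntegral_rightDerivStieltjes hw,
    intervalIntegral.integral_const, smul_eq_mul]
  · ring_nf
  · exact (IntervalIntegrable.sub (by simp) int_g).1
  · filter_upwards [ae_restrict_mem measurableSet_Ioc] with s hs using sub_nonneg.2 (g.mono hs.2)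

lemma lintegral_Ioi_ofReal_sub (hab : a ≤ b) :
    ∫⁻ t in Ioi a, ENNReal.ofReal (b - t) ∂(rightDerivStieltjes w hw).measure =
      ENNReal.ofReal (w b - w a - rightDerivStieltjes w hw a * (b - a)) := by
  set γ := (rightDerivStieltjes w hw).measure
  have graph_meas : MeasurableSet {p : ℝ × ℝ | p.1 ≤ p.2} :=
    measurableSet_le measurable_fst measurable_snd
  calc ∫⁻ t in Ioi a, ENNReal.ofReal (b - t) ∂γ
      = ∫⁻ t in Ioi a, (volume.restrict (Ioc a b)) (Ici t) ∂γ := by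
        refine setLIntegral_congr_fun measurableSet_Ioi fun t (ht : a < t) ↦ ?_
        have : Ici t ∩ Ioc a b = Icc t b := by
          ext s; exact ⟨fun h ↦ ⟨h.1, h.2.2⟩, fun h ↦ ⟨h.1, ht.trans_le h.1, h.2⟩⟩
        simp only [Measure.restrict_apply measurableSet_Ici, this, Real.volume_Icc]
    _ = ∫⁻ s in Ioc a b, (γ.restrict (Ioi a)) (Iic s) :=
        (Measure.prod_apply graph_meas).symm.trans (Measure.prod_apply_symm graph_meas)
    _ = ∫⁻ s in Ioc a b, γ (Ioc a s) := by
        simp only [Measure.restrict_apply measurableSet_Iic, Iic_inter_Ioi]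
    _ = _ := lintegral_measure_Ioc_right_eq hw hab

lemma lintegral_Iic_ofReal_sub (hba : b ≤ a) :
    ∫⁻ t in Iic a, ENNReal.ofReal (t - b) ∂(rightDerivStieltjes w hw).measure =
      ENNReal.ofReal (w b - w a - rightDerivStieltjes w hw a * (b - a)) := by
  set γ := (rightDerivStieltjes w hw).measure
  have graph_meas : MeasurableSet {p : ℝ × ℝ | p.2 < p.1} :=
    measurableSet_lt measurable_snd measurable_fst
  calc ∫⁻ t in Iic a, ENNReal.ofReal (t - b) ∂γ
      = ∫⁻ t in Iic a, (volume.restrict (Ioc b a)) (Iio t) ∂γ := by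
        refine setLIntegral_congr_fun measurableSet_Iic fun t (ht : t ≤ a) ↦ ?_
        have : Iio t ∩ Ioc b a = Ioo b t := by
          ext s; exact ⟨fun h ↦ ⟨h.2.1, h.1⟩, fun h ↦ ⟨h.2, h.1, h.2.le.trans ht⟩⟩
        simp only [Measure.restrict_apply measurableSet_Iio, this, Real.volume_Ioo]
    _ = ∫⁻ s in Ioc b a, (γ.restrict (Iic a)) (Ioi s) :=
        (Measure.prod_apply graph_meas).symm.trans (Measure.prod_apply_symm graph_meas)
    _ = ∫⁻ s in Ioc b a, γ (Ioc s a) := by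
        simp only [Measure.restrict_apply measurableSet_Ioi, Ioi_inter_Iic]
    _ = _ := lintegral_measure_Ioc_left_eq hw hba

lemma ofReal_sub_tangent_eq_lintegral (x : ℝ) :
    ENNReal.ofReal (w x - w 0 - rightDerivStieltjes w hw 0 * x) =
      ∫⁻ t in Ioi 0, ENNReal.ofReal (x - t) ∂(rightDerivStieltjes w hw).measure +
      ∫⁻ t in Iic 0, ENNReal.ofReal (t - x) ∂(rightDerivStieltjes w hw).measure := by
  rcases le_total 0 x with hx | hx
  · rw [lintegral_Ioi_ofReal_sub hw hx, setLIntegral_congr_fun (g := 0) measurableSet_Iic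
      fun t (ht : t ≤ 0) ↦ ENNReal.ofReal_of_nonpos (by linarith)]
    simp
  · rw [lintegral_Iic_ofReal_sub hw hx, setLIntegral_congr_fun (g := 0) measurableSet_Ioi
      fun t (ht : 0 < t) ↦ ENNReal.ofReal_of_nonpos (by linarith)]
    simp

lemma lintegral_ofReal_sub_tangent_eq [SFinite m] :
    ∫⁻ x, ENNReal.ofReal (w x - w 0 - rightDerivStieltjes w hw 0 * x) ∂m =
      ∫⁻ t in Ioi 0, ∫⁻ x, ENNReal.ofReal (x - t) ∂m ∂(rightDerivStieltjes w hw).measure +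
      ∫⁻ t in Iic 0, ∫⁻ x, ENNReal.ofReal (t - x) ∂m ∂(rightDerivStieltjes w hw).measure := by
  have meas_call : Measurable fun p : ℝ × ℝ ↦ ENNReal.ofReal (p.1 - p.2) := by fun_prop
  have meas_put : Measurable fun p : ℝ × ℝ ↦ ENNReal.ofReal (p.2 - p.1) := by fun_prop
  have meas_lintegral : Measurable fun x : ℝ ↦
      ∫⁻ t in Ioi 0, ENNReal.ofReal (x - t) ∂(rightDerivStieltjes w hw).measure :=
    meas_call.lintegral_prod_right'
  simp_rw [ofReal_sub_tangent_eq_lintegral hw]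
  rw [lintegral_add_left meas_lintegral]
  exact congrArg₂ (· + ·) (lintegral_lintegral_swap meas_call.aemeasurable)
    (lintegral_lintegral_swap meas_put.aemeasurable)

end Representation

lemma lintegral_ofReal_put_eq [IsFiniteMeasure m] (hm : Integrable id m) (k : ℝ) :
    ∫⁻ x, ENNReal.ofReal (k - x) ∂m = ENNReal.ofReal (putPotential m k) := by
  rw [putPotential, ofReal_integral_eq_lintegral_ofReal (integrable_put hm k)
    (ae_of_all _ fun _ ↦ le_max_right _ _)]
  simp only [ENNReal.ofReal_max, ENNReal.ofReal_zero, zero_le, sup_of_le_left]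

lemma lintegral_ofReal_call_eq [IsFiniteMeasure m] (hm : Integrable id m) (k : ℝ) :
    ∫⁻ x, ENNReal.ofReal (x - k) ∂m =
      ENNReal.ofReal (putPotential m k - m.real univ * k + ∫ x, x ∂m) := by
  have int_call : Integrable (fun x ↦ max (x - k) 0) m := (hm.sub (integrable_const k)).pos_part
  rw [← integral_call_eq hm, ofReal_integral_eq_lintegral_ofReal int_call
    (ae_of_all _ fun _ ↦ le_max_right _ _)]
  simp only [ENNReal.ofReal_max, ENNReal.ofReal_zero, zero_le, sup_of_le_left]

lemma integral_eq_integral_sub_affine_add [IsFiniteMeasure m] (hm : Integrable id m) {φ : ℝ → ℝ}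
    (hφ : Integrable φ m) (c s : ℝ) :
    ∫ x, φ x ∂m = ∫ x, (φ x - c - s * x) ∂m + (m.real univ * c + s * ∫ x, x ∂m) := by
  have int_sub : Integrable (fun x ↦ φ x - c) m := hφ.sub (integrable_const c)
  have int_mul : Integrable (fun x ↦ s * x) m := hm.const_mul s
  rw [integral_sub int_sub int_mul, integral_sub hφ (integrable_const c), integral_const,
    integral_const_mul, smul_eq_mul]
  ring

-- Subtracting its tangent at `0`, `φ` becomes a positive mixture of the puts with strike `t ≤ 0`
-- and the calls with strike `t > 0`; call prices are put prices up to mass and mean.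
lemma convexOrder_of_putPotential_le [IsFiniteMeasure m] [IsFiniteMeasure m']
    (hm : Integrable id m) (hm' : Integrable id m') (hmass : m.real univ = m'.real univ)
    (hmean : ∫ x, x ∂m = ∫ x, x ∂m') (hpot : putPotential m ≤ putPotential m') :
    ConvexOrder m m' := by
  intro φ hφ hφm hφm'
  set s : ℝ := rightDerivStieltjes φ hφ 0
  have nonneg (x : ℝ) : 0 ≤ φ x - φ 0 - s * x :=
    sub_nonneg.2 (by simpa only [sub_zero] using! rightDeriv_mul_sub_le hφ 0 x)
  have int_tangent {σ : Measure ℝ} [IsFiniteMeasure σ] (hσ : Integrable id σ)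
      (hφσ : Integrable φ σ) : Integrable (fun x ↦ φ x - φ 0 - s * x) σ :=
    (hφσ.sub (integrable_const _)).sub (hσ.const_mul s)
  have integral_tangent_le : ∫ x, (φ x - φ 0 - s * x) ∂m ≤ ∫ x, (φ x - φ 0 - s * x) ∂m' := by
    have nonneg' : 0 ≤ ∫ x, (φ x - φ 0 - s * x) ∂m' := integral_nonneg nonneg
    rw [← ENNReal.ofReal_le_ofReal_iff nonneg',
      ofReal_integral_eq_lintegral_ofReal (int_tangent hm hφm) (ae_of_all _ nonneg),
      ofReal_integral_eq_lintegral_ofReal (int_tangent hm' hφm') (ae_of_all _ nonneg),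
      lintegral_ofReal_sub_tangent_eq, lintegral_ofReal_sub_tangent_eq]
    simp_rw [lintegral_ofReal_call_eq hm, lintegral_ofReal_call_eq hm',
      lintegral_ofReal_put_eq hm, lintegral_ofReal_put_eq hm', hmass, hmean]
    gcongr with t t
    · exact hpot t
    · exact hpot t
  rw [integral_eq_integral_sub_affine_add hm hφm (φ 0) s,
    integral_eq_integral_sub_affine_add hm' hφm' (φ 0) s, hmass, hmean]
  gcongr

end ConvexOrderPotential

section Shadow

open Set Filter Topology

variable {m m' μ ν η η' : Measure ℝ}

lemma putPotential_sub_measure [IsFiniteMeasure m] (hm : Integrable id m) (h : m' ≤ m) :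
    putPotential (m - m') = putPotential m - putPotential m' := by
  have := isFiniteMeasure_of_le m h
  have sub_le : m - m' ≤ m := Measure.sub_le
  have := isFiniteMeasure_of_le m sub_le
  rw [eq_sub_iff_add_eq, ← putPotential_add_measure (hm.mono_measure sub_le) (hm.mono_measure h),
    Measure.sub_add_cancel_of_le h]

lemma convexOn_putPotential_sub [IsFiniteMeasure m] (hm : Integrable id m) (h : m' ≤ m) :
    ConvexOn ℝ univ (putPotential m - putPotential m') := by
  have := isFiniteMeasure_of_le m (Measure.sub_le (ν := m'))
  rw [← putPotential_sub_measure hm h]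
  exact convexOn_putPotential (hm.mono_measure Measure.sub_le)

lemma putPotential_mono [IsFiniteMeasure m] (hm : Integrable id m) (h : m' ≤ m) :
    putPotential m' ≤ putPotential m := by
  rw [← sub_nonneg, ← putPotential_sub_measure hm h]
  exact putPotential_nonneg _

variable [IsFiniteMeasure ν]

lemma IsShadow.unique (hν : Integrable id ν) (h : IsShadow m ν η) (h' : IsShadow m ν η') :
    η = η' := by
  have := isFiniteMeasure_of_le ν h.2.1
  have := isFiniteMeasure_of_le ν h'.2.1
  have hη := hν.mono_measure h.2.1
  have hη' := hν.mono_measure h'.2.1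
  exact eq_of_putPotential_eq hη hη' <|
    le_antisymm ((h.2.2 η' h'.1 h'.2.1).putPotential_le hη hη')
      ((h'.2.2 η h.1 h.2.1).putPotential_le hη' hη)

lemma isShadow_of_isConvexEnvelope [IsFiniteMeasure m] (hm : Integrable id m) (hν : Integrable id ν)
    (hmη : ConvexOrder m η) (hην : η ≤ ν)
    (hη : IsConvexEnvelope (putPotential ν - putPotential η) (putPotential ν - putPotential m)) :
    IsShadow m ν η := by
  refine ⟨hmη, hην, fun η' hmη' hη'ν ↦ ?_⟩
  have := isFiniteMeasure_of_le ν hην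
  have := isFiniteMeasure_of_le ν hη'ν
  have int_η := hν.mono_measure hην
  have int_η' := hν.mono_measure hη'ν
  refine convexOrder_of_putPotential_le int_η int_η' (hmη.mass_eq.symm.trans hmη'.mass_eq)
    ((hmη.mean_eq hm int_η).symm.trans (hmη'.mean_eq hm int_η')) ?_
  exact (sub_le_sub_iff_left _).1 <| hη.ge_of_convexOn _ (convexOn_putPotential_sub hν hη'ν)
    ((sub_le_sub_iff_left _).2 (hmη'.putPotential_le hm int_η'))

lemma convexOrder_of_putPotential_sub_le [IsFiniteMeasure m] [IsFiniteMeasure μ] [IsFiniteMeasure η]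
    [IsFiniteMeasure η'] (hm : Integrable id m) (hμ : Integrable id μ) (hη : Integrable id η)
    (hη' : Integrable id η') (hμη' : ConvexOrder μ η') (hmη : putPotential m ≤ putPotential η)
    (hle : putPotential η - putPotential m ≤ putPotential η' - putPotential μ) :
    ConvexOrder m η := by
  have tendsto_zero : Tendsto (fun k ↦ putPotential η k - putPotential m k) atTop (𝓝 0) :=
    squeeze_zero (fun k ↦ sub_nonneg.2 (hmη k)) hle <|
      tendsto_putPotential_sub_atTop hη' hμ hμη'.mass_eq.symm (hμη'.mean_eq hμ hη').symm
  obtain ⟨mass_eq, mean_eq⟩ := mass_eq_and_mean_eq_of_tendsto_putPotential_sub hη hm tendsto_zero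
  exact convexOrder_of_putPotential_le hm hη mass_eq.symm mean_eq.symm hmη

lemma exists_isShadow_and_isConvexEnvelope [IsFiniteMeasure μ] (hμ : Integrable id μ)
    (hν : Integrable id ν) (hμν : ConvexPlusOrder μ ν) (hmμ : m ≤ μ) :
    ∃ η, IsShadow m ν η ∧
      IsConvexEnvelope (putPotential ν - putPotential η) (putPotential ν - putPotential m) := by
  obtain ⟨η₀, hμη₀, hη₀ν⟩ := hμν
  have := isFiniteMeasure_of_le ν hη₀ν
  have int_η₀ := hν.mono_measure hη₀ν
  have int_m := hμ.mono_measure hmμ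
  have := isFiniteMeasure_of_le μ hmμ
  set w := (putPotential μ - putPotential m) + (putPotential ν - putPotential η₀) with w_def
  have convex_w : ConvexOn ℝ univ w :=
    (convexOn_putPotential_sub hμ hmμ).add (convexOn_putPotential_sub hν hη₀ν)
  have w_nonneg : 0 ≤ w :=
    add_nonneg (sub_nonneg.2 (putPotential_mono hμ hmμ)) (sub_nonneg.2 (putPotential_mono hν hη₀ν))
  have w_le : w ≤ putPotential ν - putPotential m := fun k ↦ by
    have := hμη₀.putPotential_le hμ int_η₀ k
    simp only [w_def, Pi.add_apply, Pi.sub_apply]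
    linarith
  obtain ⟨f, hf⟩ := exists_isConvexEnvelope convex_w w_le
  have w_le_f := hf.ge_of_convexOn w convex_w w_le
  have m_le : putPotential m ≤ putPotential ν - f := le_sub_comm.1 hf.le
  obtain ⟨η, hην, hη⟩ := exists_measure_le_putPotential_eq hν
    (hf.convexOn_sub (convexOn_putPotential hν) (convexOn_putPotential int_m))
    (by simpa only [sub_sub_cancel] using hf.convexOn)
    (le_trans (putPotential_nonneg m) m_le) (sub_le_self _ (w_nonneg.trans w_le_f))
  have := isFiniteMeasure_of_le ν hην
  have f_eq : putPotential ν - putPotential η = f := by rw [hη, sub_sub_cancel]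
  have convexOrder_η : ConvexOrder m η := by
    refine convexOrder_of_putPotential_sub_le int_m hμ (hν.mono_measure hην) int_η₀ hμη₀
      (hη ▸ m_le) fun k ↦ ?_
    have := w_le_f k
    simp only [hη, w_def, Pi.add_apply, Pi.sub_apply] at this ⊢
    linarith
  exact ⟨η, isShadow_of_isConvexEnvelope int_m hν convexOrder_η hην (f_eq ▸ hf), f_eq ▸ hf⟩

lemma IsShadow.isConvexEnvelope [IsFiniteMeasure m] (hm : Integrable id m) (hν : Integrable id ν)
    (h : IsShadow m ν η) :
    IsConvexEnvelope (putPotential ν - putPotential η) (putPotential ν - putPotential m) := by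
  obtain ⟨η', hη', envelope⟩ :=
    exists_isShadow_and_isConvexEnvelope hm hν ⟨η, h.1, h.2.1⟩ le_rfl
  exact h.unique hν hη' ▸ envelope

lemma IsShadow.mono [IsFiniteMeasure m'] (hm' : Integrable id m') (hν : Integrable id ν)
    (hmm' : m ≤ m') (h : IsShadow m ν η) (h' : IsShadow m' ν η') : η ≤ η' := by
  have := isFiniteMeasure_of_le m' hmm'
  have := isFiniteMeasure_of_le ν h.2.1
  have := isFiniteMeasure_of_le ν h'.2.1
  have envelope := h.isConvexEnvelope (hm'.mono_measure hmm') hν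
  have envelope' := h'.isConvexEnvelope hm' hν
  have convex_d := convexOn_putPotential_sub hm' hmm'
  have d_nonneg := sub_nonneg.2 (putPotential_mono hm' hmm')
  set d := putPotential m' - putPotential m with d_def
  have le_sub_d : putPotential ν - putPotential η' ≤ (putPotential ν - putPotential η) - d := by
    rw [le_sub_iff_add_le]
    refine envelope.ge_of_convexOn _ (envelope'.convexOn.add convex_d) fun k ↦ ?_
    have := envelope'.le k
    simp only [d_def, Pi.add_apply, Pi.sub_apply] at this ⊢
    linarith
  have envelope_sub : IsConvexEnvelope (putPotential ν - putPotential η')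
      (putPotential ν - putPotential η - d) := by
    refine ⟨envelope'.convexOn, le_sub_d, fun w hw hwle ↦ envelope'.ge_of_convexOn w hw ?_⟩
    refine hwle.trans ((sub_le_sub_right envelope.le d).trans_eq ?_)
    rw [d_def, sub_sub_sub_cancel_right]
  have convex_sub := envelope_sub.convexOn_sub envelope.convexOn convex_d
  rw [sub_sub_sub_cancel_left] at convex_sub
  obtain ⟨σ, hσ, pot_σ⟩ := exists_measure_le_putPotential_eq (hν.mono_measure h'.2.1)
    (convexOn_putPotential (hν.mono_measure h.2.1)) convex_sub (putPotential_nonneg η)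
    ((sub_le_sub_iff_left _).1 (le_sub_d.trans (sub_le_self _ d_nonneg)))
  have := isFiniteMeasure_of_le η' hσ
  rwa [eq_of_putPotential_eq (hν.mono_measure (hσ.trans h'.2.1)) (hν.mono_measure h.2.1) pot_σ]
    at hσ

/-- The points where the put potentials of `m` and `η` agree. If `η` is the shadow of `m`, a
martingale transporting `m` to `η` does not cross these points. -/
def contactSet (m η : Measure ℝ) : Set ℝ := {k | putPotential η k = putPotential m k}

lemma IsShadow.measure_sub_compl_contactSet [IsFiniteMeasure m] (hm : Integrable id m)
    (hν : Integrable id ν) (h : IsShadow m ν η) : (ν - η) (contactSet m η)ᶜ = 0 := by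
  have sub_le : ν - η ≤ ν := Measure.sub_le
  have := isFiniteMeasure_of_le ν sub_le
  have envelope := h.isConvexEnvelope hm hν
  refine measure_null_of_locally_null _ fun k (hk : putPotential η k ≠ putPotential m k) ↦ ?_
  obtain ⟨a, b, hab, c, s, haff⟩ := envelope.exists_affine_eq_of_lt
    ((continuous_putPotential hν).sub (continuous_putPotential hm))
    ((envelope.le k).lt_of_ne fun heq ↦ hk (sub_right_injective heq))
  obtain ⟨x, hax, hxk⟩ := exists_between hab.1
  obtain ⟨y, hky, hyb⟩ := exists_between hab.2
  refine ⟨Ioc x y, mem_nhdsWithin_of_mem_nhds (Ioc_mem_nhds hxk hky),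
    measure_Ioc_eq_zero_of_putPotential_eq_affine (hν.mono_measure sub_le) (c := c) (s := s)
      ?_ ⟨hax, hxk.trans hab.2⟩ ⟨hab.1.trans hky, hyb⟩⟩
  rwa [putPotential_sub_measure hν h.2.1]

end Shadow

section BarrierCell

open Set Filter Topology

lemma exists_subset_pair_of_forall_not_lt_lt {α : Type*} [LinearOrder α] [Nonempty α] {s : Set α}
    (h : ∀ a ∈ s, ∀ b ∈ s, ∀ c ∈ s, a < b → ¬ b < c) : ∃ a b, s ⊆ {a, b} := by
  by_cases hs : s.Subsingleton
  · rcases hs.eq_empty_or_singleton with rfl | ⟨a, rfl⟩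
    · exact ⟨Classical.arbitrary α, Classical.arbitrary α, empty_subset _⟩
    · exact ⟨a, a, by simp⟩
  · obtain ⟨a, ha, b, hb, hab⟩ := (not_subsingleton_iff.1 hs).exists_lt
    refine ⟨a, b, fun c hc ↦ ?_⟩
    rcases lt_trichotomy c a with hca | rfl | hac
    · exact (h c hc a ha b hb hca hab).elim
    · exact mem_insert c _
    · rcases lt_trichotomy c b with hcb | rfl | hbc
      · exact (h a ha c hc b hb hac hcb).elim
      · exact mem_insert_of_mem a rfl
      · exact (h a ha b hb c hc hab hbc).elim

/-- The points of `closure E` that can be reached from `x` without crossing a point of the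
barrier `E`. -/
def barrierCell (E : Set ℝ) (x : ℝ) : Set ℝ :=
  {y ∈ closure E | ∀ k ∈ E, (x ≤ k → y ≤ k) ∧ (k ≤ x → k ≤ y)}

lemma exists_barrierCell_subset_pair (E : Set ℝ) (x : ℝ) : ∃ a b, barrierCell E x ⊆ {a, b} := by
  refine exists_subset_pair_of_forall_not_lt_lt fun a ha b hb c hc hab hbc ↦ ?_
  obtain ⟨k, ⟨hak, hkc⟩, hk⟩ := mem_closure_iff.1 hb.1 (Ioo a c) isOpen_Ioo ⟨hab, hbc⟩
  rcases le_total x k with hxk | hkx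
  · exact (hkc.trans_le ((hc.2 k hk).1 hxk)).false
  · exact (hak.trans_le ((ha.2 k hk).2 hkx)).false

variable {m m' : Measure ℝ} [IsProbabilityMeasure m] [IsProbabilityMeasure m']

lemma measureReal_eq_of_ae_mem_pair (hm : Integrable id m) {a b : ℝ} {s : Set ℝ}
    (hs : MeasurableSet s) (h : ∀ᵐ y ∂m, y ∈ ({a, b} : Set ℝ)) :
    m.real s = s.indicator 1 a +
      (s.indicator 1 b - s.indicator 1 a) / (b - a) * (∫ y, y ∂m - a) := by
  set c : ℝ := (s.indicator 1 b - s.indicator 1 a) / (b - a) with c_def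
  have int_sub : Integrable (fun y ↦ y - a) m := hm.sub (integrable_const a)
  have interpolation : s.indicator 1 =ᵐ[m] fun y ↦ s.indicator 1 a + c * (y - a) := by
    filter_upwards [h] with y hy
    rcases hy with rfl | rfl
    · rw [sub_self, mul_zero, add_zero]
    · rcases eq_or_ne y a with rfl | hya
      · rw [sub_self, mul_zero, add_zero]
      · rw [c_def, div_mul_cancel₀ _ (sub_ne_zero.2 hya), add_sub_cancel]
  rw [← integral_indicator_one hs, integral_congr_ae interpolation,
    integral_add (integrable_const _) (int_sub.const_mul c), integral_const, integral_const_mul,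
    integral_sub (by exact hm) (integrable_const a), integral_const]
  simp only [probReal_univ, one_smul]

lemma eq_of_ae_mem_pair (hm : Integrable id m) (hm' : Integrable id m')
    (hmean : ∫ y, y ∂m = ∫ y, y ∂m') {a b : ℝ} (h : ∀ᵐ y ∂m, y ∈ ({a, b} : Set ℝ))
    (h' : ∀ᵐ y ∂m', y ∈ ({a, b} : Set ℝ)) : m = m' := by
  ext s hs
  refine (measureReal_eq_measureReal_iff).1 ?_
  rw [measureReal_eq_of_ae_mem_pair hm hs h, measureReal_eq_of_ae_mem_pair hm' hs h', hmean]

lemma eq_of_ae_mem_barrierCell {E : Set ℝ} {x : ℝ} (hm : Integrable id m) (hm' : Integrable id m')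
    (hmean : ∫ y, y ∂m = ∫ y, y ∂m') (h : ∀ᵐ y ∂m, y ∈ barrierCell E x)
    (h' : ∀ᵐ y ∂m', y ∈ barrierCell E x) : m = m' := by
  obtain ⟨a, b, hab⟩ := exists_barrierCell_subset_pair E x
  exact eq_of_ae_mem_pair hm hm' hmean (h.mono fun _ ↦ @hab _) (h'.mono fun _ ↦ @hab _)

-- The exceptional `u` are the suprema of the times at which some basic open set meets `K`.
lemma exists_countable_forall_mem_closure_iUnion {Y ι : Type*} [TopologicalSpace Y]
    [SecondCountableTopology Y] (θ : ι → ℝ) (K : ι → Set Y) :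
    ∃ N : Set ℝ, N.Countable ∧ ∀ u ∉ N, (∀ v < u, ∃ i, v < θ i ∧ θ i < u) →
      ∀ y, (∀ i, θ i < u → y ∈ K i) → y ∈ closure (⋃ i, ⋃ (_ : u ≤ θ i), K i) := by
  refine ⟨(fun J ↦ sSup (θ '' {i | (K i ∩ J).Nonempty})) '' TopologicalSpace.countableBasis Y,
    (TopologicalSpace.countable_countableBasis Y).image _, fun u hu approx y hy ↦ ?_⟩
  by_contra hcl
  rw [(TopologicalSpace.isBasis_countableBasis Y).mem_closure_iff] at hcl
  push Not at hcl
  obtain ⟨J, hJ, hyJ, disjoint_J⟩ := hcl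
  refine hu ⟨J, hJ, ?_⟩
  have meets_iff (i : ι) : (K i ∩ J).Nonempty ↔ θ i < u := by
    refine ⟨fun ⟨z, hzK, hzJ⟩ ↦ ?_, fun hi ↦ ⟨y, hy i hi, hyJ⟩⟩
    by_contra! hi
    exact disjoint_J.subset ⟨hzJ, mem_iUnion₂.2 ⟨i, hi, hzK⟩⟩
  simp only [meets_iff]
  obtain ⟨i, -, hi⟩ := approx (u - 1) (sub_one_lt u)
  refine csSup_eq_of_forall_le_of_forall_lt_exists_gt ⟨θ i, i, hi, rfl⟩ ?_ fun v hv ↦ ?_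
  · rintro _ ⟨j, hj, rfl⟩
    exact le_of_lt hj
  · obtain ⟨j, hvj, hju⟩ := approx v hv
    exact ⟨θ j, ⟨j, hju, rfl⟩, hvj⟩

end BarrierCell

section MartingaleKernel

open Set Filter Topology ProbabilityTheory
open scoped ContDiff

section Jensen

variable {m : Measure ℝ} [IsProbabilityMeasure m]

lemma integral_const_sub_eq (hm : Integrable id m) (k : ℝ) :
    ∫ y, (k - y) ∂m = k - ∫ y, y ∂m := by
  rw [integral_sub (integrable_const k) (by exact hm), integral_const, probReal_univ, one_smul]

lemma max_sub_mean_le_putPotential (hm : Integrable id m) (k : ℝ) :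
    max (k - ∫ y, y ∂m) 0 ≤ putPotential m k := by
  refine max_le ?_ (putPotential_nonneg m k)
  rw [← integral_const_sub_eq hm]
  exact integral_mono ((integrable_const k).sub hm) (integrable_put hm k) fun y ↦ le_max_left _ _

lemma ae_noncrossing_of_putPotential_eq (hm : Integrable id m) {k : ℝ}
    (h : putPotential m k = max (k - ∫ y, y ∂m) 0) :
    ∀ᵐ y ∂m, (∫ z, z ∂m ≤ k → y ≤ k) ∧ (k ≤ ∫ z, z ∂m → k ≤ y) := by
  have int_sub : Integrable (fun y ↦ k - y) m := (integrable_const k).sub hm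
  have below (hk : ∫ z, z ∂m ≤ k) : ∀ᵐ y ∂m, y ≤ k := by
    rw [max_eq_left (sub_nonneg.2 hk), ← integral_const_sub_eq hm, eq_comm, putPotential,
      integral_eq_iff_of_ae_le int_sub (integrable_put hm k) (ae_of_all _ fun _ ↦ le_max_left _ _)]
      at h
    exact h.mono fun y hy ↦ sub_nonneg.1 (left_eq_sup.1 hy)
  have above (hk : k ≤ ∫ z, z ∂m) : ∀ᵐ y ∂m, k ≤ y := by
    have put_nonneg : (0 : ℝ → ℝ) ≤ fun y ↦ max (k - y) 0 := fun _ ↦ le_max_right _ _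
    rw [max_eq_right (sub_nonpos.2 hk), putPotential,
      integral_eq_zero_iff_of_nonneg put_nonneg (integrable_put hm k)] at h
    exact h.mono fun y hy ↦ sub_nonpos.1 (sup_eq_right.1 hy)
  rcases lt_trichotomy (∫ z, z ∂m) k with hlt | heq | hgt
  · exact (below hlt.le).mono fun y hy ↦ ⟨fun _ ↦ hy, fun hk ↦ (hk.not_gt hlt).elim⟩
  · filter_upwards [below heq.le, above heq.ge] with y hy hy' using ⟨fun _ ↦ hy, fun _ ↦ hy'⟩
  · exact (above hgt.le).mono fun y hy ↦ ⟨fun hk ↦ (hk.not_gt hgt).elim, fun _ ↦ hy⟩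

end Jensen

lemma compProd_restrict_preimage_fst {X Y : Type*} [MeasurableSpace X] [MeasurableSpace Y]
    {μ : Measure X} [SFinite μ] {κ : Kernel X Y} [IsSFiniteKernel κ] {A : Set X}
    (hA : MeasurableSet A) :
    (μ ⊗ₘ κ).restrict (Prod.fst ⁻¹' A) = μ.restrict A ⊗ₘ κ := by
  ext s hs
  have indicator_eq : (fun q ↦ κ q (Prod.mk q ⁻¹' (s ∩ Prod.fst ⁻¹' A))) =
      A.indicator fun q ↦ κ q (Prod.mk q ⁻¹' s) := by
    ext q
    by_cases hq : q ∈ A <;> simp [hq, preimage_preimage]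
  rw [Measure.restrict_apply hs, Measure.compProd_apply (hs.inter (measurable_fst hA)),
    Measure.compProd_apply hs, indicator_eq, lintegral_indicator hA]

section CompProd

variable {X : Type*} [MeasurableSpace X] {μ : Measure X} [IsFiniteMeasure μ] {κ : Kernel X ℝ}
  [IsMarkovKernel κ] {ξ : X → ℝ}

lemma ae_integrable_kernel (hY : Integrable (fun z ↦ z.2) (μ ⊗ₘ κ)) :
    ∀ᵐ q ∂μ, Integrable id (κ q) :=
  ((Measure.integrable_compProd_iff hY.aestronglyMeasurable).1 hY).1

lemma integrable_comp_fst (hξ : Integrable ξ μ) : Integrable (fun z ↦ ξ z.1) (μ ⊗ₘ κ) := by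
  refine Integrable.comp_measurable ?_ measurable_fst
  rwa [← Measure.fst, Measure.fst_compProd]

lemma ae_noncrossing_of_integral_eq (hξ : Integrable ξ μ)
    (hY : Integrable (fun z ↦ z.2) (μ ⊗ₘ κ)) (hmean : ∀ᵐ q ∂μ, ∫ y, y ∂κ q = ξ q) {k : ℝ}
    (h : ∫ q, max (k - ξ q) 0 ∂μ = ∫ q, putPotential (κ q) k ∂μ) :
    ∀ᵐ q ∂μ, ∀ᵐ y ∂κ q, (ξ q ≤ k → y ≤ k) ∧ (k ≤ ξ q → k ≤ y) := by
  have int_put : Integrable (fun z : X × ℝ ↦ max (k - z.2) 0) (μ ⊗ₘ κ) :=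
    ((integrable_const k).sub hY).pos_part
  have int_kernel := ae_integrable_kernel hY
  have int_put_mean : Integrable (fun q ↦ max (k - ξ q) 0) μ :=
    ((integrable_const k).sub hξ).pos_part
  have int_put_kernel : Integrable (fun q ↦ putPotential (κ q) k) μ := int_put.integral_compProd
  have jensen : (fun q ↦ max (k - ξ q) 0) ≤ᵐ[μ] fun q ↦ putPotential (κ q) k := by
    filter_upwards [int_kernel, hmean] with q int_q mean_q
    exact mean_q ▸ max_sub_mean_le_putPotential int_q k
  rw [integral_eq_iff_of_ae_le int_put_mean int_put_kernel jensen] at h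
  filter_upwards [h, int_kernel, hmean] with q hq int_q mean_q
  rw [← mean_q] at hq ⊢
  exact ae_noncrossing_of_putPotential_eq int_q hq.symm

lemma putPotential_snd_compProd (hY : Integrable (fun z ↦ z.2) (μ ⊗ₘ κ)) (k : ℝ) :
    putPotential (μ ⊗ₘ κ).snd k = ∫ q, putPotential (κ q) k ∂μ := by
  have int_put : Integrable (fun z : X × ℝ ↦ max (k - z.2) 0) (μ ⊗ₘ κ) :=
    ((integrable_const k).sub hY).pos_part
  rw [putPotential, Measure.snd, integral_map measurable_snd.aemeasurable (by fun_prop),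
    Measure.integral_compProd int_put]
  rfl

lemma integral_sub_mul_compProd (hξ : Integrable ξ μ) (hY : Integrable (fun z ↦ z.2) (μ ⊗ₘ κ))
    {g : X → ℝ} {C : ℝ} (hg : Measurable g) (hgC : ∀ q, |g q| ≤ C) :
    ∫ z, (z.2 - ξ z.1) * g z.1 ∂(μ ⊗ₘ κ) = ∫ q, g q * (∫ y, y ∂κ q - ξ q) ∂μ := by
  have int_mul : Integrable (fun z : X × ℝ ↦ (z.2 - ξ z.1) * g z.1) (μ ⊗ₘ κ) :=
    (hY.sub (integrable_comp_fst hξ)).mul_bdd (hg.comp measurable_fst).aestronglyMeasurable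
      (ae_of_all _ fun z ↦ hgC z.1)
  rw [Measure.integral_compProd int_mul]
  refine integral_congr_ae ((ae_integrable_kernel hY).mono fun q int_q ↦ ?_)
  simp only
  rw [integral_mul_const, integral_sub (by exact int_q) (integrable_const _), integral_const,
    probReal_univ, one_smul, mul_comm]

end CompProd

lemma ae_integral_eq_of_forall_contDiff {E : Type*} [NormedAddCommGroup E] [NormedSpace ℝ E]
    [FiniteDimensional ℝ E] [MeasurableSpace E] [BorelSpace E] {μ : Measure E} [IsFiniteMeasure μ]
    {κ : Kernel E ℝ} [IsMarkovKernel κ] {ξ : E → ℝ} (hξ : Integrable ξ μ)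
    (hY : Integrable (fun z ↦ z.2) (μ ⊗ₘ κ))
    (h : ∀ g : E → ℝ, ContDiff ℝ ∞ g → HasCompactSupport g →
      ∫ z, (z.2 - ξ z.1) * g z.1 ∂(μ ⊗ₘ κ) = 0) : ∀ᵐ q ∂μ, ∫ y, y ∂κ q = ξ q := by
  have int_gap : Integrable (fun q ↦ ∫ y, y ∂κ q - ξ q) μ := hY.integral_compProd.sub hξ
  refine (ae_eq_zero_of_integral_contDiff_smul_eq_zero int_gap.locallyIntegrable fun g hg hgc ↦
    ?_).mono fun q hq ↦ sub_eq_zero.1 hq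
  obtain ⟨C, hC⟩ := hg.continuous.bounded_above_of_compact_support hgc
  rw [← h g hg hgc, integral_sub_mul_compProd hξ hY hg.continuous.measurable hC]
  rfl

section Barrier

variable {X ι : Type*} [MeasurableSpace X] {μ : Measure X} {κ : Kernel X ℝ} [Countable ι]
  {U ξ : X → ℝ} {θ : ι → ℝ} {K D : ι → Set ℝ}

lemma ae_mem_barrierCell (hU : Measurable U) [NullSingletonClass (μ.map U)]
    (hθ : ∀ᵐ q ∂μ, ∀ v < U q, ∃ i, v < θ i ∧ θ i < U q) (hD : ∀ i, (D i).Countable)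
    (hKD : ∀ i, K i ⊆ closure (D i)) (hK : ∀ i, ∀ᵐ q ∂μ, θ i < U q → ∀ᵐ y ∂κ q, y ∈ K i)
    (hcross : ∀ i, ∀ k ∈ D i, ∀ᵐ q ∂μ, U q ≤ θ i →
      ∀ᵐ y ∂κ q, (ξ q ≤ k → y ≤ k) ∧ (k ≤ ξ q → k ≤ y)) :
    ∀ᵐ q ∂μ, ∀ᵐ y ∂κ q, y ∈ barrierCell (⋃ i, ⋃ (_ : U q ≤ θ i), D i) (ξ q) := by
  obtain ⟨N, countable_N, hN⟩ := exists_countable_forall_mem_closure_iUnion θ K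
  have not_mem_N : ∀ᵐ q ∂μ, U q ∉ N :=
    ae_of_ae_map hU.aemeasurable (measure_eq_zero_iff_ae_notMem.1 (countable_N.measure_zero _))
  have all_cross : ∀ᵐ q ∂μ, ∀ i, ∀ k ∈ D i, U q ≤ θ i →
      ∀ᵐ y ∂κ q, (ξ q ≤ k → y ≤ k) ∧ (k ≤ ξ q → k ≤ y) :=
    ae_all_iff.2 fun i ↦ (ae_ball_iff (hD i)).2 (hcross i)
  filter_upwards [not_mem_N, hθ, ae_all_iff.2 hK, all_cross] with q hqN hqθ hqK hq_cross
  have mem_K : ∀ᵐ y ∂κ q, ∀ i, θ i < U q → y ∈ K i :=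
    ae_all_iff.2 fun i ↦ eventually_imp_distrib_left.2 (hqK i)
  have cross : ∀ᵐ y ∂κ q, ∀ i, ∀ k ∈ D i, U q ≤ θ i →
      (ξ q ≤ k → y ≤ k) ∧ (k ≤ ξ q → k ≤ y) :=
    ae_all_iff.2 fun i ↦ (ae_ball_iff (hD i)).2 fun k hk ↦
      eventually_imp_distrib_left.2 (hq_cross i k hk)
  filter_upwards [mem_K, cross] with y hyK hy_cross
  refine ⟨closure_minimal ?_ isClosed_closure (hN (U q) hqN hqθ y hyK), fun k hk ↦ ?_⟩
  · exact iUnion₂_subset fun i hi ↦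
      (hKD i).trans (closure_mono (subset_iUnion₂_of_subset i hi subset_rfl))
  · obtain ⟨i, hi, hki⟩ := mem_iUnion₂.1 hk
    exact hy_cross i k hki hi

end Barrier

end MartingaleKernel

section LiftedShadowCoupling

open Set Filter Topology ProbabilityTheory

/-- `π̂` is a lifted shadow coupling of `μ̂` and `ν`: a lifted martingale coupling which transports
each `μ_{[0,u]}` to its shadow in `ν`. -/
def IsLiftedShadowCoupling (πh : Measure (ℝ × ℝ × ℝ)) (μh : Measure (ℝ × ℝ)) (ν : Measure ℝ) :
    Prop :=
  IsLiftedMartingaleCoupling πh μh ν ∧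
    ∀ u ∈ Icc (0 : ℝ) 1, IsShadow (liftCurve μh u) ν (liftedCouplingCurve πh u)

variable {μh : Measure (ℝ × ℝ)} {ν : Measure ℝ}

lemma measurableSet_fst_le (u : ℝ) : MeasurableSet {q : ℝ × ℝ | q.1 ≤ u} :=
  measurableSet_le measurable_fst measurable_const

lemma liftedCouplingCurve_map_prodAssoc (P : Measure ((ℝ × ℝ) × ℝ)) (u : ℝ) :
    liftedCouplingCurve (P.map MeasurableEquiv.prodAssoc) u =
      (P.restrict (Prod.fst ⁻¹' {q | q.1 ≤ u})).snd := by
  rw [liftedCouplingCurve, Measure.restrict_map MeasurableEquiv.prodAssoc.measurable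
    (measurableSet_le measurable_fst measurable_const), Measure.map_map (by fun_prop)
    MeasurableEquiv.prodAssoc.measurable]
  rfl

lemma putPotential_liftCurve (μh : Measure (ℝ × ℝ)) (u k : ℝ) :
    putPotential (liftCurve μh u) k = ∫ q in {q | q.1 ≤ u}, max (k - q.2) 0 ∂μh := by
  rw [putPotential, liftCurve, integral_map measurable_snd.aemeasurable (by fun_prop)]

lemma liftCurve_le (μh : Measure (ℝ × ℝ)) (u : ℝ) : liftCurve μh u ≤ μh.map Prod.snd :=
  Measure.map_mono Measure.restrict_le_self measurable_snd

lemma ae_fst_mem_Ioc [NullSingletonClass (μh.map Prod.fst)]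
    (htime : ∀ᵐ q ∂μh, q.1 ∈ Icc (0 : ℝ) 1) : ∀ᵐ q ∂μh, q.1 ∈ Ioc (0 : ℝ) 1 := by
  have ne_zero : ∀ᵐ q ∂μh, q.1 ≠ 0 := ae_of_ae_map measurable_fst.aemeasurable (Measure.ae_ne _ 0)
  filter_upwards [htime, ne_zero] with q hq hq0
  exact ⟨hq.1.lt_of_ne' hq0, hq.2⟩

lemma integrable_id_liftCurve (hμ : Integrable Prod.snd μh) (u : ℝ) :
    Integrable id (liftCurve μh u) :=
  Integrable.mono_measure ((integrable_map_measure aestronglyMeasurable_id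
    measurable_snd.aemeasurable).2 hμ) (liftCurve_le μh u)

instance [IsFiniteMeasure μh] (u : ℝ) : IsFiniteMeasure (liftCurve μh u) := by
  rw [liftCurve]
  infer_instance

lemma IsLiftedMartingaleCoupling.integral_mul_eq_zero {πh : Measure (ℝ × ℝ × ℝ)}
    (h : IsLiftedMartingaleCoupling πh μh ν) {g : ℝ × ℝ → ℝ} {C : ℝ} (hg : Measurable g)
    (hgC : ∀ q, |g q| ≤ C) : ∫ p, (p.2.2 - p.2.1) * g (p.1, p.2.1) ∂πh = 0 := by
  have hC : 0 < C + 1 := by linarith [(abs_nonneg (g 0)).trans (hgC 0)]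
  have scaled := h.2.2 (fun q ↦ (C + 1)⁻¹ * g q) (hg.const_mul _) fun q ↦ by
    rw [abs_mul, abs_inv, abs_of_pos hC, inv_mul_le_one₀ hC]
    linarith [hgC q]
  simp_rw [mul_left_comm _ (C + 1)⁻¹, integral_const_mul] at scaled
  exact (mul_eq_zero.1 scaled).resolve_left (inv_ne_zero hC.ne')

lemma integrable_snd_of_snd_eq {X : Type*} [MeasurableSpace X] {P : Measure (X × ℝ)}
    (hP : P.snd = ν) (hν : Integrable id ν) : Integrable (fun z ↦ z.2) P := by
  subst hP
  exact Integrable.comp_measurable (g := id) (f := Prod.snd) hν measurable_snd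

variable [IsFiniteMeasure μh]

lemma IsLiftedMartingaleCoupling.exists_kernel {πh : Measure (ℝ × ℝ × ℝ)}
    (h : IsLiftedMartingaleCoupling πh μh ν) (hμ : Integrable Prod.snd μh)
    (hν : Integrable id ν) :
    ∃ κ : Kernel (ℝ × ℝ) ℝ, IsMarkovKernel κ ∧
      πh = (μh ⊗ₘ κ).map MeasurableEquiv.prodAssoc ∧ (μh ⊗ₘ κ).snd = ν ∧
      ∀ᵐ q ∂μh, ∫ y, y ∂κ q = q.2 := by
  set e : (ℝ × ℝ) × ℝ ≃ᵐ ℝ × ℝ × ℝ := MeasurableEquiv.prodAssoc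
  have fst_eq : (πh.map e.symm).fst = μh := by
    rw [Measure.fst, Measure.map_map measurable_fst e.symm.measurable, ← h.1]
    rfl
  have : IsFiniteMeasure (πh.map e.symm) := ⟨by
    rw [← Measure.fst_univ, fst_eq]; exact measure_lt_top _ _⟩
  set κ := (πh.map e.symm).condKernel
  have compProd_eq : μh ⊗ₘ κ = πh.map e.symm := by
    rw [← (πh.map e.symm).disintegrate κ, fst_eq]
  have πh_eq : πh = (μh ⊗ₘ κ).map e := by rw [compProd_eq, e.map_map_symm]
  have snd_eq : (μh ⊗ₘ κ).snd = ν := by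
    rw [Measure.snd, compProd_eq, Measure.map_map measurable_snd e.symm.measurable, ← h.2.1]
    rfl
  refine ⟨κ, inferInstance, πh_eq, snd_eq, ae_integral_eq_of_forall_contDiff hμ
    (integrable_snd_of_snd_eq snd_eq hν) fun g hg hgc ↦ ?_⟩
  obtain ⟨C, hC⟩ := hg.continuous.bounded_above_of_compact_support hgc
  rw [compProd_eq, integral_map_equiv]
  exact h.integral_mul_eq_zero hg.continuous.measurable hC

variable {κ : Kernel (ℝ × ℝ) ℝ} [IsMarkovKernel κ]

lemma isLiftedMartingaleCoupling_map_compProd (hμ : Integrable Prod.snd μh) (hν : Integrable id ν)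
    (hsnd : (μh ⊗ₘ κ).snd = ν) (hmean : ∀ᵐ q ∂μh, ∫ y, y ∂κ q = q.2) :
    IsLiftedMartingaleCoupling ((μh ⊗ₘ κ).map MeasurableEquiv.prodAssoc) μh ν := by
  refine ⟨?_, ?_, fun f hf hf1 ↦ ?_⟩
  · rw [Measure.map_map (by fun_prop) MeasurableEquiv.prodAssoc.measurable]
    exact Measure.fst_compProd μh κ
  · rw [Measure.map_map (by fun_prop) MeasurableEquiv.prodAssoc.measurable]
    exact hsnd
  · rw [integral_map_equiv]
    refine (integral_sub_mul_compProd hμ (integrable_snd_of_snd_eq hsnd hν) hf hf1).trans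
      (integral_eq_zero_of_ae ?_)
    filter_upwards [hmean] with q hq
    rw [hq, sub_self, mul_zero, Pi.zero_apply]

lemma ae_noncrossing_of_mem_contactSet (hμ : Integrable Prod.snd μh)
    (hY : Integrable (fun z ↦ z.2) (μh ⊗ₘ κ)) (hmean : ∀ᵐ q ∂μh, ∫ y, y ∂κ q = q.2) {u k : ℝ}
    (hk : k ∈ contactSet (liftCurve μh u)
      ((μh ⊗ₘ κ).restrict (Prod.fst ⁻¹' {q | q.1 ≤ u})).snd) :
    ∀ᵐ q ∂μh, q.1 ≤ u → ∀ᵐ y ∂κ q, (q.2 ≤ k → y ≤ k) ∧ (k ≤ q.2 → k ≤ y) := by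
  have hYu := hY.restrict (s := Prod.fst ⁻¹' {q | q.1 ≤ u})
  rw [compProd_restrict_preimage_fst (measurableSet_fst_le u)] at hk hYu
  refine (ae_restrict_iff' (measurableSet_fst_le u)).1 ?_
  refine ae_noncrossing_of_integral_eq hμ.restrict hYu (ae_restrict_of_ae hmean) ?_
  rw [← putPotential_liftCurve, ← putPotential_snd_compProd hYu]
  exact (show _ = _ from hk).symm

lemma ae_mem_contactSet (hμ : Integrable Prod.snd μh)
    (hν : Integrable id (μh ⊗ₘ κ).snd) {u : ℝ} {η : Measure ℝ}
    (hη : ((μh ⊗ₘ κ).restrict (Prod.fst ⁻¹' {q | q.1 ≤ u})).snd = η)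
    (h : IsShadow (liftCurve μh u) (μh ⊗ₘ κ).snd η) :
    ∀ᵐ q ∂μh, u < q.1 → ∀ᵐ y ∂κ q, y ∈ contactSet (liftCurve μh u) η := by
  set P := μh ⊗ₘ κ
  set A : Set ((ℝ × ℝ) × ℝ) := Prod.fst ⁻¹' {q | q.1 ≤ u}
  have hA : MeasurableSet A := measurable_fst (measurableSet_fst_le u)
  have sub_eq : P.snd - η = (P.restrict Aᶜ).snd := by
    have : IsFiniteMeasure η := hη ▸ inferInstance
    conv_lhs => rw [← Measure.restrict_compl_add_restrict (μ := P) hA]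
    rw [Measure.snd_add, hη, Measure.add_sub_cancel]
  have null := h.measure_sub_compl_contactSet (integrable_id_liftCurve hμ u) hν
  rw [sub_eq] at null
  have late : ∀ᵐ z ∂P, u < z.1.1 → z.2 ∈ contactSet (liftCurve μh u) η :=
    (ae_restrict_iff' hA.compl).1 (ae_of_ae_map measurable_snd.aemeasurable null) |>.mono
      fun z hz hu ↦ hz (not_le.2 hu)
  filter_upwards [Measure.ae_ae_of_ae_compProd late] with q hq hu
  exact hq.mono fun y hy ↦ hy hu

lemma ae_mem_barrierCell_of_isShadow [NullSingletonClass (μh.map Prod.fst)]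
    (htime : ∀ᵐ q ∂μh, q.1 ∈ Icc (0 : ℝ) 1)
    (hμ : Integrable Prod.snd μh) (hν : Integrable id (μh ⊗ₘ κ).snd)
    (hmean : ∀ᵐ q ∂μh, ∫ y, y ∂κ q = q.2) {ι : Type*} [Countable ι] {θ : ι → ℝ}
    (hθ : ∀ u ∈ Ioc (0 : ℝ) 1, ∀ v < u, ∃ i, v < θ i ∧ θ i < u) {η : ι → Measure ℝ}
    (hη : ∀ i, ((μh ⊗ₘ κ).restrict (Prod.fst ⁻¹' {q | q.1 ≤ θ i})).snd = η i)
    (hS : ∀ i, IsShadow (liftCurve μh (θ i)) (μh ⊗ₘ κ).snd (η i)) {D : ι → Set ℝ}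
    (hD : ∀ i, (D i).Countable) (hDK : ∀ i, D i ⊆ contactSet (liftCurve μh (θ i)) (η i))
    (hKD : ∀ i, contactSet (liftCurve μh (θ i)) (η i) ⊆ closure (D i)) :
    ∀ᵐ q ∂μh, ∀ᵐ y ∂κ q, y ∈ barrierCell (⋃ i, ⋃ (_ : q.1 ≤ θ i), D i) q.2 := by
  refine ae_mem_barrierCell measurable_fst ((ae_fst_mem_Ioc htime).mono fun q hq ↦ hθ q.1 hq) hD hKD
    (fun i ↦ ae_mem_contactSet hμ hν (hη i) (hS i)) fun i k hk ↦ ?_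
  exact ae_noncrossing_of_mem_contactSet hμ (integrable_snd_of_snd_eq rfl hν) hmean
    (by rw [hη]; exact hDK i hk)

lemma exists_rat_mem_Icc_between {u v : ℝ} (hu : u ∈ Ioc (0 : ℝ) 1) (hv : v < u) :
    ∃ r : {r : ℚ // (r : ℝ) ∈ Icc (0 : ℝ) 1}, v < r ∧ (r : ℝ) < u := by
  obtain ⟨r, hr, hru⟩ := exists_rat_btwn (max_lt hv hu.1)
  exact ⟨⟨r, (le_max_right v 0).trans hr.le, hru.le.trans hu.2⟩, (le_max_left v 0).trans_lt hr, hru⟩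

theorem IsLiftedShadowCoupling.unique [NullSingletonClass (μh.map Prod.fst)] [IsFiniteMeasure ν]
    (htime : ∀ᵐ q ∂μh, q.1 ∈ Icc (0 : ℝ) 1) (hμ : Integrable Prod.snd μh)
    (hν : Integrable id ν) {π₁ π₂ : Measure (ℝ × ℝ × ℝ)} (h₁ : IsLiftedShadowCoupling π₁ μh ν)
    (h₂ : IsLiftedShadowCoupling π₂ μh ν) : π₁ = π₂ := by
  obtain ⟨κ₁, _, rfl, hν₁, mean₁⟩ := h₁.1.exists_kernel hμ hν
  obtain ⟨κ₂, _, rfl, hν₂, mean₂⟩ := h₂.1.exists_kernel hμ hν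
  have shadow₁ := h₁.2
  have shadow₂ := h₂.2
  simp only [liftedCouplingCurve_map_prodAssoc] at shadow₁ shadow₂
  set η : ℝ → Measure ℝ := fun u ↦ ((μh ⊗ₘ κ₁).restrict (Prod.fst ⁻¹' {q | q.1 ≤ u})).snd
  have curve₂ (u) (hu : u ∈ Icc (0 : ℝ) 1) :
      ((μh ⊗ₘ κ₂).restrict (Prod.fst ⁻¹' {q | q.1 ≤ u})).snd = η u :=
    (shadow₂ u hu).unique hν (shadow₁ u hu)
  choose D hDK hD hKD using fun r : {r : ℚ // (r : ℝ) ∈ Icc (0 : ℝ) 1} ↦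
    (TopologicalSpace.IsSeparable.of_separableSpace
      (contactSet (liftCurve μh r) (η r))).exists_countable_dense_subset
  have cell₁ := ae_mem_barrierCell_of_isShadow htime hμ (hν₁ ▸ hν) mean₁
    (fun u hu v hv ↦ exists_rat_mem_Icc_between hu hv) (fun r ↦ rfl)
    (fun r ↦ hν₁ ▸ shadow₁ r r.2) hD hDK hKD
  have cell₂ := ae_mem_barrierCell_of_isShadow htime hμ (hν₂ ▸ hν) mean₂
    (fun u hu v hv ↦ exists_rat_mem_Icc_between hu hv) (fun r ↦ curve₂ r r.2)
    (fun r ↦ hν₂ ▸ shadow₁ r r.2) hD hDK hKD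
  have kernel_eq : κ₁ =ᵐ[μh] κ₂ := by
    filter_upwards [cell₁, cell₂, mean₁, mean₂,
      ae_integrable_kernel (integrable_snd_of_snd_eq hν₁ hν),
      ae_integrable_kernel (integrable_snd_of_snd_eq hν₂ hν)] with q h₁ h₂ mean₁ mean₂ int₁ int₂
    exact eq_of_ae_mem_barrierCell int₁ int₂ (mean₁.trans mean₂.symm) h₁ h₂
  rw [Measure.compProd_congr kernel_eq]

end LiftedShadowCoupling

section MonotoneChain

open Set Filter Topology ProbabilityTheory

variable {X : Type*} [MeasurableSpace X] {μ : Measure X} {τ : X → ℕ}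

lemma restrict_lt_add_one (hτ : Measurable τ) (j : ℕ) :
    μ.restrict {q | τ q < j + 1} = μ.restrict {q | τ q < j} + μ.restrict {q | τ q = j} := by
  have union_eq : {q | τ q < j + 1} = {q | τ q < j} ∪ {q | τ q = j} := by
    ext q
    exact Nat.lt_succ_iff_lt_or_eq
  rw [union_eq, Measure.restrict_union (disjoint_left.2 fun q hq hq' ↦ (hq.trans_eq' hq').false)
    (measurableSet_eq_fun hτ measurable_const)]

lemma exists_isProbabilityMeasure_smul_eq {Y : Type*} [MeasurableSpace Y] [Nonempty Y]
    (m : Measure Y) [IsFiniteMeasure m] : ∃ p, IsProbabilityMeasure p ∧ m univ • p = m := by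
  set M : FiniteMeasure Y := ⟨m, inferInstance⟩
  refine ⟨M.normalize, inferInstance, ?_⟩
  have h := congrArg FiniteMeasure.toMeasure M.self_eq_mass_smul_normalize
  rw [FiniteMeasure.toMeasure_smul] at h
  rw [← show (M.mass : ENNReal) = m univ from M.ennreal_mass]
  exact h.symm

lemma exists_kernel_snd_restrict_lt_eq {Y : Type*} [MeasurableSpace Y] [Nonempty Y]
    [IsFiniteMeasure μ] (hτ : Measurable τ) {η : ℕ → Measure Y} (hη : Monotone η)
    (hημ : ∀ j, η j univ = μ {q | τ q < j}) :
    ∃ κ : Kernel X Y, IsMarkovKernel κ ∧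
      ∀ j, ((μ ⊗ₘ κ).restrict (Prod.fst ⁻¹' {q | τ q < j})).snd = η j := by
  have finite_η (j) : IsFiniteMeasure (η j) := ⟨hημ j ▸ measure_lt_top _ _⟩
  have finite_sub (j) : IsFiniteMeasure (η (j + 1) - η j) :=
    isFiniteMeasure_of_le _ Measure.sub_le
  have add_sub (j) : η j + (η (j + 1) - η j) = η (j + 1) := by
    rw [add_comm, Measure.sub_add_cancel_of_le (hη j.le_succ)]
  choose p _ hp using fun j ↦ exists_isProbabilityMeasure_smul_eq (η (j + 1) - η j)
  have measure_cell (j) : μ {q | τ q = j} = (η (j + 1) - η j) univ := by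
    have h := hημ (j + 1)
    rw [← add_sub, Measure.add_apply, hημ, ← Measure.restrict_apply_univ {q | τ q < j + 1},
      restrict_lt_add_one hτ, Measure.add_apply] at h
    simp only [Measure.restrict_apply_univ] at h
    exact ((ENNReal.add_right_inj (measure_ne_top _ _)).1 h).symm
  set κ : Kernel X Y := (Kernel.ofFunOfCountable p).comap τ hτ
  have : IsMarkovKernel κ := ⟨fun q ↦ inferInstanceAs (IsProbabilityMeasure (p (τ q)))⟩
  have snd_cell (j) : (μ.restrict {q | τ q = j} ⊗ₘ κ).snd = η (j + 1) - η j := by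
    have kernel_eq : κ =ᵐ[μ.restrict {q | τ q = j}] Kernel.const X (p j) :=
      (ae_restrict_mem (hτ (measurableSet_singleton j))).mono fun q hq ↦
        congrArg p (show τ q = j from hq)
    rw [Measure.compProd_congr kernel_eq, Measure.compProd_const, Measure.snd,
      Measure.map_snd_prod, Measure.restrict_apply_univ, measure_cell, hp]
  refine ⟨κ, this, fun j ↦ ?_⟩
  rw [compProd_restrict_preimage_fst (measurableSet_lt hτ measurable_const)]
  induction j with
  | zero => 
    have : η 0 = 0 := Measure.measure_univ_eq_zero.1 (by simp [hημ])
    simp [this]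
  | succ j ih =>
    rw [restrict_lt_add_one hτ, Measure.compProd_add_left, Measure.snd_add, ih, snd_cell, add_sub]

lemma snd_eq_of_forall_snd_restrict_lt_eq {Y : Type*} [MeasurableSpace Y] {P : Measure (X × Y)}
    {ν : Measure Y} [IsFiniteMeasure ν] {η : ℕ → Measure Y}
    (hP : ∀ j, (P.restrict (Prod.fst ⁻¹' {q | τ q < j})).snd = η j) (hη : ∀ j, η j ≤ ν)
    (hPν : P univ = ν univ) : P.snd = ν := by
  have iUnion_eq : ⋃ j, {z : X × Y | τ z.1 < j} = univ :=
    iUnion_eq_univ_iff.2 fun z ↦ ⟨τ z.1 + 1, Nat.lt_succ_self _⟩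
  have le : P.snd ≤ ν := by
    refine Measure.le_intro fun B hB _ ↦ ?_
    rw [← Measure.restrict_univ (μ := P), ← iUnion_eq, Measure.snd_apply hB,
      Measure.restrict_iUnion_apply_eq_iSup
        (directed_of_isDirected_le fun i j hij z hz ↦ hz.trans_le hij) (measurable_snd hB)]
    refine iSup_le fun j ↦ ?_
    exact (Measure.snd_apply hB).symm.trans_le ((hP j).trans_le (hη j) B)
  have := isFiniteMeasure_of_le ν le
  exact Measure.eq_of_le_of_measure_univ_eq le (Measure.snd_univ.trans hPν)

lemma integral_mul_comp_eq_zero {f : X → ℝ} (hf : Integrable f μ) (hτ : Measurable τ)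
    (h : ∀ j : ℕ, ∫ x in {x | τ x < j}, f x ∂μ = 0) {G : ℕ → ℝ} {C : ℝ} (hG : ∀ j, |G j| ≤ C) :
    ∫ x, f x * G (τ x) ∂μ = 0 := by
  have int_mul : Integrable (fun x ↦ f x * G (τ x)) μ :=
    hf.mul_bdd ((measurable_of_countable G).comp hτ).aestronglyMeasurable
      (ae_of_all _ fun x ↦ hG (τ x))
  have cell (j : ℕ) : ∫ x in {x | τ x = j}, f x ∂μ = 0 := by
    have := h (j + 1)
    rwa [restrict_lt_add_one hτ, integral_add_measure hf.restrict hf.restrict, h, zero_add] at this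
  have initial (j : ℕ) : ∫ x in {x | τ x < j}, f x * G (τ x) ∂μ = 0 := by
    induction j with
    | zero => simp
    | succ j ih =>
      rw [restrict_lt_add_one hτ, integral_add_measure int_mul.restrict int_mul.restrict, ih,
        zero_add, setIntegral_congr_fun (g := fun x ↦ f x * G j)
        (measurableSet_eq_fun hτ measurable_const) fun x (hx : τ x = j) ↦ by simp only [hx],
        integral_mul_const, cell, zero_mul]
  have lim := tendsto_setIntegral_of_monotone (μ := μ) (f := fun x ↦ f x * G (τ x))
    (s := fun j : ℕ ↦ {x | τ x < j}) (fun j ↦ measurableSet_lt hτ measurable_const)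
    (fun i j hij x hx ↦ hx.trans_le hij) int_mul.integrableOn
  have iUnion_eq : ⋃ j, {x | τ x < j} = univ :=
    iUnion_eq_univ_iff.2 fun x ↦ ⟨τ x + 1, Nat.lt_succ_self _⟩
  rw [iUnion_eq, setIntegral_univ] at lim
  simp_rw [initial] at lim
  exact tendsto_nhds_unique lim tendsto_const_nhds

lemma abs_integral_mul_le_of_forall_abs_sub_le {f g : X → ℝ} (hf : Integrable f μ)
    (hτ : Measurable τ) (h : ∀ j : ℕ, ∫ x in {x | τ x < j}, f x ∂μ = 0) (hg : Measurable g)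
    {C ε : ℝ} (hgC : ∀ x, |g x| ≤ C) (hgε : ∀ x y, τ x = τ y → |g x - g y| ≤ ε) :
    |∫ x, f x * g x ∂μ| ≤ ε * ∫ x, |f x| ∂μ := by
  classical
  rcases isEmpty_or_nonempty X with hX | hX
  · simp [integral_of_isEmpty]
  set ρ : ℕ → X := Function.invFun τ
  have hρ (x) : τ (ρ (τ x)) = τ x := Function.invFun_eq ⟨x, rfl⟩
  have int_mul : Integrable (fun x ↦ f x * g x) μ :=
    hf.mul_bdd hg.aestronglyMeasurable (ae_of_all _ hgC)
  have int_mul_ρ : Integrable (fun x ↦ f x * g (ρ (τ x))) μ :=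
    hf.mul_bdd ((measurable_of_countable (g ∘ ρ)).comp hτ).aestronglyMeasurable
      (ae_of_all _ fun x ↦ hgC _)
  calc |∫ x, f x * g x ∂μ|
      = |∫ x, (f x * g x - f x * g (ρ (τ x))) ∂μ| := by
        rw [integral_sub int_mul int_mul_ρ, integral_mul_comp_eq_zero (G := fun j ↦ g (ρ j)) hf hτ
          h fun j ↦ hgC _, sub_zero]
    _ ≤ ∫ x, ε * |f x| ∂μ := by
        rw [← Real.norm_eq_abs]
        refine norm_integral_le_of_norm_le (hf.abs.const_mul ε) (ae_of_all _ fun x ↦ ?_)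
        rw [← mul_sub, Real.norm_eq_abs, abs_mul, mul_comm]
        exact mul_le_mul_of_nonneg_right (hgε x _ (hρ x).symm) (abs_nonneg _)
    _ = ε * ∫ x, |f x| ∂μ := integral_const_mul _ _

end MonotoneChain

section DiscreteShadowCoupling

open Set ProbabilityTheory

variable {X : Type*} [MeasurableSpace X] {μ : Measure X} [IsFiniteMeasure μ] {ξ : X → ℝ}

lemma setIntegral_sub_compProd_eq_zero {κ : Kernel X ℝ} [IsMarkovKernel κ] (hξ : Integrable ξ μ)
    (hY : Integrable (fun z ↦ z.2) (μ ⊗ₘ κ)) {A : Set X} (hA : MeasurableSet A)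
    (h : ConvexOrder ((μ.restrict A).map ξ) ((μ ⊗ₘ κ).restrict (Prod.fst ⁻¹' A)).snd) :
    ∫ z in Prod.fst ⁻¹' A, (z.2 - ξ z.1) ∂(μ ⊗ₘ κ) = 0 := by
  have hY_A := hY.restrict (s := Prod.fst ⁻¹' A)
  rw [compProd_restrict_preimage_fst hA] at h hY_A ⊢
  have hξ_A := hξ.restrict (s := A)
  have mean_eq := h.mean_eq
    ((integrable_map_measure aestronglyMeasurable_id hξ_A.aemeasurable).2 hξ_A)
    ((integrable_map_measure aestronglyMeasurable_id measurable_snd.aemeasurable).2 hY_A)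
  rw [integral_map hξ_A.aemeasurable (by fun_prop), Measure.snd,
    integral_map measurable_snd.aemeasurable (by fun_prop)] at mean_eq
  rw [integral_sub hY_A (integrable_comp_fst hξ_A), ← mean_eq, sub_eq_zero,
    Measure.integral_compProd (integrable_comp_fst hξ_A)]
  simp

lemma exists_kernel_forall_lt_eq_shadow {ν : Measure ℝ} [IsFiniteMeasure ν] (hξ : Integrable ξ μ)
    (hξ_meas : Measurable ξ) (hν : Integrable id ν) (hμν : μ univ = ν univ) {τ : X → ℕ}
    (hτ : Measurable τ) {η : ℕ → Measure ℝ}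
    (hη : ∀ j, IsShadow ((μ.restrict {q | τ q < j}).map ξ) ν (η j)) :
    ∃ κ : Kernel X ℝ, IsMarkovKernel κ ∧ (μ ⊗ₘ κ).snd = ν ∧
      ∀ j, ((μ ⊗ₘ κ).restrict (Prod.fst ⁻¹' {q | τ q < j})).snd = η j := by
  have mass_eq (j) : η j univ = μ {q | τ q < j} := by
    have := isFiniteMeasure_of_le ν (hη j).2.1
    rw [← (measureReal_eq_measureReal_iff).1 (hη j).1.mass_eq,
      Measure.map_apply hξ_meas MeasurableSet.univ, preimage_univ, Measure.restrict_apply_univ]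
  have mono : Monotone η := fun i j hij ↦ (hη i).mono
    ((integrable_map_measure aestronglyMeasurable_id hξ_meas.aemeasurable).2 hξ.restrict) hν
    (Measure.map_mono (Measure.restrict_mono (fun q hq ↦ hq.trans_le hij) le_rfl) hξ_meas) (hη j)
  obtain ⟨κ, _, hκ⟩ := exists_kernel_snd_restrict_lt_eq hτ mono mass_eq
  refine ⟨κ, inferInstance, ?_, hκ⟩
  exact snd_eq_of_forall_snd_restrict_lt_eq hκ (fun j ↦ (hη j).2.1)
    (by rw [← Measure.fst_univ, Measure.fst_compProd, hμν])

lemma exists_kernel_forall_isShadow {ν : Measure ℝ} [IsFiniteMeasure ν] (hξ : Integrable ξ μ)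
    (hξ_meas : Measurable ξ) (hν : Integrable id ν) (hμν : ConvexOrder (μ.map ξ) ν) {τ : X → ℕ}
    (hτ : Measurable τ) :
    ∃ κ : Kernel X ℝ, IsMarkovKernel κ ∧ (μ ⊗ₘ κ).snd = ν ∧
      ∀ j, IsShadow ((μ.restrict {q | τ q < j}).map ξ) ν
        ((μ ⊗ₘ κ).restrict (Prod.fst ⁻¹' {q | τ q < j})).snd := by
  have mass_eq : μ univ = ν univ := by
    rw [← (measureReal_eq_measureReal_iff).1 hμν.mass_eq,
      Measure.map_apply hξ_meas MeasurableSet.univ, preimage_univ]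
  choose η hη _ using fun j ↦ exists_isShadow_and_isConvexEnvelope
    ((integrable_map_measure aestronglyMeasurable_id hξ_meas.aemeasurable).2 hξ) hν
    ⟨ν, hμν, le_rfl⟩ (Measure.map_mono (Measure.restrict_le_self (s := {q | τ q < j})) hξ_meas)
  obtain ⟨κ, _, hsnd, hκ⟩ := exists_kernel_forall_lt_eq_shadow hξ hξ_meas hν mass_eq hτ hη
  exact ⟨κ, inferInstance, hsnd, fun j ↦ (hκ j).symm ▸ hη j⟩

lemma abs_integral_sub_mul_compProd_le {κ : Kernel X ℝ} [IsMarkovKernel κ] (hξ : Integrable ξ μ)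
    (hY : Integrable (fun z ↦ z.2) (μ ⊗ₘ κ)) {τ : X → ℕ} (hτ : Measurable τ)
    (h : ∀ j, ConvexOrder ((μ.restrict {q | τ q < j}).map ξ)
      ((μ ⊗ₘ κ).restrict (Prod.fst ⁻¹' {q | τ q < j})).snd)
    {g : X → ℝ} (hg : Measurable g) {C ε : ℝ} (hgC : ∀ q, |g q| ≤ C) (hε : 0 ≤ ε)
    (hgε : ∀ q q', τ q = τ q' → |g q - g q'| ≤ ε) :
    |∫ z, (z.2 - ξ z.1) * g z.1 ∂(μ ⊗ₘ κ)| ≤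
      ε * (∫ y, |y| ∂(μ ⊗ₘ κ).snd + ∫ q, |ξ q| ∂μ) := by
  have int_ξ := integrable_comp_fst (κ := κ) hξ
  calc |∫ z, (z.2 - ξ z.1) * g z.1 ∂(μ ⊗ₘ κ)|
      ≤ ε * ∫ z, |z.2 - ξ z.1| ∂(μ ⊗ₘ κ) :=
        abs_integral_mul_le_of_forall_abs_sub_le (hY.sub int_ξ) (hτ.comp measurable_fst)
          (fun j ↦ setIntegral_sub_compProd_eq_zero hξ hY (measurableSet_lt hτ measurable_const)
            (h j)) (hg.comp measurable_fst) (fun z ↦ hgC z.1) fun z z' ↦ hgε z.1 z'.1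
    _ ≤ ε * (∫ y, |y| ∂(μ ⊗ₘ κ).snd + ∫ q, |ξ q| ∂μ) := by
        refine mul_le_mul_of_nonneg_left ?_ hε
        rw [Measure.snd, integral_map measurable_snd.aemeasurable (by fun_prop)]
        have integral_ξ : ∫ z, |ξ z.1| ∂(μ ⊗ₘ κ) = ∫ q, |ξ q| ∂μ := by
          rw [Measure.integral_compProd int_ξ.abs]
          simp
        rw [← integral_ξ, ← integral_add hY.abs int_ξ.abs]
        exact integral_mono (hY.sub int_ξ).abs (hY.abs.add int_ξ.abs) fun z ↦ abs_sub _ _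

end DiscreteShadowCoupling

section Clip

open Set Filter Topology

/-- The truncation of `x` at the levels `±R`. -/
noncomputable def clip (R x : ℝ) : ℝ := max (-R) (min x R)

variable {R x : ℝ}

@[fun_prop]
lemma continuous_clip : Continuous (clip R) := by
  unfold clip
  fun_prop

lemma abs_clip (hR : 0 ≤ R) : |clip R x| = min |x| R := by
  unfold clip
  grind

lemma clip_eq_self (h : |x| ≤ R) : clip R x = x := by
  rw [clip, min_eq_left (le_of_abs_le h), max_eq_right (neg_le_of_abs_le h)]

lemma abs_sub_clip_le (hR : 0 ≤ R) : |x - clip R x| ≤ |x| := by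
  unfold clip
  grind

end Clip

section TimeSpaceCells

open Set Filter Topology

variable {n : ℕ} {x x' : ℝ} {q q' : ℝ × ℝ}

/-- The index of `x` in the partition of `[-n, n]` into intervals of length `1 / n`; points outside
`[-n, n]` are first moved to the nearest end point. -/
noncomputable def binIndex (n : ℕ) (x : ℝ) : ℕ := ⌈n * (clip n x + n)⌉₊

lemma measurable_binIndex : Measurable (binIndex n) := by
  unfold binIndex
  fun_prop

lemma binIndex_le : binIndex n x ≤ 2 * n ^ 2 := by
  have clip_le : clip n x ≤ n := (le_abs_self _).trans
    ((abs_clip n.cast_nonneg).trans_le (min_le_right _ _))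
  refine Nat.ceil_le.2 ?_
  push_cast
  nlinarith [n.cast_nonneg (α := ℝ)]

lemma binIndex_le_iff {i : ℕ} (hi : i < 2 * n ^ 2) : binIndex n x ≤ i ↔ x ≤ i / n - n := by
  have hn : 0 < (n : ℝ) := by
    rw [Nat.cast_pos, Nat.pos_iff_ne_zero]
    rintro rfl
    simp at hi
  have lower : -(n : ℝ) ≤ i / n - n := by linarith [div_nonneg i.cast_nonneg hn.le]
  have upper : i / n - n < (n : ℝ) := by
    rw [sub_lt_iff_lt_add, div_lt_iff₀ hn]
    calc (i : ℝ) < (2 * n ^ 2 : ℕ) := Nat.cast_lt.2 hi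
      _ = (n + n) * n := by push_cast; ring
  rw [binIndex, Nat.ceil_le, mul_comm, ← le_div_iff₀ hn, ← le_sub_iff_add_le, clip, max_le_iff,
    min_le_iff, and_iff_right lower, or_iff_left upper.not_ge]

lemma abs_clip_sub_clip_le (hn : 0 < n) (h : binIndex n x = binIndex n x') :
    |clip n x - clip n x'| ≤ 1 / n := by
  have hn' : 0 < (n : ℝ) := Nat.cast_pos.2 hn
  have nonneg (y : ℝ) : 0 ≤ (n : ℝ) * (clip n y + n) := by
    have := neg_le_of_abs_le ((abs_clip (x := y) hn'.le).trans_le (min_le_right _ _))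
    exact mul_nonneg hn'.le (by linarith)
  have index_le (y : ℝ) : (n : ℝ) * (clip n y + n) ≤ binIndex n y := Nat.le_ceil _
  have lt_index (y : ℝ) : (binIndex n y : ℝ) < n * (clip n y + n) + 1 :=
    Nat.ceil_lt_add_one (nonneg y)
  have := index_le x
  have := index_le x'
  have := lt_index x
  have := lt_index x'
  rw [le_div_iff₀ hn', ← abs_of_pos hn', ← abs_mul, abs_of_pos hn', abs_le]
  rw [h] at *
  constructor <;> linarith

/-- An enumeration of the cells on which both bin indices are constant; the time index is the
leading digit, so that initial segments of cells are time intervals. -/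
noncomputable def cellIndex (n : ℕ) (q : ℝ × ℝ) : ℕ :=
  binIndex n q.2 + (2 * n ^ 2 + 1) * binIndex n q.1

lemma measurable_cellIndex : Measurable (cellIndex n) :=
  (measurable_binIndex.comp measurable_snd).add
    ((measurable_binIndex.comp measurable_fst).const_mul _)

lemma cellIndex_div : cellIndex n q / (2 * n ^ 2 + 1) = binIndex n q.1 := by
  rw [cellIndex, Nat.add_mul_div_left _ _ (Nat.succ_pos _),
    Nat.div_eq_of_lt (Nat.lt_succ_of_le binIndex_le), zero_add]

lemma cellIndex_mod : cellIndex n q % (2 * n ^ 2 + 1) = binIndex n q.2 := by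
  rw [cellIndex, Nat.add_mul_mod_self_left, Nat.mod_eq_of_lt (Nat.lt_succ_of_le binIndex_le)]

lemma cellIndex_lt_iff {i : ℕ} (hi : i < 2 * n ^ 2) :
    cellIndex n q < (i + 1) * (2 * n ^ 2 + 1) ↔ q.1 ≤ i / n - n := by
  rw [← Nat.div_lt_iff_lt_mul (Nat.succ_pos _), cellIndex_div, Nat.lt_succ_iff, binIndex_le_iff hi]

lemma eventually_exists_cellIndex_lt_iff {v u : ℝ} (h : v < u) :
    ∀ᶠ n in atTop, ∃ j, ∃ c ∈ Icc v u, ∀ q, cellIndex n q < j ↔ q.1 ≤ c := by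
  filter_upwards [eventually_gt_atTop 0, tendsto_natCast_atTop_atTop.eventually_gt_atTop |u|,
    tendsto_one_div_atTop_nhds_zero_nat.eventually_lt_const (sub_pos.2 h)] with n hn hu hvu
  have hn' : 0 < (n : ℝ) := Nat.cast_pos.2 hn
  obtain ⟨neg_lt, u_lt⟩ := abs_lt.1 hu
  set i := ⌊n * (u + n)⌋₊
  have i_le : (i : ℝ) ≤ n * (u + n) := Nat.floor_le (mul_nonneg hn'.le (by linarith))
  have lt_i : n * (u + n) < i + 1 := Nat.lt_floor_add_one _
  have hi : i < 2 * n ^ 2 := by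
    rw [← Nat.cast_lt (α := ℝ)]
    push_cast
    nlinarith
  refine ⟨_, i / n - n, ⟨?_, ?_⟩, fun q ↦ cellIndex_lt_iff hi⟩
  · have : u + n < i / n + 1 / n := by rwa [← add_div, lt_div_iff₀ hn', mul_comm]
    linarith
  · rwa [sub_le_iff_le_add, div_le_iff₀ hn', mul_comm]

lemma norm_map_clip {R : ℝ} (hR : 0 ≤ R) : ‖Prod.map (clip R) (clip R) q‖ = min ‖q‖ R := by
  simp only [Prod.norm_def, Prod.map_fst, Prod.map_snd, Real.norm_eq_abs, abs_clip hR,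
    min_max_distrib_right]

lemma eventually_comp_map_clip_eq {g : ℝ × ℝ → ℝ} (hg : HasCompactSupport g) :
    ∀ᶠ n : ℕ in atTop, ∀ q, g (Prod.map (clip n) (clip n) q) = g q := by
  obtain ⟨R, hR⟩ := hg.isCompact.isBounded.exists_norm_le
  have eq_zero {q} (hq : R < ‖q‖) : g q = 0 :=
    image_eq_zero_of_notMem_tsupport fun h ↦ (hR q h).not_gt hq
  filter_upwards [tendsto_natCast_atTop_atTop.eventually_gt_atTop R] with n hn q
  rcases le_or_gt ‖q‖ n with hq | hq
  · rw [Prod.map, clip_eq_self ((norm_fst_le q).trans hq), clip_eq_self ((norm_snd_le q).trans hq)]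
  · rw [eq_zero (hn.trans hq), eq_zero]
    rwa [norm_map_clip n.cast_nonneg, min_eq_right hq.le]

lemma eventually_abs_sub_le_of_cellIndex_eq {g : ℝ × ℝ → ℝ} (hg : Continuous g)
    (hgc : HasCompactSupport g) {ε : ℝ} (hε : 0 < ε) :
    ∀ᶠ n in atTop, ∀ q q', cellIndex n q = cellIndex n q' → |g q - g q'| ≤ ε := by
  obtain ⟨δ, hδ, hgδ⟩ :=
    Metric.uniformContinuous_iff.1 (hgc.uniformContinuous_of_continuous hg) ε hε
  filter_upwards [eventually_gt_atTop 0, eventually_comp_map_clip_eq hgc,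
    tendsto_one_div_atTop_nhds_zero_nat.eventually_lt_const hδ] with n hn hclip hnδ q q' hqq'
  rw [← hclip q, ← hclip q']
  refine (hgδ (max_lt ?_ ?_)).le
  · refine (abs_clip_sub_clip_le hn ?_).trans_lt hnδ
    rw [← cellIndex_div, hqq', cellIndex_div]
  · refine (abs_clip_sub_clip_le hn ?_).trans_lt hnδ
    rw [← cellIndex_mod, hqq', cellIndex_mod]

end TimeSpaceCells

section WeakLimits

open Set Filter Topology

variable {ι X Y : Type*} [MeasurableSpace X] [MeasurableSpace Y] [TopologicalSpace X]
  [TopologicalSpace Y]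

lemma isTightMeasureSet_setOf_fst_snd [T2Space X] [T2Space Y] [OpensMeasurableSpace X]
    [OpensMeasurableSpace Y] {μ : Measure X} {ν : Measure Y} (hμ : IsTightMeasureSet {μ})
    (hν : IsTightMeasureSet {ν}) :
    IsTightMeasureSet {P : Measure (X × Y) | P.fst = μ ∧ P.snd = ν} := by
  rw [isTightMeasureSet_iff_exists_isCompact_measure_compl_le] at *
  intro ε hε
  obtain ⟨K, hK, hμK⟩ := hμ (ε / 2) (ENNReal.half_pos hε.ne')
  obtain ⟨L, hL, hνL⟩ := hν (ε / 2) (ENNReal.half_pos hε.ne')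
  refine ⟨K ×ˢ L, hK.prod hL, ?_⟩
  rintro P ⟨rfl, rfl⟩
  calc P (K ×ˢ L)ᶜ
      = P (Prod.fst ⁻¹' Kᶜ ∪ Prod.snd ⁻¹' Lᶜ) := by
        rw [Set.prod_eq, compl_inter, preimage_compl, preimage_compl]
    _ ≤ P.fst Kᶜ + P.snd Lᶜ := by
        rw [Measure.fst_apply hK.measurableSet.compl, Measure.snd_apply hL.measurableSet.compl]
        exact measure_union_le _ _
    _ ≤ ε / 2 + ε / 2 := add_le_add (hμK _ rfl) (hνL _ rfl)
    _ = ε := ENNReal.add_halves ε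

lemma map_eq_of_tendsto {Ω Ω' : Type*} [MeasurableSpace Ω] [TopologicalSpace Ω]
    [OpensMeasurableSpace Ω] [MeasurableSpace Ω'] [TopologicalSpace Ω'] [BorelSpace Ω']
    [HasOuterApproxClosed Ω'] {l : Filter ι} [l.NeBot] {P : ι → ProbabilityMeasure Ω}
    {Q : ProbabilityMeasure Ω} (hPQ : Tendsto P l (𝓝 Q)) {f : Ω → Ω'} (hf : Continuous f)
    {m : Measure Ω'} (h : ∀ i, (P i : Measure Ω).map f = m) : (Q : Measure Ω).map f = m := by
  obtain ⟨i⟩ : Nonempty ι := l.nonempty_of_neBot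
  have map_eq (j) : (P j).map hf.measurable.aemeasurable = (P i).map hf.measurable.aemeasurable :=
    Subtype.ext ((h j).trans (h i).symm)
  have tendsto_map := ProbabilityMeasure.tendsto_map_of_tendsto_of_continuous P Q hPQ hf
  simp only [map_eq] at tendsto_map
  rw [← h i]
  exact congrArg ProbabilityMeasure.toMeasure (tendsto_nhds_unique tendsto_map tendsto_const_nhds)

lemma exists_tendsto_of_fst_snd [T2Space X] [T2Space Y] [BorelSpace X] [BorelSpace Y]
    [SecondCountableTopologyEither X Y] [HasOuterApproxClosed X] [HasOuterApproxClosed Y]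
    {μ : Measure X} {ν : Measure Y} (hμ : IsTightMeasureSet {μ}) (hν : IsTightMeasureSet {ν})
    (l : Ultrafilter ι) {P : ι → ProbabilityMeasure (X × Y)}
    (hfst : ∀ i, (P i : Measure (X × Y)).fst = μ) (hsnd : ∀ i, (P i : Measure (X × Y)).snd = ν) :
    ∃ Q : ProbabilityMeasure (X × Y), Tendsto P l (𝓝 Q) ∧
      (Q : Measure (X × Y)).fst = μ ∧ (Q : Measure (X × Y)).snd = ν := by
  have tight : IsTightMeasureSet {((p : ProbabilityMeasure (X × Y)) : Measure (X × Y)) |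
      p ∈ range P} := by
    refine (isTightMeasureSet_setOf_fst_snd hμ hν).subset ?_
    rintro _ ⟨_, ⟨i, rfl⟩, rfl⟩
    exact ⟨hfst i, hsnd i⟩
  have range_mem : (l.map P : Filter (ProbabilityMeasure (X × Y))) ≤ 𝓟 (closure (range P)) :=
    le_principal_iff.2 (mem_of_superset range_mem_map subset_closure)
  obtain ⟨Q, -, hQ⟩ :=
    (isCompact_closure_of_isTightMeasureSet tight).ultrafilter_le_nhds (l.map P) range_mem
  exact ⟨Q, hQ, map_eq_of_tendsto hQ continuous_fst hfst, map_eq_of_tendsto hQ continuous_snd hsnd⟩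

lemma snd_restrict_preimage_fst_le_of_tendsto [BorelSpace Y]
    [OpensMeasurableSpace (X × Y)] [HasOuterApproxClosed (X × Y)] {l : Filter ι} [l.NeBot]
    {P : ι → ProbabilityMeasure (X × Y)} {Q : ProbabilityMeasure (X × Y)}
    (hPQ : Tendsto P l (𝓝 Q)) {G : Set X} (hG : IsOpen G) {S : Measure Y} [S.OuterRegular]
    (h : ∀ᶠ i in l, ((P i : Measure (X × Y)).restrict (Prod.fst ⁻¹' G)).snd ≤ S) :
    ((Q : Measure (X × Y)).restrict (Prod.fst ⁻¹' G)).snd ≤ S := by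
  have restrict_apply {V : Set Y} (hV : IsOpen V) (R : Measure (X × Y)) :
      (R.restrict (Prod.fst ⁻¹' G)).snd V = R (Prod.snd ⁻¹' V ∩ Prod.fst ⁻¹' G) := by
    rw [Measure.snd_apply hV.measurableSet,
      Measure.restrict_apply (measurable_snd hV.measurableSet)]
  have le_of_isOpen {V : Set Y} (hV : IsOpen V) :
      ((Q : Measure (X × Y)).restrict (Prod.fst ⁻¹' G)).snd V ≤ S V := by
    rw [restrict_apply hV]
    refine (ProbabilityMeasure.le_liminf_measure_open_of_tendsto hPQ
      ((hV.preimage continuous_snd).inter (hG.preimage continuous_fst))).trans ?_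
    refine (liminf_le_liminf (h.mono fun i hi ↦ ?_)).trans_eq (liminf_const (S V))
    rw [← restrict_apply hV]
    exact hi V
  refine Measure.le_intro fun A _ _ ↦ ?_
  rw [A.measure_eq_iInf_isOpen S]
  exact le_iInf₂ fun V hAV ↦ le_iInf fun hV ↦ (measure_mono hAV).trans (le_of_isOpen hV)

lemma tendsto_integral_abs_sub_clip {m : Measure ℝ} (hm : Integrable id m) :
    Tendsto (fun R : ℕ ↦ ∫ x, |x - clip R x| ∂m) atTop (𝓝 0) := by
  rw [← integral_zero ℝ ℝ (μ := m)]
  refine tendsto_integral_of_dominated_convergence (fun x ↦ |x|)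
    (fun R ↦ (by fun_prop : Continuous fun x ↦ |x - clip R x|).aestronglyMeasurable) hm.abs
    (fun R ↦ ae_of_all _ fun x ↦ ?_) (ae_of_all _ fun x ↦ tendsto_const_nhds.congr' ?_)
  · rw [Real.norm_eq_abs, abs_abs]
    exact abs_sub_clip_le R.cast_nonneg
  · filter_upwards [tendsto_natCast_atTop_atTop.eventually_ge_atTop |x|] with R hR
    rw [clip_eq_self hR, sub_self, abs_zero]

variable {Ω : Type*} [MeasurableSpace Ω] {φ G : Ω → ℝ} {m : Measure ℝ} {C : ℝ}

lemma abs_integral_mul_sub_integral_clip_mul_le {P : Measure Ω} [IsFiniteMeasure P]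
    (hφ : Measurable φ) (hP : P.map φ = m) (hm : Integrable id m)
    (hG : Measurable G) (hC : ∀ z, |G z| ≤ C) {R : ℝ} (hR : 0 ≤ R) :
    |∫ z, φ z * G z ∂P - ∫ z, clip R (φ z) * G z ∂P| ≤ (∫ x, |x - clip R x| ∂m) * C := by
  subst hP
  have int_φ : Integrable φ P :=
    (integrable_map_measure aestronglyMeasurable_id hφ.aemeasurable).1 hm
  have int_clip : Integrable (fun z ↦ clip R (φ z)) P :=
    Integrable.of_bound (continuous_clip.measurable.comp hφ).aestronglyMeasurable R
      (ae_of_all _ fun z ↦ (abs_clip hR).trans_le (min_le_right _ _))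
  have int_mul {f : Ω → ℝ} (hf : Integrable f P) : Integrable (fun z ↦ f z * G z) P :=
    hf.mul_bdd hG.aestronglyMeasurable (ae_of_all _ hC)
  rw [← integral_sub (int_mul int_φ) (int_mul int_clip), ← Real.norm_eq_abs,
    integral_map hφ.aemeasurable (by fun_prop), ← integral_mul_const]
  refine norm_integral_le_of_norm_le ((int_φ.sub int_clip).abs.mul_const C)
    (ae_of_all _ fun z ↦ ?_)
  rw [← sub_mul, Real.norm_eq_abs, abs_mul]
  exact mul_le_mul_of_nonneg_left (hC z) (abs_nonneg _)

lemma tendsto_integral_mul_of_map_eq [TopologicalSpace Ω] [OpensMeasurableSpace Ω] {l : Filter ι}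
    [l.NeBot] {P : ι → ProbabilityMeasure Ω} {Q : ProbabilityMeasure Ω} (hPQ : Tendsto P l (𝓝 Q))
    (hφ : Continuous φ) (hP : ∀ i, (P i : Measure Ω).map φ = m) (hm : Integrable id m)
    (hG : Continuous G) (hC : ∀ z, |G z| ≤ C) :
    Tendsto (fun i ↦ ∫ z, φ z * G z ∂(P i : Measure Ω)) l
      (𝓝 (∫ z, φ z * G z ∂(Q : Measure Ω))) := by
  have tail : Tendsto (fun R : ℕ ↦ (∫ x, |x - clip R x| ∂m) * C) atTop (𝓝 0) := by
    simpa only [zero_mul] using (tendsto_integral_abs_sub_clip hm).mul_const C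
  have clip_tendsto (R : ℕ) : Tendsto (fun i ↦ ∫ z, clip R (φ z) * G z ∂(P i : Measure Ω)) l
      (𝓝 (∫ z, clip R (φ z) * G z ∂(Q : Measure Ω))) := by
    refine ProbabilityMeasure.tendsto_iff_forall_integral_tendsto.1 hPQ
      (.ofNormedAddCommGroup (fun z ↦ clip R (φ z) * G z) (by fun_prop) (R * C) fun z ↦ ?_)
    rw [norm_mul]
    exact mul_le_mul ((abs_clip R.cast_nonneg).trans_le (min_le_right _ _)) (hC z) (abs_nonneg _)
      R.cast_nonneg
  have uniform : TendstoUniformly (fun (R : ℕ) i ↦ ∫ z, clip R (φ z) * G z ∂(P i : Measure Ω))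
      (fun i ↦ ∫ z, φ z * G z ∂(P i : Measure Ω)) atTop := by
    refine Metric.tendstoUniformly_iff.2 fun ε hε ↦
      (tail.eventually_lt_const hε).mono fun R hR i ↦ ?_
    exact (abs_integral_mul_sub_integral_clip_mul_le hφ.measurable (hP i) hm hG.measurable hC
      R.cast_nonneg).trans_lt hR
  refine (uniform.tendstoUniformlyOnFilter.mono_right le_top).tendsto_of_eventually_tendsto
    (Eventually.of_forall clip_tendsto) (tendsto_iff_dist_tendsto_zero.2 ?_)
  refine squeeze_zero (fun _ ↦ dist_nonneg) (fun R ↦ ?_) tail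
  rw [dist_comm]
  exact abs_integral_mul_sub_integral_clip_mul_le hφ.measurable (map_eq_of_tendsto hPQ hφ hP)
    hm hG.measurable hC R.cast_nonneg

end WeakLimits

section Existence

open Set Filter Topology ProbabilityTheory

lemma map_restrict_le_le_of_forall_lt {Ω Y : Type*} [MeasurableSpace Ω] [MeasurableSpace Y]
    {P : Measure Ω} {U : Ω → ℝ} (hU : Measurable U) [NullSingletonClass (P.map U)] {f : Ω → Y}
    (hf : Measurable f) {S : Measure Y} {u : ℝ}
    (h : ∀ v < u, (P.restrict {z | U z < v}).map f ≤ S) :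
    (P.restrict {z | U z ≤ u}).map f ≤ S := by
  obtain ⟨v, v_mono, v_lt, v_tendsto⟩ := exists_seq_strictMono_tendsto u
  have ne_u : ∀ᵐ z ∂P, U z ≠ u := ae_of_ae_map hU.aemeasurable (Measure.ae_ne _ u)
  have restrict_eq : P.restrict {z | U z ≤ u} = P.restrict (⋃ n, {z | U z < v n}) := by
    refine Measure.restrict_congr_set (eventuallyEq_set.2 (ne_u.mono fun z hz ↦ ?_))
    rw [mem_iUnion]
    exact ⟨fun hzu ↦ (v_tendsto.eventually_const_lt (lt_of_le_of_ne hzu hz)).exists,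
      fun ⟨n, hn⟩ ↦ (hn.trans (v_lt n)).le⟩
  have directed : Directed (· ⊆ ·) fun n ↦ {z | U z < v n} :=
    Monotone.directed_le fun i j hij z (hz : U z < v i) ↦ hz.trans_le (v_mono.monotone hij)
  refine Measure.le_intro fun A hA _ ↦ ?_
  rw [Measure.map_apply hf hA, restrict_eq,
    Measure.restrict_iUnion_apply_eq_iSup directed (hf hA)]
  refine iSup_le fun n ↦ ?_
  rw [← Measure.map_apply hf hA]
  exact h (v n) (v_lt n) A

variable {μh : Measure (ℝ × ℝ)} {ν : Measure ℝ}

section Approximation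

variable [IsFiniteMeasure μh] {κ : ℕ → Kernel (ℝ × ℝ) ℝ}

lemma eventually_snd_restrict_compProd_le [IsFiniteMeasure ν] (hμ : Integrable Prod.snd μh)
    (hν : Integrable id ν)
    (hκ : ∀ n j, IsShadow ((μh.restrict {q | cellIndex n q < j}).map Prod.snd) ν
      ((μh ⊗ₘ κ n).restrict (Prod.fst ⁻¹' {q | cellIndex n q < j})).snd)
    {u v : ℝ} (hvu : v < u) {S : Measure ℝ} (hS : IsShadow (liftCurve μh u) ν S) :
    ∀ᶠ n in atTop, ((μh ⊗ₘ κ n).restrict (Prod.fst ⁻¹' {q | q.1 < v})).snd ≤ S := by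
  filter_upwards [eventually_exists_cellIndex_lt_iff hvu] with n ⟨j, c, ⟨hvc, hcu⟩, hj⟩
  have shadow_c := hκ n j
  simp only [hj] at shadow_c
  have curve_le : liftCurve μh c ≤ liftCurve μh u :=
    Measure.map_mono (Measure.restrict_mono (fun q hq ↦ hq.trans hcu) le_rfl) measurable_snd
  refine le_trans ?_ (shadow_c.mono (integrable_id_liftCurve hμ u) hν curve_le hS)
  exact Measure.map_mono (Measure.restrict_mono (fun z hz ↦ hz.le.trans hvc) le_rfl) measurable_snd

lemma tendsto_integral_sub_mul_compProd [∀ n, IsMarkovKernel (κ n)]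
    (hμ : Integrable Prod.snd μh) (hν : Integrable id ν)
    (hsnd : ∀ n, (μh ⊗ₘ κ n).snd = ν)
    (hκ : ∀ n j, ConvexOrder ((μh.restrict {q | cellIndex n q < j}).map Prod.snd)
      ((μh ⊗ₘ κ n).restrict (Prod.fst ⁻¹' {q | cellIndex n q < j})).snd)
    {g : ℝ × ℝ → ℝ} (hg : Continuous g) (hgc : HasCompactSupport g) :
    Tendsto (fun n ↦ ∫ z, (z.2 - z.1.2) * g z.1 ∂(μh ⊗ₘ κ n)) atTop (𝓝 0) := by
  obtain ⟨C, hC⟩ := hg.bounded_above_of_compact_support hgc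
  set M := ∫ y, |y| ∂ν + ∫ q, |q.2| ∂μh
  have M_nonneg : 0 ≤ M :=
    add_nonneg (integral_nonneg fun _ ↦ abs_nonneg _) (integral_nonneg fun _ ↦ abs_nonneg _)
  refine Metric.tendsto_nhds.2 fun ε hε ↦ ?_
  have hδ : 0 < ε / (M + 1) := div_pos hε (by linarith)
  filter_upwards [eventually_abs_sub_le_of_cellIndex_eq hg hgc hδ] with n hn
  rw [dist_zero_right, Real.norm_eq_abs]
  calc |∫ z, (z.2 - z.1.2) * g z.1 ∂(μh ⊗ₘ κ n)|
      ≤ ε / (M + 1) * (∫ y, |y| ∂(μh ⊗ₘ κ n).snd + ∫ q, |q.2| ∂μh) :=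
        abs_integral_sub_mul_compProd_le hμ (integrable_snd_of_snd_eq (hsnd n) hν)
          measurable_cellIndex (hκ n) hg.measurable hC hδ.le hn
    _ = ε / (M + 1) * M := by rw [hsnd n]
    _ < ε / (M + 1) * (M + 1) := mul_lt_mul_of_pos_left (lt_add_one M) hδ
    _ = ε := div_mul_cancel₀ ε (by linarith)

end Approximation

lemma integral_sub_mul_eq_zero_of_tendsto {ι : Type*} {l : Filter ι} [l.NeBot]
    (hμ : Integrable Prod.snd μh) (hν : Integrable id ν)
    {P : ι → ProbabilityMeasure ((ℝ × ℝ) × ℝ)} {Q : ProbabilityMeasure ((ℝ × ℝ) × ℝ)}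
    (hPQ : Tendsto P l (𝓝 Q)) (hfst : ∀ i, (P i : Measure ((ℝ × ℝ) × ℝ)).fst = μh)
    (hsnd : ∀ i, (P i : Measure ((ℝ × ℝ) × ℝ)).snd = ν) {g : ℝ × ℝ → ℝ} (hg : Continuous g)
    {C : ℝ} (hC : ∀ q, |g q| ≤ C)
    (h : Tendsto (fun i ↦ ∫ z, (z.2 - z.1.2) * g z.1 ∂(P i : Measure ((ℝ × ℝ) × ℝ))) l (𝓝 0)) :
    ∫ z, (z.2 - z.1.2) * g z.1 ∂(Q : Measure ((ℝ × ℝ) × ℝ)) = 0 := by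
  have measurable_g : Measurable fun z : (ℝ × ℝ) × ℝ ↦ g z.1 :=
    (hg.comp continuous_fst).measurable
  have map_x {ρ : Measure ((ℝ × ℝ) × ℝ)} (hρ : ρ.fst = μh) :
      ρ.map (fun z ↦ z.1.2) = μh.map Prod.snd := by
    rw [← hρ, Measure.fst, Measure.map_map measurable_snd measurable_fst]
    rfl
  have integral_eq {ρ : Measure ((ℝ × ℝ) × ℝ)} (hρ : ρ.fst = μh) (hρ' : ρ.snd = ν) :
      ∫ z, (z.2 - z.1.2) * g z.1 ∂ρ = ∫ z, z.2 * g z.1 ∂ρ - ∫ z, z.1.2 * g z.1 ∂ρ := by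
    have int_x : Integrable (fun z ↦ z.1.2) ρ := by
      subst hρ
      exact hμ.comp_measurable measurable_fst
    simp only [sub_mul]
    exact integral_sub
      ((integrable_snd_of_snd_eq hρ' hν).mul_bdd measurable_g.aestronglyMeasurable
        (ae_of_all _ fun z ↦ hC z.1))
      (int_x.mul_bdd measurable_g.aestronglyMeasurable (ae_of_all _ fun z ↦ hC z.1))
  have int_law_x : Integrable id (μh.map Prod.snd) :=
    (integrable_map_measure aestronglyMeasurable_id measurable_snd.aemeasurable).2 hμ
  have tendsto_y := tendsto_integral_mul_of_map_eq (G := fun z ↦ g z.1) hPQ continuous_snd hsnd hν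
    (by fun_prop) fun z ↦ hC z.1
  have tendsto_x := tendsto_integral_mul_of_map_eq (φ := fun z ↦ z.1.2) (G := fun z ↦ g z.1) hPQ
    (by fun_prop) (fun i ↦ map_x (hfst i)) int_law_x (by fun_prop) fun z ↦ hC z.1
  simp only [integral_eq (hfst _) (hsnd _)] at h
  rw [integral_eq (map_eq_of_tendsto hPQ continuous_fst hfst)
    (map_eq_of_tendsto hPQ continuous_snd hsnd)]
  exact tendsto_nhds_unique (tendsto_y.sub tendsto_x) h

lemma snd_restrict_fst_le_eq_of_tendsto {ι : Type*} {l : Filter ι} [l.NeBot]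
    [NullSingletonClass (μh.map Prod.fst)] {P : ι → ProbabilityMeasure ((ℝ × ℝ) × ℝ)}
    {Q : ProbabilityMeasure ((ℝ × ℝ) × ℝ)} (hPQ : Tendsto P l (𝓝 Q))
    (hQ : (Q : Measure ((ℝ × ℝ) × ℝ)).fst = μh) {u : ℝ} {S : Measure ℝ} [IsFiniteMeasure S]
    (hS : S univ = μh {q | q.1 ≤ u})
    (h : ∀ v < u, ∀ᶠ i in l,
      ((P i : Measure ((ℝ × ℝ) × ℝ)).restrict (Prod.fst ⁻¹' {q | q.1 < v})).snd ≤ S) :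
    ((Q : Measure ((ℝ × ℝ) × ℝ)).restrict (Prod.fst ⁻¹' {q | q.1 ≤ u})).snd = S := by
  have law_time : (Q : Measure ((ℝ × ℝ) × ℝ)).map (fun z ↦ z.1.1) = μh.map Prod.fst := by
    rw [← hQ, Measure.fst, Measure.map_map measurable_fst measurable_fst]
    rfl
  have : NullSingletonClass ((Q : Measure ((ℝ × ℝ) × ℝ)).map fun z ↦ z.1.1) :=
    law_time ▸ inferInstance
  refine Measure.eq_of_le_of_measure_univ_eq ?_ ?_
  · exact map_restrict_le_le_of_forall_lt (U := fun z : (ℝ × ℝ) × ℝ ↦ z.1.1) (by fun_prop)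
      measurable_snd fun v hv ↦ snd_restrict_preimage_fst_le_of_tendsto hPQ
        (isOpen_lt continuous_fst continuous_const) (h v hv)
  · rw [Measure.snd_univ, Measure.restrict_apply_univ, hS, ← hQ,
      Measure.fst_apply (measurableSet_fst_le u)]

lemma exists_isShadow_liftCurve [IsFiniteMeasure μh] [IsFiniteMeasure ν]
    (hμ : Integrable Prod.snd μh) (hν : Integrable id ν)
    (hμν : ConvexOrder (μh.map Prod.snd) ν) (u : ℝ) :
    ∃ S, IsShadow (liftCurve μh u) ν S ∧ S univ = μh {q | q.1 ≤ u} := by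
  obtain ⟨S, hS, -⟩ := exists_isShadow_and_isConvexEnvelope
    ((integrable_map_measure aestronglyMeasurable_id measurable_snd.aemeasurable).2 hμ) hν
    ⟨ν, hμν, le_rfl⟩ (liftCurve_le μh u)
  have := isFiniteMeasure_of_le ν hS.2.1
  refine ⟨S, hS, ?_⟩
  rw [← (measureReal_eq_measureReal_iff).1 hS.1.mass_eq, liftCurve,
    Measure.map_apply measurable_snd MeasurableSet.univ, preimage_univ, Measure.restrict_apply_univ]

theorem exists_isLiftedShadowCoupling [IsProbabilityMeasure μh]
    [NullSingletonClass (μh.map Prod.fst)] [IsFiniteMeasure ν] (hμ : Integrable Prod.snd μh)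
    (hν : Integrable id ν) (hμν : ConvexOrder (μh.map Prod.snd) ν) :
    ∃ πh, IsLiftedShadowCoupling πh μh ν := by
  choose κ _ hsnd hκ using fun n ↦ exists_kernel_forall_isShadow hμ measurable_snd hν hμν
    (measurable_cellIndex (n := n))
  set P : ℕ → ProbabilityMeasure ((ℝ × ℝ) × ℝ) := fun n ↦ ⟨μh ⊗ₘ κ n, inferInstance⟩
  have hfst (n) : (P n : Measure ((ℝ × ℝ) × ℝ)).fst = μh := Measure.fst_compProd _ _
  obtain ⟨Q, hPQ, Q_fst, Q_snd⟩ := exists_tendsto_of_fst_snd isTightMeasureSet_singleton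
    isTightMeasureSet_singleton (hyperfilter ℕ) hfst hsnd
  have hyperfilter_le : (hyperfilter ℕ : Filter ℕ) ≤ atTop :=
    hyperfilter_le_cofinite.trans Nat.cofinite_eq_atTop.le
  set κ' := (Q : Measure ((ℝ × ℝ) × ℝ)).condKernel
  have disintegrate : (Q : Measure ((ℝ × ℝ) × ℝ)) = μh ⊗ₘ κ' := by
    rw [← Q_fst]
    exact (Measure.disintegrate _ _).symm
  have mean : ∀ᵐ q ∂μh, ∫ y, y ∂κ' q = q.2 := by
    refine ae_integral_eq_of_forall_contDiff hμ
      (disintegrate ▸ integrable_snd_of_snd_eq Q_snd hν) fun g hg hgc ↦ ?_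
    obtain ⟨C, hC⟩ := hg.continuous.bounded_above_of_compact_support hgc
    rw [← disintegrate]
    exact integral_sub_mul_eq_zero_of_tendsto hμ hν hPQ hfst hsnd hg.continuous hC
      ((tendsto_integral_sub_mul_compProd hμ hν hsnd (fun n j ↦ (hκ n j).1) hg.continuous
        hgc).mono_left hyperfilter_le)
  refine ⟨(μh ⊗ₘ κ').map MeasurableEquiv.prodAssoc,
    isLiftedMartingaleCoupling_map_compProd hμ hν (disintegrate ▸ Q_snd) mean, fun u _ ↦ ?_⟩
  obtain ⟨S, hS, mass_eq⟩ := exists_isShadow_liftCurve hμ hν hμν u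
  have := isFiniteMeasure_of_le ν hS.2.1
  rw [liftedCouplingCurve_map_prodAssoc, ← disintegrate,
    snd_restrict_fst_le_eq_of_tendsto hPQ Q_fst mass_eq fun v hv ↦
      hyperfilter_le (eventually_snd_restrict_compProd_le hμ hν hκ hv hS)]
  exact hS

end Existence

theorem liftedShadowCoupling_exists_unique_general {μh : Measure (ℝ × ℝ)} {ν : Measure ℝ}
    [IsProbabilityMeasure μh] [NullSingletonClass (μh.map Prod.fst)] [IsFiniteMeasure ν]
    (htime : ∀ᵐ q ∂μh, q.1 ∈ Set.Icc (0 : ℝ) 1) (hμ : Integrable Prod.snd μh)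
    (hν : Integrable id ν) (hμν : ConvexOrder (μh.map Prod.snd) ν) :
    ∃! πh, IsLiftedShadowCoupling πh μh ν := by
  obtain ⟨πh, hπh⟩ := exists_isLiftedShadowCoupling hμ hν hμν
  exact ⟨πh, hπh, fun π' hπ' ↦ hπ'.unique htime hμ hν hπh⟩

/-- Existence and uniqueness of the lifted shadow coupling: given a lift
`μ̂ ∈ Π(λ, μ)` of `μ ≤_c ν`, there is a unique lifted martingale coupling `π̂` of `μ̂` and
`ν` such that for every `u ∈ [0,1]` the `y`-marginal of `π̂` restricted to `[0,u] × ℝ × ℝ`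
is the shadow `S^ν(μ_{[0,u]})`. -/
theorem liftedShadowCoupling_exists_unique (μ ν : Measure ℝ)
    [IsProbabilityMeasure μ] [IsProbabilityMeasure ν]
    (hμ : Integrable (fun x : ℝ => x) μ) (hν : Integrable (fun x : ℝ => x) ν)
    (hμν : ConvexOrder μ ν)
    (μh : Measure (ℝ × ℝ))
    (hlift₁ : μh.map Prod.fst = volume.restrict (Set.Icc (0:ℝ) 1))
    (hlift₂ : μh.map Prod.snd = μ) :
    ∃! πh : Measure (ℝ × ℝ × ℝ),
      IsLiftedMartingaleCoupling πh μh ν ∧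
        ∀ u ∈ Set.Icc (0:ℝ) 1, IsShadow (liftCurve μh u) ν (liftedCouplingCurve πh u) := by
  subst hlift₂
  have : IsProbabilityMeasure μh := Measure.isProbabilityMeasure_of_map Prod.snd
  have : NullSingletonClass (μh.map Prod.fst) := hlift₁ ▸ inferInstance
  have htime : ∀ᵐ q ∂μh, q.1 ∈ Set.Icc (0 : ℝ) 1 :=
    ae_of_ae_map measurable_fst.aemeasurable (hlift₁ ▸ ae_restrict_mem measurableSet_Icc)
  exact liftedShadowCoupling_exists_unique_general htime
    ((integrable_map_measure aestronglyMeasurable_id measurable_snd.aemeasurable).1 hμ) hν hμν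
end

section
/- Suppose μ and ν are finitely supported probability measures on ℝ in convex order with conv(supp(μ)) ∩ supp(ν) = ∅. Then for any martingale coupling π ∈ M(μ,ν), supp(π) ⊆ supp(μ) × supp(ν), and the sunset coupling π_sun satisfies supp(π_sun) = supp(μ) × supp(ν). Consequently, if a cost function c makes π_sun optimal for the martingale transport problem inf_{π ∈ M(μ,ν)} ∫ c dπ, then every element of M(μ,ν) is optimal. -/
open MeasureTheory

/-- The support of a measure on a topological space. -/
def msupport {α : Type*} [TopologicalSpace α] [MeasurableSpace α] (μ : Measure α) : Set α :=
  {x | ∀ U : Set α, IsOpen U → x ∈ U → 0 < μ U}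


def IsMartingaleCoupling (π : Measure (ℝ × ℝ)) (μ ν : Measure ℝ) : Prop :=
  π.map Prod.fst = μ ∧ π.map Prod.snd = ν ∧
    ∀ f : ℝ → ℝ, Measurable f → (∀ x, |f x| ≤ 1) →
      ∫ p, (p.2 - p.1) * f p.1 ∂π = 0

/-!
Let `l < r` be such that `μ` lives in the gap `(l, r)` of `ν`. Every measure in the gap is dominated
in convex order by every measure outside it with the same mass and mean, because a convex function
lies below its secant line on `[l, r]` and above it elsewhere. Hence a shadow in `ν` of a measure in
the gap cannot be improved by moving mass towards an intermediate point: between two of its atoms it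
has exhausted `ν`.

Fix an atom `y` of `ν`, say `y ≤ l`, and two times `s < t` such that the sunset coupling has started
to fill `y` at time `s` and has not finished at time `t`. By time `s` it has also charged the other
side of the gap, so atoms between `y` and the gap are already full at time `s`, while atoms beyond
`y` are still untouched at time `t`. So everything that moves left during `(s, t]` goes to `y`. The
product lift releases mass from every atom `x` of `μ` during `(s, t]`, and by the martingale
property some of it moves left; hence `(x, y)` is charged.

Optimality spreads to all couplings because a coupling `π` supported in the finite support of an
optimizer `π₀` satisfies `ε • π ≤ π₀` for some `ε > 0`, and `π₀ - ε • π + ε • π₀` is a competitor.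
-/

open Set Filter
open scoped Topology ENNReal

section Support

variable {α : Type*} [TopologicalSpace α] [MeasurableSpace α] {μ : Measure α}

theorem msupport_eq_support (μ : Measure α) : msupport μ = μ.support := by
  ext x
  rw [(nhds_basis_opens x).mem_measureSupport]
  exact forall_congr' fun U => ⟨fun h hU => h hU.2 hU.1, fun h ho hx => h ⟨hx, ho⟩⟩

theorem msupport_subset_of_isClosed {F : Set α} (hF : IsClosed F) (hμF : μ Fᶜ = 0) :
    msupport μ ⊆ F :=
  msupport_eq_support μ ▸ Measure.support_subset_of_isClosed hF hμF

theorem mem_msupport_of_measure_singleton_pos {x : α} (hx : 0 < μ {x}) : x ∈ msupport μ :=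
  fun _ _ hxU => hx.trans_le (measure_mono (singleton_subset_iff.2 hxU))

theorem measure_compl_msupport [HereditarilyLindelofSpace α] : μ (msupport μ)ᶜ = 0 :=
  msupport_eq_support μ ▸ Measure.measure_compl_support

theorem measure_singleton_pos_of_mem_msupport [HereditarilyLindelofSpace α] [T1Space α]
    (hfin : (msupport μ).Finite) {x : α} (hx : x ∈ msupport μ) : 0 < μ {x} := by
  refine pos_iff_ne_zero.2 fun hμx => ?_
  have hopen : IsOpen (msupport μ \ {x})ᶜ := hfin.sdiff.isClosed.isOpen_compl
  have hnull : μ (msupport μ \ {x})ᶜ = 0 := by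
    rw [sdiff_eq, compl_inter, compl_compl]
    exact measure_union_null measure_compl_msupport hμx
  exact (hx _ hopen (by simp)).ne' hnull

theorem integrable_of_finite_msupport [HereditarilyLindelofSpace α] [MeasurableSingletonClass α]
    [IsFiniteMeasure μ] (hfin : (msupport μ).Finite) (f : α → ℝ) : Integrable f μ := by
  rw [← Measure.restrict_eq_self_of_ae_mem (s := msupport μ) (μ := μ) measure_compl_msupport]
  exact IntegrableOn.of_finite hfin

end Support

section Atoms

variable {α : Type*} [MeasurableSpace α] {μ ν : Measure α} {S : Set α}

theorem exists_measure_singleton_pos (hS : S.Countable) (hμS : μ Sᶜ = 0) {A : Set α}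
    (hA : 0 < μ A) : ∃ x ∈ A, 0 < μ {x} := by
  contrapose! hA
  have hAS : μ (A ∩ S) = 0 := by
    rw [← biUnion_of_singleton (A ∩ S), measure_biUnion_null_iff (hS.mono inter_subset_right)]
    exact fun x hx => nonpos_iff_eq_zero.1 (hA x hx.1)
  exact (measure_inter_conull hμS ▸ hAS).le

theorem measure_le_of_singleton_le [MeasurableSingletonClass α] (hS : S.Countable)
    (hμS : μ Sᶜ = 0) (hle : ∀ x ∈ S, μ {x} ≤ ν {x}) : μ ≤ ν := by
  refine Measure.le_intro fun A _ _ => ?_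
  have hsum (ρ : Measure α) : ρ (A ∩ S) = ∑' x : ↥(A ∩ S), ρ {x.1} := by
    rw [← measure_biUnion (hS.mono inter_subset_right) (pairwiseDisjoint_singleton' _)
      fun x _ => measurableSet_singleton x, biUnion_of_singleton]
  calc μ A = μ (A ∩ S) := (measure_inter_conull hμS).symm
    _ ≤ ν (A ∩ S) := by
        rw [hsum, hsum]
        exact ENNReal.tsum_le_tsum fun x => hle x x.2.2
    _ ≤ ν A := measure_mono inter_subset_left

theorem add_smul_dirac_le [MeasurableSingletonClass α] (hle : μ ≤ ν) {x : α} {c : ℝ≥0∞}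
    (hc : μ {x} + c ≤ ν {x}) : μ + c • Measure.dirac x ≤ ν := by
  refine Measure.le_intro fun A hA _ => ?_
  by_cases hx : x ∈ A
  · have hsplit (ρ : Measure α) : ρ (A \ {x}) + ρ {x} = ρ A := by
      rw [← measure_sdiff_add_inter A (measurableSet_singleton x),
        inter_eq_right.2 (singleton_subset_iff.2 hx)]
    calc (μ + c • Measure.dirac x) A = μ (A \ {x}) + (μ {x} + c) := by
          simp [← add_assoc, hsplit, hx]
      _ ≤ ν (A \ {x}) + ν {x} := add_le_add (hle _) hc
      _ = ν A := hsplit ν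
  · simpa [hA, hx] using hle A

theorem smul_dirac_add_smul_dirac_le [MeasurableSingletonClass α] {x y : α} {c d : ℝ≥0∞}
    (hxy : x ≠ y) (hc : c ≤ μ {x}) (hd : d ≤ μ {y}) :
    c • Measure.dirac x + d • Measure.dirac y ≤ μ := by
  refine add_smul_dirac_le ?_ (by simpa [hxy] using hd)
  rw [← zero_add (c • Measure.dirac x)]
  exact add_smul_dirac_le (Measure.zero_le μ) (by simpa using hc)

theorem integral_smul_dirac_add_smul_dirac [MeasurableSingletonClass α] {c d : ℝ≥0∞}
    (hc : c ≠ ∞) (hd : d ≠ ∞) (x y : α) (f : α → ℝ) :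
    ∫ z, f z ∂(c • Measure.dirac x + d • Measure.dirac y) = c.toReal * f x + d.toReal * f y := by
  rw [integral_add_measure ((integrable_dirac enorm_lt_top).smul_measure hc)
    ((integrable_dirac enorm_lt_top).smul_measure hd), integral_smul_measure,
    integral_smul_measure, integral_dirac, integral_dirac, smul_eq_mul, smul_eq_mul]

theorem exists_le_forall_integral_eq_convexCombo [MeasurableSingletonClass α] {z w : α}
    (hzw : z ≠ w) {c : ℝ≥0∞} (hc : c ≠ ∞) (hz : c ≤ μ {z}) (hw : c ≤ μ {w}) {a : ℝ}
    (ha : a ∈ Icc 0 1) :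
    ∃ ρ ≤ μ, ∀ f : α → ℝ, ∫ x, f x ∂ρ = c.toReal * ((1 - a) * f z + a * f w) := by
  have hle {b : ℝ} (hb : b ≤ 1) : c * ENNReal.ofReal b ≤ c :=
    mul_le_of_le_one_right' (ENNReal.ofReal_le_one.2 hb)
  have htop (b : ℝ) : c * ENNReal.ofReal b ≠ ∞ := ENNReal.mul_ne_top hc ENNReal.ofReal_ne_top
  refine ⟨_, smul_dirac_add_smul_dirac_le hzw ((hle (sub_le_self 1 ha.1)).trans hz)
    ((hle ha.2).trans hw), fun f => ?_⟩
  rw [integral_smul_dirac_add_smul_dirac (htop _) (htop _), ENNReal.toReal_mul,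
    ENNReal.toReal_mul, ENNReal.toReal_ofReal (sub_nonneg.2 ha.2), ENNReal.toReal_ofReal ha.1]
  ring

theorem exists_smul_le_of_msupport_subset [TopologicalSpace α] [HereditarilyLindelofSpace α]
    [T1Space α] [MeasurableSingletonClass α] [IsFiniteMeasure μ] (hfin : (msupport ν).Finite)
    (hsub : msupport μ ⊆ msupport ν) : ∃ ε : ℝ≥0∞, ε ≠ 0 ∧ ε ≠ ∞ ∧ ε • μ ≤ ν := by
  have hsmall : ∀ᶠ ε in 𝓝[>] (0 : ℝ≥0∞), ∀ x ∈ msupport ν, ε * μ {x} ≤ ν {x} := by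
    refine (eventually_all_finite hfin).2 fun x hx => ?_
    have hlim : Tendsto (fun ε => ε * μ {x}) (𝓝[>] 0) (𝓝 0) := by
      simpa using (ENNReal.Tendsto.mul_const (b := μ {x}) tendsto_id
        (.inr (measure_ne_top μ _))).mono_left (nhdsWithin_le_nhds (a := 0) (s := Ioi 0))
    exact (hlim.eventually_lt_const (measure_singleton_pos_of_mem_msupport hfin hx)).mono
      fun _ => le_of_lt
  have hfinite : ∀ᶠ ε in 𝓝[>] (0 : ℝ≥0∞), ε < ∞ :=
    (eventually_lt_nhds ENNReal.zero_lt_top).filter_mono nhdsWithin_le_nhds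
  obtain ⟨ε, hε, hεtop, hε0⟩ :=
    (hsmall.and (hfinite.and self_mem_nhdsWithin)).exists
  refine ⟨ε, ne_of_gt hε0, hεtop.ne, measure_le_of_singleton_le hfin.countable ?_ hε⟩
  have hμ : μ (msupport ν)ᶜ = 0 :=
    measure_mono_null (compl_subset_compl.2 hsub) measure_compl_msupport
  simp [hμ]

theorem exists_lt_measure_Iic_pos_measure_Ioi_pos [LinearOrder α] [DenselyOrdered α]
    [TopologicalSpace α] [OrderTopology α] [HereditarilyLindelofSpace α] [NullSingletonClass μ]
    (hμ : μ ≠ 0) {I : Set α} [hI : I.OrdConnected] (hIc : IsClosed I) (hμI : μ Iᶜ = 0) :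
    ∃ s ∈ I, ∃ t ∈ I, s < t ∧ 0 < μ (Iic s) ∧ 0 < μ (Ioi t) := by
  have hnt : μ.support.Nontrivial := by
    refine not_subsingleton_iff.1 fun hsub => hμ ?_
    rw [← Measure.measure_univ_eq_zero, ← union_compl_self μ.support]
    exact measure_union_null (hsub.measure_zero μ) Measure.measure_compl_support
  have hsupp : μ.support ⊆ I := Measure.support_subset_of_isClosed hIc hμI
  obtain ⟨u, hu, v, hv, huv⟩ := hnt.exists_lt
  obtain ⟨t, hut, htv⟩ := exists_between huv
  obtain ⟨s, hus, hst⟩ := exists_between hut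
  have huvI : Icc u v ⊆ I := hI.out (hsupp hu) (hsupp hv)
  exact ⟨s, huvI ⟨hus.le, (hst.trans htv).le⟩, t, huvI ⟨hut.le, htv.le⟩, hst,
    (Measure.mem_support_iff_forall u).1 hu _ (Iic_mem_nhds hus),
    (Measure.mem_support_iff_forall v).1 hv _ (Ioi_mem_nhds htv)⟩

end Atoms

section ConvexOrder

theorem exists_affine_ge_on_Icc_le_off_Ioo {φ : ℝ → ℝ} (hφ : ConvexOn ℝ univ φ) {l r : ℝ}
    (hlr : l < r) :
    ∃ A B : ℝ, (∀ x ∈ Icc l r, φ x ≤ A * x + B) ∧ ∀ x ∉ Ioo l r, A * x + B ≤ φ x := by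
  have hsecant {x y z : ℝ} (hxy : x < y) (hyz : y < z) :
      (z - x) * φ y ≤ (z - y) * φ x + (y - x) * φ z :=
    hφ.secant_mono_aux1 (mem_univ x) (mem_univ z) hxy hyz
  have hpos : 0 < r - l := sub_pos.2 hlr
  have hline (x : ℝ) : (φ r - φ l) / (r - l) * x + (r * φ l - l * φ r) / (r - l) =
      ((r - x) * φ l + (x - l) * φ r) / (r - l) := by
    field_simp
    ring
  refine ⟨(φ r - φ l) / (r - l), (r * φ l - l * φ r) / (r - l), fun x hx => ?_, fun x hx => ?_⟩
  · rw [hline, le_div_iff₀ hpos]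
    rcases hx.1.eq_or_lt with rfl | hlx
    · linarith
    rcases hx.2.eq_or_lt with rfl | hxr
    · linarith
    linarith [hsecant hlx hxr]
  · rw [hline, div_le_iff₀ hpos]
    rcases lt_trichotomy x l with hxl | rfl | hlx
    · linarith [hsecant hxl hlr]
    · linarith
    rcases (not_lt.1 fun hxr => hx ⟨hlx, hxr⟩).eq_or_lt with rfl | hrx
    · linarith
    · linarith [hsecant hlr hrx]

theorem integral_const_mul_id_add {ρ : Measure ℝ} [IsFiniteMeasure ρ]
    (hρ : Integrable (fun x => x) ρ) (A B : ℝ) :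
    ∫ x, (A * x + B) ∂ρ = A * ∫ x, x ∂ρ + B * ρ.real univ := by
  rw [integral_add (hρ.const_mul A) (integrable_const B), integral_const_mul, integral_const,
    smul_eq_mul, mul_comm B]

variable {α ν η : Measure ℝ} {l r : ℝ}

theorem ConvexOrder.measureReal_univ_eq [IsFiniteMeasure α] [IsFiniteMeasure η]
    (h : ConvexOrder α η) : α.real univ = η.real univ := by
  have hle (c : ℝ) : α.real univ * c ≤ η.real univ * c := by
    simpa using h (fun _ => c) (convexOn_const c convex_univ) (integrable_const c)
      (integrable_const c)
  linarith [hle 1, hle (-1)]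

theorem ConvexOrder.integral_id_eq (h : ConvexOrder α η) (hα : Integrable (fun x => x) α)
    (hη : Integrable (fun x => x) η) : ∫ x, x ∂α = ∫ x, x ∂η := by
  refine le_antisymm (h _ (convexOn_id convex_univ) hα hη) ?_
  have hneg := h (fun x => -x) (concaveOn_id convex_univ).neg hα.neg hη.neg
  rwa [integral_neg, integral_neg, neg_le_neg_iff] at hneg

-- The secant line of `φ` over `[l, r]` separates the two integrals.
theorem convexOrder_of_ae_mem_Icc_of_ae_notMem_Ioo [IsFiniteMeasure α] [IsFiniteMeasure η]
    (hlr : l < r) (hα : ∀ᵐ x ∂α, x ∈ Icc l r) (hη : ∀ᵐ y ∂η, y ∉ Ioo l r)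
    (hηid : Integrable (fun y => y) η) (hmass : α.real univ = η.real univ)
    (hmean : ∫ x, x ∂α = ∫ y, y ∂η) : ConvexOrder α η := by
  intro φ hφ hφα hφη
  obtain ⟨A, B, hin, hout⟩ := exists_affine_ge_on_Icc_le_off_Ioo hφ hlr
  have hαid : Integrable (fun x => x) α := .of_mem_Icc l r aemeasurable_id' hα
  calc ∫ x, φ x ∂α ≤ ∫ x, (A * x + B) ∂α :=
        integral_mono_ae hφα ((hαid.const_mul A).add (integrable_const B)) (hα.mono hin)
    _ = ∫ y, (A * y + B) ∂η := by
        rw [integral_const_mul_id_add hαid, integral_const_mul_id_add hηid, hmass, hmean]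
    _ ≤ ∫ y, φ y ∂η :=
        integral_mono_ae ((hηid.const_mul A).add (integrable_const B)) hφη (hη.mono hout)

variable [IsFiniteMeasure α] [IsFiniteMeasure ν]

theorem IsShadow.integral_le_of_exchange (h : IsShadow α ν η)
    (hlr : l < r) (hα : ∀ᵐ x ∂α, x ∈ Icc l r) (hν : ∀ᵐ y ∂ν, y ∉ Ioo l r)
    (hνid : Integrable (fun y => y) ν) {ρ κ : Measure ℝ} (hρ : ρ ≤ η) (hκ : η + κ ≤ ν)
    (hmass : ρ.real univ = κ.real univ) (hmean : ∫ y, y ∂ρ = ∫ y, y ∂κ) {φ : ℝ → ℝ}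
    (hφ : ConvexOn ℝ univ φ) (hφν : Integrable φ ν) : ∫ y, φ y ∂ρ ≤ ∫ y, φ y ∂κ := by
  obtain ⟨hαη, hην, hmin⟩ := h
  have hκν : κ ≤ ν := (Measure.le_add_left le_rfl).trans hκ
  have hη'ν : η - ρ + κ ≤ ν := (add_le_add_left Measure.sub_le κ).trans hκ
  have : IsFiniteMeasure η := isFiniteMeasure_of_le ν hην
  have : IsFiniteMeasure ρ := isFiniteMeasure_of_le η hρ
  have : IsFiniteMeasure κ := isFiniteMeasure_of_le ν hκν
  have : IsFiniteMeasure (η - ρ) := isFiniteMeasure_of_le η Measure.sub_le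
  have hsum : η - ρ + κ + ρ = η + κ := by
    rw [add_right_comm, Measure.sub_add_cancel_of_le hρ]
  have hint {f : ℝ → ℝ} (hf : Integrable f ν) :
      ∫ y, f y ∂(η - ρ + κ) + ∫ y, f y ∂ρ = ∫ y, f y ∂η + ∫ y, f y ∂κ := by
    rw [← integral_add_measure (hf.mono_measure hη'ν) (hf.mono_measure (hρ.trans hην)), hsum,
      integral_add_measure (hf.mono_measure hην) (hf.mono_measure hκν)]
  have hmass' : (η - ρ + κ).real univ + ρ.real univ = η.real univ + κ.real univ := by
    rw [← measureReal_add_apply, hsum, measureReal_add_apply]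
  have hαη' : ConvexOrder α (η - ρ + κ) := by
    refine convexOrder_of_ae_mem_Icc_of_ae_notMem_Ioo hlr hα (ae_mono hη'ν hν)
      (hνid.mono_measure hη'ν) ?_ ?_
    · linarith [hαη.measureReal_univ_eq]
    · linarith [hint hνid, hαη.integral_id_eq (.of_mem_Icc l r aemeasurable_id' hα)
        (hνid.mono_measure hην)]
  linarith [hint hφν, hmin _ hαη' hη'ν φ hφ (hφν.mono_measure hην) (hφν.mono_measure hη'ν)]

/-- Strictly between any two of its atoms, `η` has all the mass that `ν` has there. This is the
trace that minimality of a shadow `η` of a measure living in a gap of `ν` leaves on its atoms. -/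
def FillsBetween (η ν : Measure ℝ) : Prop :=
  ∀ ⦃z y w⦄, Sbtw ℝ z y w → 0 < η {z} → 0 < η {w} → η {y} = ν {y}

-- Otherwise some mass of `η` could be moved from `z` and `w` to `y`, which lowers `∫ |· - y| dη`.
theorem IsShadow.fillsBetween (h : IsShadow α ν η) (hlr : l < r)
    (hα : ∀ᵐ x ∂α, x ∈ Icc l r) (hν : ∀ᵐ y ∂ν, y ∉ Ioo l r)
    (hνid : Integrable (fun y => y) ν) : FillsBetween η ν := by
  intro z y w hzyw hz hw
  by_contra hne
  have hlt : η {y} < ν {y} := lt_of_le_of_ne (h.2.1 _) hne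
  obtain ⟨⟨a, ⟨ha0, ha1⟩, hy⟩, hzw⟩ := sbtw_iff_mem_image_Ioo_and_ne.1 hzyw
  obtain ⟨c, hc0, hc⟩ := exists_between (lt_min hz (lt_min hw (tsub_pos_of_lt hlt)))
  obtain ⟨hcz, hcw, hcy⟩ : c ≤ η {z} ∧ c ≤ η {w} ∧ c ≤ ν {y} - η {y} := by
    simpa only [le_min_iff] using hc.le
  have hctop : c ≠ ∞ := hc.ne_top
  obtain ⟨ρ, hρ, hρint⟩ :=
    exists_le_forall_integral_eq_convexCombo hzw hctop hcz hcw (Ioo_subset_Icc_self ⟨ha0, ha1⟩)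
  have hpoint : η + c • Measure.dirac y ≤ ν :=
    add_smul_dirac_le h.2.1 <| (add_le_add_right hcy _).trans (add_tsub_cancel_of_le hlt.le).le
  have hmass : ρ.real univ = (c • Measure.dirac y).real univ := by
    simpa [measureReal_def] using hρint fun _ => 1
  have hmean : ∫ x, x ∂ρ = ∫ x, x ∂(c • Measure.dirac y) := by
    rw [hρint, ← hy, AffineMap.lineMap_apply_ring', integral_smul_measure, integral_dirac,
      smul_eq_mul]
    ring
  have hdist := h.integral_le_of_exchange hlr hα hν hνid hρ hpoint hmass hmean
    (convexOn_dist y convex_univ) (hνid.sub (integrable_const y)).abs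
  rw [hρint, integral_smul_measure, integral_dirac, dist_self, smul_zero] at hdist
  have hzy : 0 < (1 - a) * dist z y := mul_pos (sub_pos.2 ha1) (dist_pos.2 hzyw.left_ne)
  have hwy : 0 ≤ a * dist w y := by positivity
  have hcpos : 0 < c.toReal := ENNReal.toReal_pos hc0.ne' hctop
  exact hdist.not_gt (mul_pos hcpos (add_pos_of_pos_of_nonneg hzy hwy))

end ConvexOrder

section FillsBetween

theorem sbtw_or_sbtw_of_le_iff_le {𝕜 : Type*} [Field 𝕜] [LinearOrder 𝕜] [IsStrictOrderedRing 𝕜]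
    {l v y w : 𝕜} (hvy : v ≠ y) (hv : v ≤ l ↔ y ≤ l) (hw : w ≤ l ↔ ¬ y ≤ l) :
    Sbtw 𝕜 v y w ∨ Sbtw 𝕜 y v w := by
  by_cases hyl : y ≤ l
  · have hlw : l < w := not_le.1 fun hwl => hw.1 hwl hyl
    exact hvy.lt_or_gt.imp (.of_lt_of_lt · (hyl.trans_lt hlw))
      (.of_lt_of_lt · ((hv.2 hyl).trans_lt hlw))
  · have hwl : w ≤ l := hw.2 hyl
    exact hvy.symm.lt_or_gt.imp (fun h => (Sbtw.of_lt_of_lt (hwl.trans_lt (not_le.1 hyl)) h).symm)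
      fun h => (Sbtw.of_lt_of_lt (hwl.trans_lt (not_le.1 (mt hv.1 hyl))) h).symm

theorem FillsBetween.singleton_le {η η' ν : Measure ℝ} (h : FillsBetween η ν)
    (h' : FillsBetween η' ν) (hle : η ≤ η') (hη'ν : η' ≤ ν) {l v y w : ℝ} (hvy : v ≠ y)
    (hv : v ≤ l ↔ y ≤ l) (hw : w ≤ l ↔ ¬ y ≤ l) (hηw : 0 < η {w}) (hηy : 0 < η {y})
    (hlt : η' {y} < ν {y}) : η' {v} ≤ η {v} := by
  rcases sbtw_or_sbtw_of_le_iff_le hvy hv hw with hvyw | hyvw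
  · have hnull : ¬ 0 < η' {v} := fun hpos => hlt.ne (h' hvyw hpos (hηw.trans_le (hle _)))
    exact (not_lt.1 hnull).trans bot_le
  · exact (hη'ν _).trans_eq (h hyvw hηy hηw).symm

end FillsBetween

section Transport

variable {Ω X Y : Type*} [MeasurableSpace Ω] [MeasurableSpace X] [MeasurableSpace Y]
  {π : Measure (Ω × X × Y)} {B C : Set (Ω × X)} {A : Set Y}

/-- The distribution over `Y` of the mass that the lifted coupling `π` moves out of the set `B` of
(time, source) pairs. -/
noncomputable def transported (π : Measure (Ω × X × Y)) (B : Set (Ω × X)) : Measure Y :=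
  (π.restrict ((fun p => (p.1, p.2.1)) ⁻¹' B)).map fun p => p.2.2

theorem transported_apply (hA : MeasurableSet A) :
    transported π B A = π {p | p.2.2 ∈ A ∧ (p.1, p.2.1) ∈ B} := by
  have hmeas : Measurable fun p : Ω × X × Y => p.2.2 := by fun_prop
  rw [transported, Measure.map_apply hmeas hA, Measure.restrict_apply (hmeas hA)]
  rfl

theorem transported_mono (hBC : B ⊆ C) : transported π B ≤ transported π C :=
  Measure.map_mono (Measure.restrict_mono (preimage_mono hBC) le_rfl) (by fun_prop)

theorem transported_union (hBC : Disjoint B C) (hC : MeasurableSet C) :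
    transported π (B ∪ C) = transported π B + transported π C := by
  have hproj : Measurable fun p : Ω × X × Y => (p.1, p.2.1) := by fun_prop
  rw [transported, transported, transported, ← Measure.map_add _ _ (by fun_prop),
    ← Measure.restrict_union (hBC.preimage _) (hproj hC), preimage_union]

theorem liftedCouplingCurve_eq_transported (πh : Measure (ℝ × ℝ × ℝ)) (u : ℝ) :
    liftedCouplingCurve πh u = transported πh (Iic u ×ˢ univ) := by
  simp only [liftedCouplingCurve, transported, mem_prod, mem_Iic, mem_univ, and_true,
    preimage]

namespace IsLiftedMartingaleCoupling

variable {πh : Measure (ℝ × ℝ × ℝ)} {μh : Measure (ℝ × ℝ)} {ν : Measure ℝ} {B : Set (ℝ × ℝ)}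

theorem transported_le (h : IsLiftedMartingaleCoupling πh μh ν) : transported πh B ≤ ν := by
  rw [← h.2.1]
  exact Measure.map_mono Measure.restrict_le_self (by fun_prop)

theorem transported_univ (h : IsLiftedMartingaleCoupling πh μh ν) (hB : MeasurableSet B) :
    transported πh B univ = μh B := by
  rw [transported_apply .univ, ← h.1, Measure.map_apply (by fun_prop) hB]
  simp [preimage]

theorem ae_source (h : IsLiftedMartingaleCoupling πh μh ν) {P : ℝ × ℝ → Prop}
    (hμ : ∀ᵐ q ∂μh, P q) : ∀ᵐ p ∂πh, P (p.1, p.2.1) := by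
  rw [← h.1] at hμ
  exact ae_of_ae_map (by fun_prop) hμ

theorem ae_target (h : IsLiftedMartingaleCoupling πh μh ν) {P : ℝ → Prop}
    (hν : ∀ᵐ y ∂ν, P y) : ∀ᵐ p ∂πh, P p.2.2 := by
  rw [← h.2.1] at hν
  exact ae_of_ae_map (by fun_prop) hν

theorem isFiniteMeasure (h : IsLiftedMartingaleCoupling πh μh ν) [IsFiniteMeasure μh] :
    IsFiniteMeasure πh := by
  have : IsFiniteMeasure (πh.map fun p => (p.1, p.2.1)) := h.1 ▸ inferInstance
  exact Measure.isFiniteMeasure_of_map (f := fun p => (p.1, p.2.1)) (by fun_prop)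

theorem integrable_sub (h : IsLiftedMartingaleCoupling πh μh ν) [IsFiniteMeasure μh] {l r : ℝ}
    (hμ : ∀ᵐ q ∂μh, q.2 ∈ Ioo l r) (hνid : Integrable (fun y => y) ν) :
    Integrable (fun p => p.2.2 - p.2.1) πh := by
  have := h.isFiniteMeasure
  have hsource : Integrable (fun p => p.2.1) πh :=
    .of_mem_Icc l r (by fun_prop) ((h.ae_source hμ).mono fun _ hp => Ioo_subset_Icc_self hp)
  rw [← h.2.1] at hνid
  exact (hνid.comp_measurable (by fun_prop)).sub hsource

theorem setIntegral_sub_eq_zero (h : IsLiftedMartingaleCoupling πh μh ν) (hB : MeasurableSet B) :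
    ∫ p in (fun p => (p.1, p.2.1)) ⁻¹' B, (p.2.2 - p.2.1) ∂πh = 0 := by
  have hproj : Measurable fun p : ℝ × ℝ × ℝ => (p.1, p.2.1) := by fun_prop
  rw [← integral_indicator (hproj hB),
    ← h.2.2 (B.indicator 1) (measurable_one.indicator hB) fun q => ?_]
  · refine integral_congr_ae (.of_forall fun p => ?_)
    by_cases hp : (p.1, p.2.1) ∈ B <;> simp [hp]
  · by_cases hq : q ∈ B <;> simp [hq]

-- Mass leaving `B` from inside the gap moves by zero on average, so it lands on both sides of it.
theorem transported_side_pos (h : IsLiftedMartingaleCoupling πh μh ν) [IsFiniteMeasure μh]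
    {l r : ℝ} (hμ : ∀ᵐ q ∂μh, q.2 ∈ Ioo l r) (hν : ∀ᵐ y ∂ν, y ∉ Ioo l r)
    (hνid : Integrable (fun y => y) ν) (hB : MeasurableSet B) (hμB : μh B ≠ 0) (P : Prop) :
    0 < transported πh B {y | y ≤ l ↔ P} := by
  have := h.isFiniteMeasure
  set ρ := πh.restrict ((fun p => (p.1, p.2.1)) ⁻¹' B) with hρdef
  have hρ : ρ ≠ 0 := by
    rintro hρ
    rw [← h.transported_univ hB, transported, ← hρdef, hρ] at hμB
    simp at hμB
  have hf : Integrable (fun p => p.2.2 - p.2.1) ρ := (h.integrable_sub hμ hνid).restrict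
  have havg : ⨍ p, (p.2.2 - p.2.1) ∂ρ = 0 := by
    rw [average_eq, h.setIntegral_sub_eq_zero hB, smul_zero]
  have hdown : 0 < ρ {p | p.2.2 ≤ p.2.1} := by
    simpa only [havg, sub_nonpos] using measure_le_average_pos hρ hf
  have hup : 0 < ρ {p | p.2.1 ≤ p.2.2} := by
    simpa only [havg, sub_nonneg] using measure_average_le_pos hρ hf
  have hsource : ∀ᵐ p ∂ρ, p.2.1 ∈ Ioo l r := ae_restrict_of_ae (h.ae_source hμ)
  have htarget : ∀ᵐ p ∂ρ, p.2.2 ∉ Ioo l r := ae_restrict_of_ae (h.ae_target hν)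
  suffices 0 < ρ {p | p.2.2 ≤ l ↔ P} by
    rwa [transported, Measure.map_apply (by fun_prop) (by measurability)]
  by_cases hP : P <;> simp only [hP, iff_true, iff_false, not_le]
  · refine hdown.trans_le (measure_mono_ae ?_)
    filter_upwards [hsource, htarget] with p hx hy (hyx : p.2.2 ≤ p.2.1)
    exact not_lt.1 fun hly => hy ⟨hly, hyx.trans_lt hx.2⟩
  · refine hup.trans_le (measure_mono_ae ?_)
    filter_upwards [hsource] with p hx (hxy : p.2.1 ≤ p.2.2)
    exact hx.1.trans_le hxy

end IsLiftedMartingaleCoupling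

end Transport

section ShadowLift

/-- `πh` is the shadow coupling with target `ν` associated with the lift `μh`, a coupling of the
uniform distribution on `[0, 1]` with the source distribution: the mass that has left the source by
time `u` is embedded in `ν` as its shadow. -/
structure IsShadowLift (πh : Measure (ℝ × ℝ × ℝ)) (μh : Measure (ℝ × ℝ)) (ν : Measure ℝ) :
    Prop where
  fst_eq : μh.fst = volume.restrict (Icc 0 1)
  coupling : IsLiftedMartingaleCoupling πh μh ν
  isShadow : ∀ u ∈ Icc (0 : ℝ) 1, IsShadow (liftCurve μh u) ν (liftedCouplingCurve πh u)

namespace IsShadowLift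

variable {πh : Measure (ℝ × ℝ × ℝ)} {μh : Measure (ℝ × ℝ)} {μ ν : Measure ℝ} {l r x y : ℝ}

theorem isFiniteMeasure (h : IsShadowLift πh μh ν) : IsFiniteMeasure μh := by
  have : IsFiniteMeasure (μh.map Prod.fst) := by
    rw [← Measure.fst, h.fst_eq]
    infer_instance
  exact Measure.isFiniteMeasure_of_map measurable_fst.aemeasurable

theorem fillsBetween (h : IsShadowLift πh μh ν) [IsFiniteMeasure ν] (hlr : l < r)
    (hμ : ∀ᵐ q ∂μh, q.2 ∈ Ioo l r) (hν : ∀ᵐ y ∂ν, y ∉ Ioo l r)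
    (hνid : Integrable (fun y => y) ν) {u : ℝ} (hu : u ∈ Icc (0 : ℝ) 1) :
    FillsBetween (liftedCouplingCurve πh u) ν := by
  have := h.isFiniteMeasure
  have hcurve : ∀ᵐ x ∂liftCurve μh u, x ∈ Icc l r :=
    (ae_map_iff measurable_snd.aemeasurable measurableSet_Icc).2 <|
      ae_restrict_of_ae (hμ.mono fun _ hq => Ioo_subset_Icc_self hq)
  have : IsFiniteMeasure (liftCurve μh u) := by
    rw [liftCurve]
    infer_instance
  exact (h.isShadow u hu).fillsBetween hlr hcurve hν hνid

theorem exists_lt_liftedCouplingCurve_pos_lt (h : IsShadowLift πh μh ν) (hy : 0 < ν {y}) :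
    ∃ s ∈ Icc (0 : ℝ) 1, ∃ t ∈ Icc (0 : ℝ) 1, s < t ∧ 0 < liftedCouplingCurve πh s {y} ∧
      liftedCouplingCurve πh t {y} < ν {y} := by
  set κ := (πh.restrict {p | p.2.2 ∈ ({y} : Set ℝ)}).map Prod.fst
  have hκ {T : Set ℝ} (hT : MeasurableSet T) : κ T = transported πh (T ×ˢ univ) {y} := by
    rw [transported_apply (measurableSet_singleton y), Measure.map_apply measurable_fst hT,
      Measure.restrict_apply (measurable_fst hT), inter_comm]
    simp [inter_def]
  have hκuniv : κ univ = ν {y} := by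
    rw [hκ .univ, univ_prod_univ, transported_apply (measurableSet_singleton y), ← h.coupling.2.1,
      Measure.map_apply (by fun_prop) (measurableSet_singleton y)]
    simp [preimage]
  have hκle : κ ≤ volume.restrict (Icc 0 1) := by
    rw [← h.fst_eq, Measure.fst, ← h.coupling.1, Measure.map_map measurable_fst (by fun_prop)]
    exact Measure.map_mono Measure.restrict_le_self measurable_fst
  have := isFiniteMeasure_of_le _ hκle
  have : NullSingletonClass κ := ⟨fun u => hκle.absolutelyContinuous (measure_singleton u)⟩
  have hκ0 : κ ≠ 0 := Measure.measure_univ_ne_zero.1 (hκuniv ▸ hy.ne')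
  have hκIcc : κ (Icc 0 1)ᶜ = 0 :=
    hκle.absolutelyContinuous (ae_restrict_mem measurableSet_Icc)
  obtain ⟨s, hs, t, ht, hst, hsκ, htκ⟩ :=
    exists_lt_measure_Iic_pos_measure_Ioi_pos hκ0 isClosed_Icc hκIcc
  refine ⟨s, hs, t, ht, hst, ?_, ?_⟩
  · rwa [liftedCouplingCurve_eq_transported, ← hκ measurableSet_Iic]
  · rw [liftedCouplingCurve_eq_transported, ← hκ measurableSet_Iic, ← hκuniv,
      ← measure_add_measure_compl measurableSet_Iic, compl_Iic]
    exact ENNReal.lt_add_right (measure_ne_top κ _) htκ.ne'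

theorem exists_Ioc_transported_singleton_eq_zero (h : IsShadowLift πh μh ν) [IsFiniteMeasure ν]
    (hlr : l < r) (hμ : ∀ᵐ q ∂μh, q.2 ∈ Ioo l r) (hν : ∀ᵐ y ∂ν, y ∉ Ioo l r)
    (hνid : Integrable (fun y => y) ν) {S : Set ℝ} (hS : S.Countable) (hνS : ν Sᶜ = 0)
    (hy : 0 < ν {y}) :
    ∃ s ∈ Icc (0 : ℝ) 1, ∃ t ∈ Icc (0 : ℝ) 1, s < t ∧ ∀ v, v ≠ y → (v ≤ l ↔ y ≤ l) →
      transported πh (Ioc s t ×ˢ univ) {v} = 0 := by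
  have := h.isFiniteMeasure
  obtain ⟨s, hs, t, ht, hst, hys, hyt⟩ := h.exists_lt_liftedCouplingCurve_pos_lt hy
  refine ⟨s, hs, t, ht, hst, fun v hvy hside => ?_⟩
  have hfills {u : ℝ} (hu : u ∈ Icc (0 : ℝ) 1) := h.fillsBetween hlr hμ hν hνid hu
  simp only [liftedCouplingCurve_eq_transported] at hys hyt hfills
  have hIic : MeasurableSet (Iic s ×ˢ (univ : Set ℝ)) := measurableSet_Iic.prod .univ
  obtain ⟨w, hwl, hw⟩ : ∃ w ∈ {w | w ≤ l ↔ ¬ y ≤ l}, 0 < transported πh (Iic s ×ˢ univ) {w} := by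
    refine exists_measure_singleton_pos hS
      (h.coupling.transported_le.absolutelyContinuous hνS)
      (h.coupling.transported_side_pos hμ hν hνid hIic ?_ _)
    rw [← h.coupling.transported_univ hIic]
    exact (hys.trans_le (measure_mono (subset_univ _))).ne'
  have hmono : transported πh (Iic s ×ˢ univ) ≤ transported πh (Iic t ×ˢ univ) :=
    transported_mono (prod_mono_left (Iic_subset_Iic.2 hst.le))
  have hle := (hfills hs).singleton_le (hfills ht) hmono h.coupling.transported_le hvy hside hwl hw
    hys hyt
  have hsplit : transported πh (Iic t ×ˢ univ) =
      transported πh (Iic s ×ˢ univ) + transported πh (Ioc s t ×ˢ univ) := by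
    rw [← Iic_union_Ioc_eq_Iic hst.le, union_prod, transported_union
      (Disjoint.set_prod_left (Iic_disjoint_Ioc le_rfl) _ _) (measurableSet_Ioc.prod .univ)]
  rw [hsplit, Measure.add_apply] at hle
  have : IsFiniteMeasure (transported πh (Iic s ×ˢ univ)) :=
    isFiniteMeasure_of_le ν h.coupling.transported_le
  by_contra hpos
  exact hle.not_gt (ENNReal.lt_add_right (measure_ne_top _ _) hpos)

theorem map_snd_singleton_pos [SFinite μ] [IsFiniteMeasure ν]
    (h : IsShadowLift πh ((volume.restrict (Icc 0 1)).prod μ) ν) (hlr : l < r)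
    (hμ : ∀ᵐ x ∂μ, x ∈ Ioo l r) (hν : ∀ᵐ y ∂ν, y ∉ Ioo l r) (hνid : Integrable (fun y => y) ν)
    {S : Set ℝ} (hS : S.Countable) (hνS : ν Sᶜ = 0) (hx : 0 < μ {x}) (hy : 0 < ν {y}) :
    0 < πh.map Prod.snd {(x, y)} := by
  have hμh : ∀ᵐ q ∂(volume.restrict (Icc (0 : ℝ) 1)).prod μ, q.2 ∈ Ioo l r :=
    Measure.quasiMeasurePreserving_snd.ae hμ
  have := h.isFiniteMeasure
  obtain ⟨s, hs, t, ht, hst, hzero⟩ :=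
    h.exists_Ioc_transported_singleton_eq_zero hlr hμh hν hνid hS hνS hy
  have hB : MeasurableSet (Ioc s t ×ˢ {x}) := measurableSet_Ioc.prod (measurableSet_singleton x)
  have hμB : (volume.restrict (Icc (0 : ℝ) 1)).prod μ (Ioc s t ×ˢ {x}) ≠ 0 := by
    rw [Measure.prod_prod, Measure.restrict_apply measurableSet_Ioc,
      inter_eq_left.2 (Ioc_subset_Icc_self.trans (Icc_subset_Icc hs.1 ht.2)), Real.volume_Ioc]
    exact mul_ne_zero (ENNReal.ofReal_pos.2 (sub_pos.2 hst)).ne' hx.ne'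
  obtain ⟨v, hvl, hv⟩ : ∃ v ∈ {v | v ≤ l ↔ y ≤ l}, 0 < transported πh (Ioc s t ×ˢ {x}) {v} :=
    exists_measure_singleton_pos hS (h.coupling.transported_le.absolutelyContinuous hνS)
      (h.coupling.transported_side_pos hμh hν hνid hB hμB _)
  obtain rfl : v = y := by
    by_contra hvy
    have hmono : transported πh (Ioc s t ×ˢ {x}) ≤ transported πh (Ioc s t ×ˢ univ) :=
      transported_mono (prod_mono_right (subset_univ _))
    exact hv.ne' (hmono.absolutelyContinuous (hzero v hvy hvl))
  rw [transported_apply (measurableSet_singleton v)] at hv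
  rw [Measure.map_apply measurable_snd (measurableSet_singleton _)]
  exact hv.trans_le (measure_mono fun p hp => Prod.ext hp.2.2 hp.1)

end IsShadowLift

end ShadowLift

section MartingaleCoupling

theorem IsLiftedMartingaleCoupling.isMartingaleCoupling_map_snd {πh : Measure (ℝ × ℝ × ℝ)}
    {μh : Measure (ℝ × ℝ)} {ν : Measure ℝ} (h : IsLiftedMartingaleCoupling πh μh ν) :
    IsMartingaleCoupling (πh.map Prod.snd) μh.snd ν := by
  refine ⟨?_, ?_, fun f hf hf1 => ?_⟩
  · rw [← h.1, Measure.snd, Measure.map_map (by fun_prop) (by fun_prop),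
      Measure.map_map (by fun_prop) (by fun_prop)]
    rfl
  · rw [← h.2.1, Measure.map_map (by fun_prop) (by fun_prop)]
    rfl
  · rw [integral_map (by fun_prop) (by fun_prop)]
    exact h.2.2 (fun q => f q.2) (by fun_prop) fun q => hf1 q.2

theorem integral_add_toReal_mul_integral_eq {α : Type*} [MeasurableSpace α] {κ π π₀ : Measure α}
    {ε : ℝ≥0∞} (hε : ε ≠ ∞) (hκ : κ + ε • π = π₀ + ε • π₀) {f : α → ℝ} (hf : Integrable f π₀) :
    ∫ p, f p ∂κ + ε.toReal * ∫ p, f p ∂π = ∫ p, f p ∂π₀ + ε.toReal * ∫ p, f p ∂π₀ := by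
  have hf' : Integrable f (κ + ε • π) := hκ ▸ hf.add_measure (hf.smul_measure hε)
  rw [← smul_eq_mul, ← smul_eq_mul, ← integral_smul_measure, ← integral_smul_measure,
    ← integral_add_measure hf (hf.smul_measure hε), ← hκ,
    integral_add_measure hf'.left_of_add_measure hf'.right_of_add_measure]

namespace IsMartingaleCoupling

variable {π π₀ : Measure (ℝ × ℝ)} {μ ν : Measure ℝ}

theorem msupport_subset (h : IsMartingaleCoupling π μ ν) :
    msupport π ⊆ msupport μ ×ˢ msupport ν := by
  refine fun p hp => ⟨fun U hU hpU => ?_, fun U hU hpU => ?_⟩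
  · rw [← h.1, Measure.map_apply measurable_fst hU.measurableSet]
    exact hp _ (hU.preimage continuous_fst) hpU
  · rw [← h.2.1, Measure.map_apply measurable_snd hU.measurableSet]
    exact hp _ (hU.preimage continuous_snd) hpU

theorem isFiniteMeasure [IsFiniteMeasure μ] (h : IsMartingaleCoupling π μ ν) :
    IsFiniteMeasure π := by
  have : IsFiniteMeasure (π.map Prod.fst) := h.1 ▸ inferInstance
  exact Measure.isFiniteMeasure_of_map measurable_fst.aemeasurable

theorem of_add_smul_eq [IsFiniteMeasure μ] [IsFiniteMeasure ν] (h : IsMartingaleCoupling π μ ν)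
    (h₀ : IsMartingaleCoupling π₀ μ ν) (hint : Integrable (fun p => p.2 - p.1) π₀) {ε : ℝ≥0∞}
    (hε : ε ≠ ∞) {κ : Measure (ℝ × ℝ)} (hκ : κ + ε • π = π₀ + ε • π₀) :
    IsMartingaleCoupling κ μ ν := by
  have hmarginal {g : ℝ × ℝ → ℝ} (hg : Measurable g) {ρ : Measure ℝ} [IsFiniteMeasure ρ]
      (hπ : π.map g = ρ) (hπ₀ : π₀.map g = ρ) : κ.map g = ρ := by
    have := Measure.smul_finite ρ hε
    have hmap := congrArg (Measure.map g) hκ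
    rwa [Measure.map_add _ _ hg, Measure.map_add _ _ hg, Measure.map_smul, Measure.map_smul, hπ,
      hπ₀, Measure.add_left_inj] at hmap
  refine ⟨hmarginal measurable_fst h.1 h₀.1, hmarginal measurable_snd h.2.1 h₀.2.1,
    fun f hf hf1 => ?_⟩
  have hintf : Integrable (fun p => (p.2 - p.1) * f p.1) π₀ :=
    hint.mul_bdd (c := 1) (hf.comp measurable_fst).aestronglyMeasurable
      (.of_forall fun p => hf1 p.1)
  simpa [h.2.2 f hf hf1, h₀.2.2 f hf hf1] using
    integral_add_toReal_mul_integral_eq hε hκ hintf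

-- Replacing the part `ε • π` of `π₀` by `ε • π₀` gives a competitor of `π₀`.
theorem integral_eq_of_smul_le [IsFiniteMeasure μ] [IsFiniteMeasure ν]
    (h : IsMartingaleCoupling π μ ν) (h₀ : IsMartingaleCoupling π₀ μ ν)
    (hint : Integrable (fun p => p.2 - p.1) π₀) {c : ℝ × ℝ → ℝ} (hc : Integrable c π₀)
    (hopt : ∀ ρ, IsMartingaleCoupling ρ μ ν → ∫ p, c p ∂π₀ ≤ ∫ p, c p ∂ρ) {ε : ℝ≥0∞} (hε0 : ε ≠ 0)
    (hε : ε ≠ ∞) (hle : ε • π ≤ π₀) : ∫ p, c p ∂π = ∫ p, c p ∂π₀ := by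
  have := h.isFiniteMeasure
  have := Measure.smul_finite π hε
  have hκ : π₀ - ε • π + ε • π₀ + ε • π = π₀ + ε • π₀ := by
    rw [add_right_comm, Measure.sub_add_cancel_of_le hle]
  have hopt_κ := hopt _ (h.of_add_smul_eq h₀ hint hε hκ)
  have hsum := integral_add_toReal_mul_integral_eq hε hκ hc
  have hεpos : 0 < ε.toReal := ENNReal.toReal_pos hε0 hε
  refine le_antisymm (le_of_mul_le_mul_left ?_ hεpos) (hopt π h)
  linarith

theorem integral_eq_of_msupport_subset [IsFiniteMeasure μ] [IsFiniteMeasure ν]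
    (h : IsMartingaleCoupling π μ ν) (h₀ : IsMartingaleCoupling π₀ μ ν)
    (hfin : (msupport π₀).Finite) (hsub : msupport π ⊆ msupport π₀) {c : ℝ × ℝ → ℝ}
    (hopt : ∀ ρ, IsMartingaleCoupling ρ μ ν → ∫ p, c p ∂π₀ ≤ ∫ p, c p ∂ρ) :
    ∫ p, c p ∂π = ∫ p, c p ∂π₀ := by
  have := h.isFiniteMeasure
  have := h₀.isFiniteMeasure
  obtain ⟨ε, hε0, hε, hle⟩ := exists_smul_le_of_msupport_subset hfin hsub
  exact h.integral_eq_of_smul_le h₀ (integrable_of_finite_msupport hfin _)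
    (integrable_of_finite_msupport hfin c) hopt hε0 hε hle

end IsMartingaleCoupling

end MartingaleCoupling

section Gap

theorem exists_Icc_subset_Ioo_subset {α : Type*} [LinearOrder α] [TopologicalSpace α]
    [OrderTopology α] [NoMinOrder α] [NoMaxOrder α] {a b : α} {U : Set α} (hU : IsOpen U)
    (hab : a ≤ b) (h : Icc a b ⊆ U) : ∃ l r, Icc a b ⊆ Ioo l r ∧ Ioo l r ⊆ U := by
  obtain ⟨l, hl, hlU⟩ := exists_Ioc_subset_of_mem_nhds (hU.mem_nhds (h ⟨le_rfl, hab⟩)) (exists_lt a)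
  obtain ⟨r, hr, hrU⟩ := exists_Ico_subset_of_mem_nhds (hU.mem_nhds (h ⟨hab, le_rfl⟩)) (exists_gt b)
  refine ⟨l, r, Icc_subset_Ioo hl hr, fun x hx => ?_⟩
  rcases le_total x a with hxa | hax
  · exact hlU ⟨hx.1, hxa⟩
  rcases le_total x b with hxb | hbx
  · exact h ⟨hax, hxb⟩
  · exact hrU ⟨hbx, hx.2⟩

theorem exists_Ioo_ae_mem_ae_notMem {μ ν : Measure ℝ} (hμ : μ ≠ 0) (hcomp : IsCompact (msupport μ))
    (hdisj : convexHull ℝ (msupport μ) ∩ msupport ν = ∅) :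
    ∃ l r : ℝ, l < r ∧ (∀ᵐ x ∂μ, x ∈ Ioo l r) ∧ ∀ᵐ y ∂ν, y ∉ Ioo l r := by
  have hne : (msupport μ).Nonempty := by
    rw [msupport_eq_support]
    exact Measure.nonempty_support hμ
  obtain ⟨a, ha⟩ := hcomp.exists_isLeast hne
  obtain ⟨b, hb⟩ := hcomp.exists_isGreatest hne
  have hab : a ≤ b := ha.2 hb.1
  have hhull : Icc a b ⊆ (msupport ν)ᶜ := by
    rw [← segment_eq_Icc hab]
    exact (segment_subset_convexHull ha.1 hb.1).trans
      (disjoint_iff_inter_eq_empty.2 hdisj).subset_compl_right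
  have hopen : IsOpen (msupport ν)ᶜ := by
    rw [msupport_eq_support]
    exact Measure.isClosed_support.isOpen_compl
  obtain ⟨l, r, hsub, hsubU⟩ := exists_Icc_subset_Ioo_subset hopen hab hhull
  refine ⟨l, r, (hsub ⟨le_rfl, hab⟩).1.trans (hsub ⟨le_rfl, hab⟩).2, ?_, ?_⟩
  · filter_upwards [show ∀ᵐ x ∂μ, x ∈ msupport μ from measure_compl_msupport] with x hx
    exact hsub ⟨ha.2 hx, hb.2 hx⟩
  · filter_upwards [show ∀ᵐ y ∂ν, y ∈ msupport ν from measure_compl_msupport] with y hy hyU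
    exact hsubU hyU hy

end Gap

/-- For finitely supported marginals in convex order with
`conv(supp μ) ∩ supp ν = ∅`, every martingale coupling is supported in
`supp μ × supp ν`, the sunset coupling has full support there, and if some cost makes
the sunset coupling optimal then every martingale coupling is optimal. -/
theorem sunset_nonoptimizer (μ ν : Measure ℝ)
    [IsProbabilityMeasure μ] [IsProbabilityMeasure ν]
    (hμfin : ∃ S : Finset ℝ, μ (↑S : Set ℝ)ᶜ = 0)
    (hνfin : ∃ S : Finset ℝ, ν (↑S : Set ℝ)ᶜ = 0)
    (hμν : ConvexOrder μ ν)
    (hdisj : convexHull ℝ (msupport μ) ∩ msupport ν = ∅)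
    (πsunh : Measure (ℝ × ℝ × ℝ))
    (hsun : IsLiftedMartingaleCoupling πsunh ((volume.restrict (Set.Icc (0:ℝ) 1)).prod μ) ν)
    (hsunshadow : ∀ u ∈ Set.Icc (0:ℝ) 1,
      IsShadow (liftCurve ((volume.restrict (Set.Icc (0:ℝ) 1)).prod μ) u) ν
        (liftedCouplingCurve πsunh u))
    (πsun : Measure (ℝ × ℝ)) (hproj : πsun = πsunh.map Prod.snd) :
    (∀ π : Measure (ℝ × ℝ), IsMartingaleCoupling π μ ν →
        msupport π ⊆ (msupport μ) ×ˢ (msupport ν)) ∧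
      msupport πsun = (msupport μ) ×ˢ (msupport ν) ∧
      ∀ c : ℝ × ℝ → ℝ, Measurable c →
        (∀ π : Measure (ℝ × ℝ), IsMartingaleCoupling π μ ν →
          ∫ p, c p ∂πsun ≤ ∫ p, c p ∂π) →
        ∀ π : Measure (ℝ × ℝ), IsMartingaleCoupling π μ ν →
          ∫ p, c p ∂π = ∫ p, c p ∂πsun := by
  have hfinite {ρ : Measure ℝ} : (∃ S : Finset ℝ, ρ (↑S : Set ℝ)ᶜ = 0) → (msupport ρ).Finite :=
    fun ⟨S, hS⟩ => S.finite_toSet.subset (msupport_subset_of_isClosed S.finite_toSet.isClosed hS)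
  have hμsupp := hfinite hμfin
  have hνsupp := hfinite hνfin
  obtain ⟨l, r, hlr, hμlr, hνlr⟩ :=
    exists_Ioo_ae_mem_ae_notMem (IsProbabilityMeasure.ne_zero μ) hμsupp.isCompact hdisj
  have hlift : IsShadowLift πsunh ((volume.restrict (Icc 0 1)).prod μ) ν :=
    ⟨Measure.fst_prod, hsun, hsunshadow⟩
  have hπsun : IsMartingaleCoupling πsun μ ν := by
    have : IsProbabilityMeasure (volume.restrict (Icc (0 : ℝ) 1)) := ⟨by simp⟩
    simpa [hproj] using hsun.isMartingaleCoupling_map_snd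
  have hfull : msupport πsun = msupport μ ×ˢ msupport ν := by
    refine hπsun.msupport_subset.antisymm fun p hp => mem_msupport_of_measure_singleton_pos ?_
    rw [hproj]
    exact hlift.map_snd_singleton_pos hlr hμlr hνlr (integrable_of_finite_msupport hνsupp _)
      hνsupp.countable measure_compl_msupport
      (measure_singleton_pos_of_mem_msupport hμsupp hp.1)
      (measure_singleton_pos_of_mem_msupport hνsupp hp.2)
  refine ⟨fun π hπ => hπ.msupport_subset, hfull, fun c _ hopt π hπ => ?_⟩
  exact hπ.integral_eq_of_msupport_subset hπsun (hfull ▸ hμsupp.prod hνsupp)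
    (hfull ▸ hπ.msupport_subset) hopt
end
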